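/- arXiv:1111.4723 — 4 statements merged into one kernel-verified Lean document; each statement's English description precedes it below -/
import Mathlib

section
/- For all n ≥ 1 and k ≥ 0, the number of self-dual Fishburn matrices of reduced size n whose first row has sum k and whose diagonal cells have sum 0 equals the number of row-Fishburn matrices of size n whose last column has sum k; that is, |M(n,k,0)| = |RM(n,k)|. -/
open Finset

/-- Square matrices of nonnegative integers of dimension `m` (0-based indexing). -/
abbrev Mat (m : ℕ) := Matrix (Fin m) (Fin m) ℕ

/-- Upper-triangular: all entries strictly below the main diagonal vanish. -/
def UT {m : ℕ} (M : Mat m) : Prop := ∀ i j : Fin m, (j : ℕ) < (i : ℕ) → M i j = 0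

/-- The size of a matrix: the sum of all its entries. -/
def msize {m : ℕ} (M : Mat m) : ℕ := ∑ i : Fin m, ∑ j : Fin m, M i j

/-- Row `i` contains a nonzero entry. -/
def rowNonzero {m : ℕ} (M : Mat m) (i : Fin m) : Prop := ∃ j, M i j ≠ 0

/-- Column `j` contains a nonzero entry. -/
def colNonzero {m : ℕ} (M : Mat m) (j : Fin m) : Prop := ∃ i, M i j ≠ 0

/-- The dual matrix: transpose along the antidiagonal, `M̄_{i,j} = M_{m+1-j,m+1-i}`. -/
def dual {m : ℕ} (M : Mat m) : Mat m := fun i j => M j.rev i.rev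

/-- A matrix is self-dual if it equals its dual. -/
def SelfDual {m : ℕ} (M : Mat m) : Prop := M = dual M

/-- A Fishburn matrix: upper-triangular, every row and every column contains a
nonzero entry. -/
def IsFishburn {m : ℕ} (M : Mat m) : Prop :=
  UT M ∧ (∀ i, rowNonzero M i) ∧ (∀ j, colNonzero M j)

/-- The reduced size: sum of the entries in NW-cells and diagonal cells
(in 1-based terms, cells `(i,j)` with `i + j ≤ m + 1`). -/
def reducedSize {m : ℕ} (M : Mat m) : ℕ :=
  ∑ i : Fin m, ∑ j : Fin m, if (i : ℕ) + (j : ℕ) + 1 ≤ m then M i j else 0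

/-- The reduced matrix: all entries in SE-cells are replaced by zeros. -/
def reduced {m : ℕ} (M : Mat m) : Mat m :=
  fun i j => if (i : ℕ) + (j : ℕ) + 1 ≤ m then M i j else 0

/-- A super triangular matrix: upper-triangular and all SE-cells are zero. -/
def SuperTri {m : ℕ} (M : Mat m) : Prop :=
  UT M ∧ ∀ i j : Fin m, m < (i : ℕ) + (j : ℕ) + 1 → M i j = 0

/-- The sum of the first row. -/
def firstRowSum {m : ℕ} (M : Mat m) : ℕ :=
  ∑ i : Fin m, ∑ j : Fin m, if (i : ℕ) = 0 then M i j else 0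

/-- The sum of the last column. -/
def lastColSum {m : ℕ} (M : Mat m) : ℕ :=
  ∑ i : Fin m, ∑ j : Fin m, if (j : ℕ) + 1 = m then M i j else 0

/-- The sum of the diagonal cells (cells `(i,j)` with `i + j = m + 1`, 1-based). -/
def diagSum {m : ℕ} (M : Mat m) : ℕ :=
  ∑ i : Fin m, ∑ j : Fin m, if (i : ℕ) + (j : ℕ) + 1 = m then M i j else 0

/-- The sum of the center column (column `k+1` of a matrix of dimension `2k+1`). -/
def centerColSum {m : ℕ} (M : Mat m) : ℕ :=
  ∑ i : Fin m, ∑ j : Fin m, if 2 * (j : ℕ) + 1 = m then M i j else 0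

/-- Square matrices of arbitrary dimension. -/
abbrev SMat := Σ m : ℕ, Mat m

/-- `M(n)`: self-dual Fishburn matrices of reduced size `n`. -/
def Mset (n : ℕ) : Set SMat :=
  {A | IsFishburn A.2 ∧ SelfDual A.2 ∧ reducedSize A.2 = n}

/-- `M(n,k)`: matrices of `M(n)` whose first row has sum `k`. -/
def Mset₂ (n k : ℕ) : Set SMat := {A ∈ Mset n | firstRowSum A.2 = k}

/-- `M(n,k,p)`: matrices of `M(n,k)` whose diagonal cells have sum `p`. -/
def Mset₃ (n k p : ℕ) : Set SMat := {A ∈ Mset₂ n k | diagSum A.2 = p}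

/-- `EM(n,k)`: matrices of `M(n,k)` of even dimension. -/
def EMset (n k : ℕ) : Set SMat := {A ∈ Mset₂ n k | Even A.1}

/-- `OM(n,k)`: matrices of `M(n,k)` of odd dimension. -/
def OMset (n k : ℕ) : Set SMat := {A ∈ Mset₂ n k | Odd A.1}

/-- `RM(n)`: row-Fishburn matrices of size `n`. -/
def RMset (n : ℕ) : Set SMat :=
  {A | UT A.2 ∧ (∀ i, rowNonzero A.2 i) ∧ msize A.2 = n}

/-- `RM(n,k)`: row-Fishburn matrices of size `n` whose last column has sum `k`. -/
def RMset₂ (n k : ℕ) : Set SMat := {A ∈ RMset n | lastColSum A.2 = k}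

/-- `RM(n,k,p)`: matrices of `RM(n,k)` whose first row has sum `p`. -/
def RMset₃ (n k p : ℕ) : Set SMat := {A ∈ RMset₂ n k | firstRowSum A.2 = p}

/-- `SM(n)`: super triangular matrices of size `n` and dimension `2k+1` such that
(a) each of the first `k` columns contains a nonzero entry, and
(b) for `1 ≤ i ≤ k`, row `k+1-i` or column `k+1+i` contains a nonzero entry
(0-based: for `a < k`, row `a` or column `b` with `a + b = 2k` is nonzero). -/
def SMset (n : ℕ) : Set SMat :=
  {A | SuperTri A.2 ∧ msize A.2 = n ∧
    ∃ k : ℕ, A.1 = 2 * k + 1 ∧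
      (∀ j : Fin A.1, (j : ℕ) < k → colNonzero A.2 j) ∧
      (∀ a b : Fin A.1, (a : ℕ) < k → (a : ℕ) + (b : ℕ) = 2 * k →
        rowNonzero A.2 a ∨ colNonzero A.2 b)}

/-- `SM(n,k,p)`: matrices of `SM(n)` whose first row has sum `k` and whose center
column has sum `p`. -/
def SMset₃ (n k p : ℕ) : Set SMat :=
  {A ∈ SMset n | firstRowSum A.2 = k ∧ centerColSum A.2 = p}

/-- `B(n)`: upper-triangular matrices of size `n` in which every row except
possibly the first contains a nonzero entry. -/
def Bset (n : ℕ) : Set SMat :=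
  {A | UT A.2 ∧ (∀ i : Fin A.1, (i : ℕ) ≠ 0 → rowNonzero A.2 i) ∧ msize A.2 = n}

/-- `B(n,k,p)`: matrices of `B(n)` whose first row has sum `p` and whose last
column has sum `k`. -/
def Bset₃ (n k p : ℕ) : Set SMat :=
  {A ∈ Bset n | firstRowSum A.2 = p ∧ lastColSum A.2 = k}


section Alg
variable {R : Type*} [CommRing R]

/-- Signed generating function of structures with `k` levels, `m` of them active. -/
def sgf (W : ℕ → R) : ℕ → ℕ → R
  | 0, m => if m = 0 then 1 else 0
  | k+1, 0 => - W 0 * sgf W k 0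
  | k+1, m+1 => - W (m+1) * sgf W k (m+1) + W (m+1) * (1 + W m) * sgf W k m

lemma sgf_dvd (W : ℕ → R) (x : R) (hx : ∀ m, x ∣ W m) (k m : ℕ) : x ^ k ∣ sgf W k m := by
  induction k generalizing m with
  | zero => simp
  | succ k ih =>
    cases m with
    | zero =>
      rw [sgf, pow_succ, mul_comm]
      exact mul_dvd_mul ((dvd_neg).2 (hx 0)) (ih 0)
    | succ m =>
      rw [sgf, pow_succ, mul_comm]
      refine dvd_add (mul_dvd_mul ((dvd_neg).2 (hx _)) (ih _)) ?_
      exact mul_dvd_mul (Dvd.dvd.mul_right (hx _) _) (ih _)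

lemma sgf_zero (W : ℕ → R) (k m : ℕ) (h : k < m) : sgf W k m = 0 := by
  induction k generalizing m with
  | zero => rw [sgf, if_neg (by omega)]
  | succ k ih =>
    cases m with
    | zero => omega
    | succ m => rw [sgf, ih _ (by omega), ih _ (by omega)]; simp

lemma sgf_sum (W : ℕ → R) (x : R) (hx : ∀ m, x ∣ W m) (h0 : W 0 = 0) (n m : ℕ) :
    x ^ (n+1) ∣ (1 + W m) * ∑ k ∈ range (n+1), sgf W k m - ∏ i ∈ range m, W (i+1) := by
  induction m with
  | zero =>
    rw [sum_range_succ']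
    simp [sgf, h0]
  | succ m ih =>
    have key : (1 + W (m+1)) * ∑ k ∈ range (n+1), sgf W k (m+1)
        - ∏ i ∈ range (m+1), W (i+1)
        = W (m+1) * ((1 + W m) * ∑ k ∈ range (n+1), sgf W k m - ∏ i ∈ range m, W (i+1))
          + W (m+1) * sgf W n (m+1) - (1 + W m) * (W (m+1) * sgf W n m) := by
      have e1 : ∑ k ∈ range (n+1), sgf W k (m+1)
          = - W (m+1) * ∑ k ∈ range n, sgf W k (m+1)
            + W (m+1) * (1 + W m) * ∑ k ∈ range n, sgf W k m := by
        rw [sum_range_succ', mul_sum, mul_sum, ← sum_add_distrib]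
        simp [sgf]
      have e2 := sum_range_succ (fun k => sgf W k (m+1)) n
      have e3 := sum_range_succ (fun k => sgf W k m) n
      have e4 := prod_range_succ (fun i => W (i+1)) m
      rw [e4, e3, add_mul, e1, one_mul]
      linear_combination W (m+1) * e2 - W (m+1) * e1
    rw [key]
    have d : ∀ m', x ^ (n+1) ∣ W (m+1) * sgf W n m' := fun m' => by
      rw [pow_succ, mul_comm]; exact mul_dvd_mul (hx _) (sgf_dvd W x hx _ _)
    exact dvd_sub (dvd_add (Dvd.dvd.mul_left ih _) (d _)) (Dvd.dvd.mul_left (d _) _)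

/-- number of active indices below `j`. -/
def cnt (β : Finset ℕ) (j : ℕ) : ℕ := (range j \ β).card

lemma cnt_succ_mem {β : Finset ℕ} {j : ℕ} (h : j ∈ β) : cnt β (j+1) = cnt β j := by
  unfold cnt; congr 1; ext a; simp only [mem_sdiff, mem_range]
  constructor
  · rintro ⟨h1, h2⟩
    refine ⟨?_, h2⟩
    rcases Nat.lt_succ_iff_lt_or_eq.1 h1 with h3 | h3
    · exact h3
    · subst h3; exact absurd h h2
  · rintro ⟨h1, h2⟩; exact ⟨by omega, h2⟩

lemma cnt_succ_notMem {β : Finset ℕ} {j : ℕ} (h : j ∉ β) : cnt β (j+1) = cnt β j + 1 := by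
  unfold cnt
  rw [range_add_one, insert_sdiff_of_notMem _ h, card_insert_of_notMem (by simp)]

lemma cnt_insert {β : Finset ℕ} {k j : ℕ} (h : j ≤ k) : cnt (insert k β) j = cnt β j := by
  unfold cnt; congr 1; ext a; simp only [mem_sdiff, mem_range, mem_insert]
  constructor
  · rintro ⟨h1, h2⟩; exact ⟨h1, fun h3 => h2 (Or.inr h3)⟩
  · rintro ⟨h1, h2⟩; exact ⟨h1, fun h3 => h3.elim (by omega) h2⟩

/-- weight of a pattern. -/
def term (W : ℕ → R) (k : ℕ) (β : Finset ℕ) : R :=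
  ∏ j ∈ range k, if j ∈ β then - W (cnt β (j+1)) else W (cnt β (j+1)) * (1 + W (cnt β j))

lemma term_insert (W : ℕ → R) (k : ℕ) (β : Finset ℕ) :
    term W k (insert k β) = term W k β := by
  refine prod_congr rfl fun j hj => ?_
  have hj := mem_range.1 hj
  rw [cnt_insert (by omega), cnt_insert (by omega)]
  have : j ∈ insert k β ↔ j ∈ β := by
    rw [mem_insert]; constructor
    · rintro (h | h); omega; exact h
    · exact Or.inr
  simp only [this]

lemma sum_term (W : ℕ → R) (k : ℕ) (h : ℕ → R) :
    ∑ β ∈ (range k).powerset, term W k β * h (cnt β k)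
      = ∑ m ∈ range (k+1), sgf W k m * h m := by
  induction k generalizing h with
  | zero => simp [term, sgf, cnt]
  | succ k ih =>
    have hk : k ∉ range k := by simp
    rw [range_add_one, sum_powerset_insert hk, ← sum_add_distrib]
    have : ∀ β ∈ (range k).powerset, term W (k+1) β * h (cnt β (k+1))
        + term W (k+1) (insert k β) * h (cnt (insert k β) (k+1))
        = term W k β * (W (cnt β k + 1) * (1 + W (cnt β k)) * h (cnt β k + 1)
            - W (cnt β k) * h (cnt β k)) := by
      intro β hβ
      have hb : k ∉ β := fun h' => hk (mem_powerset.1 hβ h')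
      have e1 : term W (k+1) β = term W k β * (W (cnt β k + 1) * (1 + W (cnt β k))) := by
        rw [term, prod_range_succ, if_neg hb, cnt_succ_notMem hb]; rfl
      have e2 : term W (k+1) (insert k β) = term W k β * (- W (cnt β k)) := by
        rw [term, prod_range_succ, if_pos (mem_insert_self _ _), cnt_succ_mem (mem_insert_self _ _),
          cnt_insert le_rfl, ← term_insert W k β]; rfl
      rw [e1, e2, cnt_succ_notMem hb, cnt_succ_mem (mem_insert_self _ _), cnt_insert le_rfl]
      ring
    rw [sum_congr rfl this, ih (fun m => W (m+1) * (1 + W m) * h (m+1) - W m * h m)]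
    rw [sum_range_succ' _ (k+1)]
    simp only [mul_sub, sum_sub_distrib]
    have e := sum_range_succ' (fun m => sgf W k m * (W m * h m)) (k+1)
    rw [sum_range_succ, sgf_zero W k (k+1) (by omega)] at e
    simp only [zero_mul, add_zero] at e
    rw [e]
    simp only [sgf, add_mul, sum_add_distrib, neg_mul, sum_neg_distrib]
    have : ∀ m, sgf W k m * (W (m+1) * (1 + W m) * h (m+1)) =
      W (m+1) * (1 + W m) * sgf W k m * h (m+1) := fun m => by ring
    simp only [this]
    have : ∀ m, sgf W k m * (W m * h m) = W m * sgf W k m * h m := fun m => by ring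
    simp only [this]
    ring

lemma main_alg (W : ℕ → R) (x : R) (hx : ∀ m, x ∣ W m) (h0 : W 0 = 0) (n : ℕ) :
    x ^ (n+1) ∣ (∑ k ∈ range (n+1), ∑ β ∈ (range k).powerset, term W k β * (1 + W (cnt β k)))
      - ∑ m ∈ range (n+1), ∏ i ∈ range m, W (i+1) := by
  have e : ∀ k ∈ range (n+1), ∑ β ∈ (range k).powerset, term W k β * (1 + W (cnt β k))
      = ∑ m ∈ range (n+1), sgf W k m * (1 + W m) := by
    intro k hk
    have hk := mem_range.1 hk
    rw [sum_term W k (fun m => 1 + W m)]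
    refine sum_subset (range_subset_range.2 (by omega)) ?_
    intro m _ hm
    rw [sgf_zero W k m (by simpa using hm), zero_mul]
  rw [sum_congr rfl e, sum_comm, ← sum_sub_distrib]
  refine dvd_sum fun m _ => ?_
  rw [← sum_mul, mul_comm]
  exact sgf_sum W x hx h0 n m

end Alg

section GF
open Polynomial

/-- weight of an entry `a` in row `i`. -/
noncomputable def ew (i a : ℕ) : ℤ[X][X] := X ^ a * (C X) ^ (if i = 0 then a else 0)

def csum {ι : Type*} [Fintype ι] {k : ℕ} (v : ι → Fin k → ℕ) : ℕ := ∑ J, ∑ i, v J i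
def crow {ι : Type*} [Fintype ι] {k : ℕ} (v : ι → Fin k → ℕ) : ℕ :=
  ∑ J, ∑ i : Fin k, if (i : ℕ) = 0 then v J i else 0
noncomputable def wt {ι : Type*} [Fintype ι] {k : ℕ} (v : ι → Fin k → ℕ) : ℤ[X][X] :=
  ∏ J, ∏ i : Fin k, ew i (v J i)

lemma wt_eq {ι : Type*} [Fintype ι] {k : ℕ} (v : ι → Fin k → ℕ) :
    wt v = C (X ^ crow v) * X ^ csum v := by
  simp only [wt, ew, prod_mul_distrib, prod_pow_eq_pow_sum, csum, crow, C_pow]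
  rw [mul_comm]

lemma coeff_wt_sum {ι : Type*} [Fintype ι] {k : ℕ} (s : Finset (ι → Fin k → ℕ)) (n r : ℕ) :
    ((∑ v ∈ s, wt v).coeff n).coeff r
      = ((s.filter (fun v => csum v = n ∧ crow v = r)).card : ℤ) := by
  rw [finsetSum_coeff, finsetSum_coeff, card_filter, Nat.cast_sum]
  refine sum_congr rfl fun v _ => ?_
  rw [wt_eq, coeff_C_mul_X_pow]
  by_cases h : csum v = n
  · rw [if_pos h.symm, coeff_X_pow]
    by_cases h' : crow v = r
    · simp [h, h']
    · simp [h, h', Ne.symm h']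
  · rw [if_neg (Ne.symm h)]; simp [h]

/-- generating function of one cell in row `i`. -/
noncomputable def Gc (n i : ℕ) : ℤ[X][X] := ∑ a ∈ range (n+1), ew i a

noncomputable def Vs (n : ℕ) (T : Finset ℕ) : ℤ[X][X] := ∏ i ∈ T, Gc n i

noncomputable def Nn (n m : ℕ) : ℤ[X][X] := if m = 0 then 1 else Gc n 0 * Gc n 1 ^ (m-1)

noncomputable def Wn (n m : ℕ) : ℤ[X][X] := Nn n m - 1

lemma Gc_coeff (n i : ℕ) : constantCoeff (Gc n i) = 1 := by
  rw [Gc, map_sum, sum_range_succ']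
  have : ∀ a, constantCoeff (ew i (a+1)) = 0 := by
    intro a
    rw [ew, map_mul, map_pow]; simp
  simp only [this, sum_const_zero, zero_add]
  simp [ew]

lemma Wn_dvd (n m : ℕ) : (X : ℤ[X][X]) ∣ Wn n m := by
  rw [X_dvd_iff]
  change constantCoeff (Wn n m) = 0
  rw [Wn, Nn]
  split_ifs with h
  · simp
  · rw [map_sub, map_mul, map_pow, Gc_coeff, Gc_coeff]; simp

lemma Wn_zero (n : ℕ) : Wn n 0 = 0 := by simp [Wn, Nn]

lemma Gc_succ (n i : ℕ) (h : i ≠ 0) : Gc n i = Gc n 1 := by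
  simp [Gc, ew, h]

lemma Vs_empty (n : ℕ) : Vs n ∅ = 1 := by simp [Vs]

lemma Vs_eq (n : ℕ) (T : Finset ℕ) (h : 0 ∈ T) : Vs n T = Nn n T.card := by
  have hc : T.card ≠ 0 := by
    rw [Ne, card_eq_zero]; rintro rfl; simp at h
  rw [Vs, Nn, if_neg hc, ← mul_prod_erase T _ h]
  rw [prod_congr rfl (g := fun _ => Gc n 1), prod_const, card_erase_of_mem h]
  intro i hi
  exact Gc_succ n i (mem_erase.1 hi).1

/-- Column vectors bounded by `n` supported on `p`. -/
noncomputable def Sv (n k : ℕ) (p : ℕ → Prop) [DecidablePred p] : Finset (Fin k → ℕ) :=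
  Fintype.piFinset (fun i : Fin k => if p i then range (n+1) else {0})

lemma mem_Sv {n k : ℕ} {p : ℕ → Prop} [DecidablePred p] {u : Fin k → ℕ} :
    u ∈ Sv n k p ↔ (∀ i, u i ≤ n) ∧ ∀ i : Fin k, ¬ p i → u i = 0 := by
  rw [Sv, Fintype.mem_piFinset]
  constructor
  · intro h
    constructor
    · intro i
      have := h i
      split_ifs at this with hp
      · have := mem_range.1 this; omega
      · have := mem_singleton.1 this; omega
    · intro i hp
      have := h i
      rw [if_neg hp] at this
      exact mem_singleton.1 this
  · rintro ⟨h1, h2⟩ i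
    split_ifs with hp
    · exact mem_range.2 (by have := h1 i; omega)
    · exact mem_singleton.2 (h2 i hp)

lemma ew_zero (i : ℕ) : ew i 0 = 1 := by simp [ew]

lemma sum_Sv (n k : ℕ) (p : ℕ → Prop) [DecidablePred p] :
    ∑ u ∈ Sv n k p, ∏ i : Fin k, ew i (u i) = Vs n ((range k).filter p) := by
  rw [Sv, ← Finset.prod_univ_sum, Vs, prod_filter,
    ← Fin.prod_univ_eq_prod_range (fun i => if p i then Gc n i else 1) k]
  refine prod_congr rfl fun i _ => ?_
  split_ifs
  · rfl
  · simp [ew_zero]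

lemma sum_Sv_erase (n k : ℕ) (p : ℕ → Prop) [DecidablePred p] :
    ∑ u ∈ (Sv n k p).erase 0, ∏ i : Fin k, ew i (u i) = Vs n ((range k).filter p) - 1 := by
  have h0 : (0 : Fin k → ℕ) ∈ Sv n k p := by rw [mem_Sv]; simp
  rw [← sum_Sv, sum_erase_eq_sub h0]
  simp [ew_zero]

/-- Row-Fishburn configurations. -/
noncomputable def RX (n m : ℕ) : Finset (Fin m → Fin m → ℕ) :=
  Fintype.piFinset (fun j : Fin m => (Sv n m (fun i => i ≤ (j : ℕ))).erase 0)

lemma sum_RX (n m : ℕ) : ∑ v ∈ RX n m, wt v = ∏ j ∈ range m, Wn n (j+1) := by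
  unfold wt
  rw [RX, ← Finset.prod_univ_sum (f := fun (_ : Fin m) (u : Fin m → ℕ) => ∏ i : Fin m, ew i (u i)),
    ← Fin.prod_univ_eq_prod_range]
  refine prod_congr rfl fun j _ => ?_
  rw [sum_Sv_erase, Wn]
  have : (range m).filter (fun i => i ≤ (j : ℕ)) = range (j+1) := by
    ext a; have := j.2; simp only [mem_filter, mem_range]; omega
  rw [this, Vs_eq _ _ (by simp), card_range]

abbrev Jx (k : ℕ) := Fin k ⊕ (Fin k ⊕ Unit)
abbrev Cfg (k : ℕ) := Jx k → Fin k → ℕ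

def cbad {k : ℕ} (v : Cfg k) (a : ℕ) : Prop :=
  ∀ i : Fin k, (i : ℕ) = a → v (Sum.inr (Sum.inl i)) = 0 ∧ ∀ J, v J i = 0

/-- column constraint sets, with the rows of `β` required to be bad. -/
noncomputable def colS (n k : ℕ) (β : Finset ℕ) : (J : Jx k) → Finset (Fin k → ℕ)
  | Sum.inl j => (Sv n k (fun i => i ≤ (j : ℕ) ∧ i ∉ β)).erase 0
  | Sum.inr (Sum.inl j) => Sv n k (fun i => (j : ℕ) ∉ β ∧ i < (j : ℕ) ∧ i ∉ β)
  | Sum.inr (Sum.inr _) => Sv n k (fun i => i ∉ β)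

open Classical in
lemma colS_eq (n k : ℕ) (β : Finset ℕ) :
    (Fintype.piFinset (colS n k ∅)).filter (fun v => ∀ a ∈ β, cbad v a)
      = Fintype.piFinset (colS n k β) := by
  ext v
  simp only [mem_filter, Fintype.mem_piFinset, Sum.forall, colS, mem_erase, mem_Sv]
  constructor
  · rintro ⟨⟨h1, h2, h3⟩, h4⟩
    have hz : ∀ i : Fin k, (i : ℕ) ∈ β → ∀ J, v J i = 0 := fun i hi J => (h4 i hi i rfl).2 J
    refine ⟨fun j => ⟨(h1 j).1, (h1 j).2.1, fun i hi => ?_⟩,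
      fun j => ⟨(h2 j).1, fun i hi => ?_⟩, fun u => ⟨(h3 u).1, fun i hi => ?_⟩⟩
    · by_cases hb : (i : ℕ) ∈ β
      · exact hz i hb _
      · exact (h1 j).2.2 i (fun h => hi ⟨h.1, hb⟩)
    · by_cases hb : (i : ℕ) ∈ β
      · exact hz i hb _
      · by_cases hj : (j : ℕ) ∈ β
        · have := (h4 j hj j rfl).1
          rw [this]; rfl
        · exact (h2 j).2 i (fun h => hi ⟨hj, h.2.1, hb⟩)
    · exact hz i (not_not.1 hi) _
  · rintro ⟨h1, h2, h3⟩
    refine ⟨⟨fun j => ⟨(h1 j).1, (h1 j).2.1, fun i hi => (h1 j).2.2 i fun h => hi ⟨h.1, by simp⟩⟩,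
      fun j => ⟨(h2 j).1, fun i hi => (h2 j).2 i fun h => hi ⟨by simp, h.2.1, by simp⟩⟩,
      fun u => ⟨(h3 u).1, fun i hi => (h3 u).2 i fun h => hi (by simp)⟩⟩, ?_⟩
    rintro a ha i rfl
    refine ⟨?_, ?_⟩
    · funext i'
      exact (h2 i).2 i' fun h => h.1 ha
    · rintro (j | j | u)
      · exact (h1 j).2.2 i fun h => h.2 ha
      · exact (h2 j).2 i fun h => h.2.2 ha
      · exact (h3 u).2 i fun h => h ha

lemma sum_colS (n k : ℕ) (β : Finset ℕ) :
    ∑ v ∈ Fintype.piFinset (colS n k β), wt v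
      = (∏ j ∈ range k, (Vs n (range (j+1) \ β) - 1)) *
        ((∏ j ∈ range k, if j ∈ β then 1 else Vs n (range j \ β)) * Vs n (range k \ β)) := by
  unfold wt
  rw [← Finset.prod_univ_sum (f := fun (_ : Jx k) (u : Fin k → ℕ) => ∏ i : Fin k, ew i (u i)),
    Fintype.prod_sum_type, Fintype.prod_sum_type]
  refine congrArg₂ (· * ·) ?_ (congrArg₂ (· * ·) ?_ ?_)
  · rw [← Fin.prod_univ_eq_prod_range (fun j => Vs n (range (j+1) \ β) - 1)]
    refine prod_congr rfl fun j _ => ?_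
    simp only [colS]
    rw [sum_Sv_erase]
    refine congrArg (fun T => Vs n T - 1) ?_
    ext a; have := j.2; simp only [mem_filter, mem_range, mem_sdiff]
    constructor
    · rintro ⟨h1, h2, h3⟩; exact ⟨by omega, h3⟩
    · rintro ⟨h1, h2⟩; exact ⟨by omega, by omega, h2⟩
  · rw [← Fin.prod_univ_eq_prod_range (fun j => if j ∈ β then 1 else Vs n (range j \ β))]
    refine prod_congr rfl fun j _ => ?_
    simp only [colS]
    rw [sum_Sv]
    split_ifs with hj
    · rw [← Vs_empty n]
      congr 1
      ext a; simp [hj]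
    · congr 1
      ext a; have := j.2; simp only [mem_filter, mem_range, mem_sdiff]
      constructor
      · rintro ⟨h1, h2, h3, h4⟩; exact ⟨h3, h4⟩
      · rintro ⟨h1, h2⟩; exact ⟨by omega, hj, h1, h2⟩
  · simp only [univ_unique, prod_singleton, colS]
    rw [sum_Sv]
    congr 1
    ext a; simp

lemma sign_term (n k : ℕ) (β : Finset ℕ) (hβ : β ⊆ range k) :
    (∏ _a ∈ β, (-1 : ℤ[X][X])) * ∑ v ∈ Fintype.piFinset (colS n k β), wt v
      = term (Wn n) k β * (1 + Wn n (cnt β k)) := by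
  rw [sum_colS n k β]
  have hs : (∏ _a ∈ β, (-1 : ℤ[X][X])) = ∏ j ∈ range k, if j ∈ β then -1 else 1 := by
    rw [← prod_filter]
    congr 1
    ext a; simp only [mem_filter]
    exact ⟨fun h => ⟨hβ h, h⟩, fun h => h.2⟩
  by_cases h0 : 0 ∈ β
  · have hk := hβ h0
    have z1 : ∏ j ∈ range k, (Vs n (range (j+1) \ β) - 1) = 0 := by
      refine prod_eq_zero hk ?_
      have : range (0+1) \ β = ∅ := by
        ext a; simp only [mem_sdiff, mem_range, notMem_empty, iff_false, not_and, not_not]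
        intro h; have : a = 0 := by omega
        rwa [this]
      rw [this, Vs_empty, sub_self]
    have z2 : term (Wn n) k β = 0 := by
      refine prod_eq_zero hk ?_
      rw [if_pos h0, cnt_succ_mem h0]
      simp [cnt, Wn_zero]
    rw [z1, z2]; ring
  · have hV : ∀ j, Vs n (range j \ β) = 1 + Wn n (cnt β j) := by
      intro j
      rw [Wn, add_sub_cancel]
      rcases Nat.eq_zero_or_pos j with rfl | hj
      · simp [Vs, cnt, Nn]
      · exact Vs_eq _ _ (by simp [h0, hj])
    rw [hV k, hs, ← mul_assoc, ← mul_assoc, ← prod_mul_distrib, ← prod_mul_distrib, term]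
    congr 1
    refine prod_congr rfl fun j _ => ?_
    rw [hV, hV]
    split_ifs <;> ring

open Classical in
/-- Self-dual configurations. -/
noncomputable def SX (n k : ℕ) : Finset (Cfg k) :=
  (Fintype.piFinset (colS n k ∅)).filter (fun v => ∀ a ∈ range k, ¬ cbad v a)

open Classical in
lemma sum_SX (n k : ℕ) : ∑ v ∈ SX n k, wt v
    = ∑ β ∈ (range k).powerset, term (Wn n) k β * (1 + Wn n (cnt β k)) := by
  rw [SX, sum_filter]
  have h : ∀ v : Cfg k, (if ∀ a ∈ range k, ¬ cbad v a then wt v else 0)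
      = ∑ β ∈ (range k).powerset, (∏ _a ∈ β, (-1 : ℤ[X][X])) *
          (if ∀ a ∈ β, cbad v a then wt v else 0) := by
    intro v
    have e := Finset.prod_add (fun a => if cbad v a then (-1 : ℤ[X][X]) else 0) (fun _ => 1) (range k)
    have l : (∏ a ∈ range k, ((if cbad v a then (-1 : ℤ[X][X]) else 0) + 1))
        = if ∀ a ∈ range k, ¬ cbad v a then 1 else 0 := by
      split_ifs with hh
      · refine prod_eq_one fun a ha => ?_
        rw [if_neg (hh a ha)]; ring
      · push Not at hh
        obtain ⟨a, ha, hb⟩ := hh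
        refine prod_eq_zero ha ?_
        rw [if_pos hb]; ring
    rw [l] at e
    have : (if ∀ a ∈ range k, ¬ cbad v a then wt v else 0)
      = (if ∀ a ∈ range k, ¬ cbad v a then 1 else 0) * wt v := by split_ifs <;> simp
    rw [this, e, sum_mul]
    refine sum_congr rfl fun β _ => ?_
    rw [prod_const_one, mul_one]
    split_ifs with hh
    · congr 1
      exact prod_congr rfl fun a ha => if_pos (hh a ha)
    · push Not at hh
      obtain ⟨a, ha, hb⟩ := hh
      rw [prod_eq_zero ha (if_neg hb)]; simp
  rw [sum_congr rfl fun v _ => h v, sum_comm]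
  refine sum_congr rfl fun β hβ => ?_
  rw [← mul_sum, ← sum_filter, colS_eq n k β, sign_term n k β (mem_powerset.1 hβ)]

lemma count_eq (n r : ℕ) :
    ∑ k ∈ range (n+1), ((SX n k).filter (fun v => csum v = n ∧ crow v = r)).card
      = ∑ m ∈ range (n+1), ((RX n m).filter (fun v => csum v = n ∧ crow v = r)).card := by
  have h := main_alg (Wn n) X (Wn_dvd n) (Wn_zero n) n
  rw [X_pow_dvd_iff] at h
  have h := h n (by omega)
  rw [coeff_sub, sub_eq_zero] at h
  have h := congrArg (fun p => p.coeff r) h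
  simp only [finsetSum_coeff, ← sum_SX, ← sum_RX] at h
  simp only [← finsetSum_coeff, coeff_wt_sum] at h
  exact_mod_cast h

end GF

section Bij

lemma card_le_csum {ι : Type*} [Fintype ι] {k : ℕ} (v : ι → Fin k → ℕ) (h : ∀ J, v J ≠ 0) :
    Fintype.card ι ≤ csum v := by
  rw [csum, Fintype.card_eq_sum_ones]
  refine sum_le_sum fun J _ => ?_
  by_contra hc
  refine h J ?_
  funext i
  have : ∑ i, v J i = 0 := by omega
  exact (sum_eq_zero_iff.1 this) i (mem_univ _)

lemma entry_le_csum {ι : Type*} [Fintype ι] {k : ℕ} (v : ι → Fin k → ℕ) (J : ι) (i : Fin k) :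
    v J i ≤ csum v :=
  (single_le_sum (f := fun i => v J i) (fun _ _ => Nat.zero_le _) (mem_univ i)).trans
    (single_le_sum (f := fun J => ∑ i, v J i) (fun _ _ => Nat.zero_le _) (mem_univ J))

lemma mem_RX {n m : ℕ} {v : Fin m → Fin m → ℕ} :
    v ∈ RX n m ↔ ∀ j, v j ≠ 0 ∧ (∀ i, v j i ≤ n) ∧ ∀ i : Fin m, j < i → v j i = 0 := by
  simp only [RX, Fintype.mem_piFinset, mem_erase, mem_Sv, not_le, Fin.val_fin_lt]

lemma csum_rev {m : ℕ} (A : Mat m) :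
    csum (fun j i : Fin m => A j.rev i.rev) = msize A := by
  rw [csum, msize, ← Equiv.sum_comp Fin.revPerm]
  refine sum_congr rfl fun j _ => ?_
  rw [← Equiv.sum_comp Fin.revPerm]
  simp

lemma crow_rev {m : ℕ} (A : Mat m) :
    crow (fun j i : Fin m => A j.rev i.rev) = lastColSum A := by
  rw [crow, lastColSum, ← Equiv.sum_comp Fin.revPerm]
  refine sum_congr rfl fun j _ => ?_
  rw [← Equiv.sum_comp Fin.revPerm]
  refine sum_congr rfl fun i _ => ?_
  have : ((Fin.revPerm i : Fin m) : ℕ) = 0 ↔ (i : ℕ) + 1 = m := by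
    rw [Fin.revPerm_apply, Fin.val_rev]; have := i.2; omega
  simp only [this]
  simp

lemma RM_count (n r : ℕ) : (RMset₂ n r).ncard
    = ∑ m ∈ range (n+1), ((RX n m).filter (fun v => csum v = n ∧ crow v = r)).card := by
  rw [← card_sigma, ← Set.ncard_coe_finset]
  refine Set.ncard_congr (fun A _ => ⟨A.1, fun j i => A.2 j.rev i.rev⟩) ?_ ?_ ?_
  · rintro ⟨m, A⟩ ⟨⟨hU, hR, hs⟩, hl⟩
    dsimp only at hU hR hs hl
    rw [← csum_rev] at hs
    rw [← crow_rev] at hl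
    have hne : ∀ j : Fin m, (fun i : Fin m => A j.rev i.rev) ≠ 0 := by
      intro j h
      obtain ⟨b, hb⟩ := hR j.rev
      have := congrFun h b.rev
      simp at this
      exact hb this
    rw [mem_coe, mem_sigma, mem_filter, mem_RX]
    refine ⟨?_, ?_, hs, hl⟩
    · have := card_le_csum _ hne
      rw [hs, Fintype.card_fin] at this
      simp only [mem_range]; omega
    · intro j
      refine ⟨hne j, fun i => ?_, fun i hi => ?_⟩
      · have := entry_le_csum (fun j i : Fin m => A j.rev i.rev) j i
        rwa [hs] at this
      · exact hU _ _ (by rw [Fin.val_fin_lt, Fin.rev_lt_rev]; exact hi)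
  · rintro ⟨m, A⟩ ⟨m', B⟩ _ _ h
    simp only [Sigma.mk.injEq] at h
    obtain ⟨rfl, h⟩ := h
    have h := eq_of_heq h
    congr 1
    ext i j
    have := congrFun (congrFun h i.rev) j.rev
    simpa using this
  · rintro ⟨m, v⟩ h
    rw [mem_coe, mem_sigma, mem_filter, mem_RX] at h
    obtain ⟨-, h1, h2, h3⟩ := h
    dsimp only at h1 h2 h3
    have hv : (fun j i : Fin m => (fun a b : Fin m => v a.rev b.rev) j.rev i.rev) = v := by
      funext j i; simp
    refine ⟨⟨m, fun a b => v a.rev b.rev⟩, ⟨⟨?_, ?_, ?_⟩, ?_⟩, ?_⟩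
    · intro i j hij
      exact (h1 _).2.2 _ (by rw [Fin.rev_lt_rev]; exact hij)
    · intro i
      by_contra hc
      refine (h1 i.rev).1 ?_
      funext b
      by_contra hb
      refine hc ⟨b.rev, ?_⟩
      simpa using hb
    · exact ((csum_rev (m := m) (fun a b => v a.rev b.rev)).symm.trans (congrArg csum hv)).trans h2
    · exact ((crow_rev (m := m) (fun a b => v a.rev b.rev)).symm.trans (congrArg crow hv)).trans h3
    · dsimp only; rw [hv]

/-- total entry function. -/
def ent {m : ℕ} (M : Mat m) (a b : ℕ) : ℕ := if h : a < m ∧ b < m then M ⟨a, h.1⟩ ⟨b, h.2⟩ else 0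

lemma ent_fin {m : ℕ} (M : Mat m) (i j : Fin m) : ent M i j = M i j := by
  simp [ent]

lemma ent_of_lt {m : ℕ} (M : Mat m) {a b : ℕ} (ha : a < m) (hb : b < m) :
    ent M a b = M ⟨a, ha⟩ ⟨b, hb⟩ := by
  simp [ent, ha, hb]

lemma ent_ne {m : ℕ} {M : Mat m} {a b : ℕ} (h : ent M a b ≠ 0) : a < m ∧ b < m := by
  by_contra hc; exact h (by rw [ent, dif_neg hc])

/-- extracted configuration -/
def psi (k : ℕ) {m : ℕ} (M : Mat m) : Cfg k
  | Sum.inl j, i => ent M i j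
  | Sum.inr (Sum.inl j), i => if (i : ℕ) < j then ent M i (m-1-j) else 0
  | Sum.inr (Sum.inr _), i => if m % 2 = 1 then ent M i k else 0

structure Nice {m : ℕ} (M : Mat m) : Prop where
  U : ∀ a b, b < a → ent M a b = 0
  D : ∀ a b, a < m → b < m → ent M a b = ent M (m-1-b) (m-1-a)
  Z : ∀ a b, a + b + 1 = m → ent M a b = 0

lemma nice_of {m : ℕ} {M : Mat m} (hU : UT M) (hD : SelfDual M) (hZ : diagSum M = 0) : Nice M := by
  refine ⟨fun a b h => ?_, fun a b ha hb => ?_, fun a b h => ?_⟩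
  · by_contra hc
    obtain ⟨ha, hb⟩ := ent_ne hc
    rw [ent_of_lt M ha hb] at hc
    exact hc (hU _ _ h)
  · rw [ent_of_lt M ha hb, ent_of_lt M (by omega) (by omega)]
    have := congrFun (congrFun hD ⟨a, ha⟩) ⟨b, hb⟩
    rw [this, dual]
    congr 1 <;> (apply Fin.ext; simp [Fin.val_rev]; omega)
  · rw [ent_of_lt M (by omega) (by omega)]
    have h1 := (sum_eq_zero_iff.1 hZ) ⟨a, by omega⟩ (mem_univ _)
    have h2 := (sum_eq_zero_iff.1 h1) ⟨b, by omega⟩ (mem_univ _)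
    rwa [if_pos h] at h2

lemma split_range (k m : ℕ) (hk : k = m / 2) (f : ℕ → ℕ) :
    ∑ b ∈ range m, f b = ∑ j ∈ range k, f j
      + (∑ j ∈ range k, f (m-1-j) + if m % 2 = 1 then f k else 0) := by
  rcases Nat.mod_two_eq_zero_or_one m with h | h
  · have hm : m = k + k := by omega
    rw [if_neg (by omega), hm, sum_range_add, add_zero]
    congr 1
    rw [← sum_range_reflect]
    refine sum_congr rfl fun j hj => ?_
    have := mem_range.1 hj
    congr 1; omega
  · have hm : m = k + 1 + k := by omega
    rw [if_pos h, hm, sum_range_add, sum_range_succ, add_assoc]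
    congr 1
    rw [add_comm]
    congr 1
    rw [← sum_range_reflect]
    refine sum_congr rfl fun j hj => ?_
    have := mem_range.1 hj
    congr 1; omega

lemma split_sum (k m : ℕ) (hk : k = m / 2) (F : ℕ → ℕ → ℕ)
    (hF : ∀ a b, k ≤ a → a < m → b < m → F a b = 0) :
    ∑ a ∈ range m, ∑ b ∈ range m, F a b
      = ∑ j ∈ range k, ∑ i ∈ range k, F i j
        + (∑ j ∈ range k, ∑ i ∈ range k, F i (m-1-j)
          + ∑ i ∈ range k, if m % 2 = 1 then F i k else 0) := by
  have h1 : ∑ a ∈ range m, ∑ b ∈ range m, F a b = ∑ a ∈ range k, ∑ b ∈ range m, F a b := by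
    symm
    refine sum_subset (range_subset_range.2 (by omega)) ?_
    intro a ha ha'
    refine sum_eq_zero fun b hb => hF a b ?_ (mem_range.1 ha) (mem_range.1 hb)
    simpa using ha'
  rw [h1, sum_congr rfl fun a _ => split_range k m hk (F a), sum_add_distrib, sum_add_distrib,
    sum_comm, sum_comm (s := range k) (t := range k) (f := fun i j => F i (m-1-j))]

lemma Jsum {k : ℕ} (h : Jx k → Fin k → ℕ) (G₁ G₂ : ℕ → ℕ → ℕ) (G₃ : ℕ → ℕ)
    (h1 : ∀ i j : Fin k, h (Sum.inl j) i = G₁ i j)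
    (h2 : ∀ i j : Fin k, h (Sum.inr (Sum.inl j)) i = G₂ i j)
    (h3 : ∀ i : Fin k, h (Sum.inr (Sum.inr ())) i = G₃ i) :
    ∑ J, ∑ i, h J i = ∑ j ∈ range k, ∑ i ∈ range k, G₁ i j
        + (∑ j ∈ range k, ∑ i ∈ range k, G₂ i j + ∑ i ∈ range k, G₃ i) := by
  rw [Fintype.sum_sum_type, Fintype.sum_sum_type]
  simp only [h1, h2, h3, univ_unique, sum_singleton, PUnit.default_eq_unit]
  simp only [← Fin.sum_univ_eq_sum_range]

lemma fin_sum_ent {m : ℕ} (M : Mat m) (p : ℕ → ℕ → Prop) [∀ a b, Decidable (p a b)] :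
    (∑ i : Fin m, ∑ j : Fin m, if p i j then M i j else 0)
      = ∑ a ∈ range m, ∑ b ∈ range m, if p a b then ent M a b else 0 := by
  rw [← Fin.sum_univ_eq_sum_range (fun a => ∑ b ∈ range m, if p a b then ent M a b else 0)]
  refine sum_congr rfl fun i _ => ?_
  rw [← Fin.sum_univ_eq_sum_range (fun b => if p i b then ent M i b else 0)]
  simp only [ent_fin]

lemma csum_psi {k m : ℕ} (hk : k = m / 2) {M : Mat m} (hM : Nice M) :
    csum (psi k M) = reducedSize M := by
  rw [reducedSize, fin_sum_ent M (fun a b => a + b + 1 ≤ m), split_sum k m hk, csum]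
  · apply Jsum
    · intro i j
      rw [if_pos (by omega)]; rfl
    · intro i j
      rw [psi]
      by_cases h : (i : ℕ) < j
      · rw [if_pos h, if_pos (by omega)]
      · rw [if_neg h]
        split_ifs with h'
        · rw [hM.Z _ _ (by omega)]
        · rfl
    · intro i
      rw [psi]
      split_ifs with h1 h2
      · rfl
      · omega
      · rfl
  · intro a b ha ha' hb
    split_ifs with h
    · rcases Nat.lt_or_ge b a with h1 | h1
      · exact hM.U _ _ h1
      · exact hM.Z _ _ (by omega)
    · rfl

lemma crow_psi {k m : ℕ} (hk : k = m / 2) {M : Mat m} (hM : Nice M) :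
    crow (psi k M) = firstRowSum M := by
  rw [firstRowSum, fin_sum_ent M (fun a b => a = 0), split_sum k m hk, crow]
  · apply Jsum
    · intro i j; rfl
    · intro i j
      rw [psi]
      by_cases h0 : (i : ℕ) = 0
      · rw [if_pos h0, if_pos h0]
        by_cases h : (i : ℕ) < j
        · rw [if_pos h]
        · rw [if_neg h, hM.Z _ _ (by omega)]
      · rw [if_neg h0, if_neg h0]
    · intro i
      rw [psi]
      split_ifs <;> rfl
  · intro a b ha ha' hb
    split_ifs with h
    · exact hM.Z _ _ (by omega)
    · rfl

open Classical in
lemma mem_SX {n k : ℕ} {v : Cfg k} : v ∈ SX n k ↔ (∀ J i, v J i ≤ n) ∧ (∀ j, v (Sum.inl j) ≠ 0) ∧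
    (∀ i j : Fin k, j < i → v (Sum.inl j) i = 0) ∧
    (∀ i j : Fin k, j ≤ i → v (Sum.inr (Sum.inl j)) i = 0) ∧
    ∀ i, ¬ (v (Sum.inr (Sum.inl i)) = 0 ∧ ∀ J, v J i = 0) := by
  have hb : (∀ a ∈ range k, ¬ cbad v a) ↔
      ∀ i, ¬ (v (Sum.inr (Sum.inl i)) = 0 ∧ ∀ J, v J i = 0) := by
    constructor
    · intro h i hi
      refine h i (by simp) fun i' hi' => ?_
      rw [Fin.ext hi']; exact hi
    · intro h a ha hb
      exact h ⟨a, mem_range.1 ha⟩ (hb _ rfl)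
  rw [SX, mem_filter, hb]
  simp only [Fintype.mem_piFinset, Sum.forall, colS, mem_erase, mem_Sv, notMem_empty,
    not_false_eq_true, and_true, true_and, not_le, not_lt, not_true_eq_false, Fin.val_fin_lt,
    Fin.val_fin_le, false_implies, implies_true]
  constructor
  · rintro ⟨⟨h1, h2, h3⟩, h4⟩
    exact ⟨⟨fun j => (h1 j).2.1, fun j => (h2 j).1, h3⟩, fun j => (h1 j).1,
      fun i j h => (h1 j).2.2 i h, fun i j h => (h2 j).2 i h, h4⟩
  · rintro ⟨⟨h1, h2, h3⟩, h5, h6, h7, h4⟩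
    exact ⟨⟨fun j => ⟨h5 j, h1 j, fun i h => h6 i j h⟩, fun j => ⟨h2 j, fun i h => h7 i j h⟩, h3⟩, h4⟩

lemma psi_mem {n k m : ℕ} (hk : k = m / 2) {M : Mat m} (hM : Nice M) (hF : IsFishburn M)
    (hs : reducedSize M = n) : psi k M ∈ SX n k ∧ k ≤ n := by
  have hcol : ∀ j, psi k M (Sum.inl j) ≠ 0 := by
    intro j h
    obtain ⟨i, hi⟩ := hF.2.2 ⟨j, by omega⟩
    have h1 : ent M i j ≠ 0 := by
      rw [ent_of_lt M i.2 (by omega)]; exact hi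
    have h2 : (i : ℕ) ≤ j := by
      by_contra hc; exact h1 (hM.U _ _ (by omega))
    exact h1 (congrFun h ⟨i, by omega⟩)
  constructor
  · rw [mem_SX]
    refine ⟨fun J i => ?_, hcol, fun i j h => hM.U _ _ h, fun i j h => ?_, fun i => ?_⟩
    · rw [← hs, ← csum_psi hk hM]; exact entry_le_csum _ J i
    · exact if_neg (by simpa using h)
    · rintro ⟨h1, h2⟩
      obtain ⟨b, hb⟩ := hF.2.1 ⟨i, by omega⟩
      have hb : ent M i b ≠ 0 := by
        rw [ent_of_lt M (by omega) b.2]; exact hb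
      obtain ⟨b, hbm⟩ := b
      dsimp only at hb
      rcases lt_trichotomy ((i : ℕ) + b + 1) m with h | h | h
      · by_cases hbk : b < k
        · exact hb (h2 (Sum.inl ⟨b, hbk⟩))
        by_cases hbc : m ≤ b + k
        · have := h2 (Sum.inr (Sum.inl ⟨m-1-b, by omega⟩))
          rw [psi, if_pos (by simp only; omega)] at this
          simp only at this
          rw [show m - 1 - (m-1-b) = b by omega] at this
          exact hb this
        · have := h2 (Sum.inr (Sum.inr ()))
          rw [psi, if_pos (by omega)] at this
          rw [show b = k by omega] at hb
          exact hb this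
      · exact hb (hM.Z _ _ h)
      · rw [hM.D _ _ (by omega) hbm] at hb
        have := congrFun h1 ⟨m-1-b, by omega⟩
        rw [psi, if_pos (by simp only; omega)] at this
        exact hb this
  · rw [← hs, ← csum_psi hk hM, csum, Fintype.sum_sum_type]
    have := card_le_csum _ hcol
    rw [csum, Fintype.card_fin] at this
    omega

/-- Dimension is detected by the centre column. -/
lemma odd_iff {k m : ℕ} (hk : k = m / 2) {M : Mat m} (hM : Nice M) (hF : IsFishburn M) :
    m % 2 = 1 ↔ ∃ i, psi k M (Sum.inr (Sum.inr ())) i ≠ 0 := by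
  constructor
  · intro h
    obtain ⟨i, hi⟩ := hF.2.2 ⟨k, by omega⟩
    have h1 : ent M i k ≠ 0 := by
      rw [ent_of_lt M i.2 (by omega)]; exact hi
    have h2 : (i : ℕ) < k := by
      by_contra hc
      rcases Nat.lt_or_ge k i with h3 | h3
      · exact h1 (hM.U _ _ h3)
      · exact h1 (hM.Z _ _ (by omega))
    refine ⟨⟨i, h2⟩, ?_⟩
    rw [psi, if_pos h]; exact h1
  · rintro ⟨i, hi⟩
    by_contra hc
    exact hi (if_neg hc)

lemma ent_nw_eq {k m : ℕ} (hk : k = m / 2) {M N : Mat m} (hM : Nice M) (hN : Nice N)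
    (h : psi k M = psi k N) (a b : ℕ) (hab : a + b + 1 < m) : ent M a b = ent N a b := by
  by_cases hba : b < a
  · rw [hM.U _ _ hba, hN.U _ _ hba]
  have hak : a < k := by omega
  by_cases hbk : b < k
  · exact congrFun (congrFun h (Sum.inl ⟨b, hbk⟩)) ⟨a, hak⟩
  by_cases hbc : m ≤ b + k
  · have := congrFun (congrFun h (Sum.inr (Sum.inl ⟨m-1-b, by omega⟩))) ⟨a, hak⟩
    rw [psi, psi, if_pos (by simp only; omega), if_pos (by simp only; omega)] at this
    simp only at this
    rwa [show m - 1 - (m-1-b) = b by omega] at this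
  · have := congrFun (congrFun h (Sum.inr (Sum.inr ()))) ⟨a, hak⟩
    rw [psi, psi, if_pos (by omega), if_pos (by omega)] at this
    rwa [show b = k by omega]

lemma psi_inj {k m : ℕ} (hk : k = m / 2) {M N : Mat m} (hM : Nice M) (hN : Nice N)
    (h : psi k M = psi k N) : M = N := by
  ext i j
  rw [← ent_fin M, ← ent_fin N]
  rcases lt_trichotomy ((i : ℕ) + j + 1) m with h1 | h1 | h1
  · exact ent_nw_eq hk hM hN h _ _ h1
  · rw [hM.Z _ _ h1, hN.Z _ _ h1]
  · rw [hM.D _ _ i.2 j.2, hN.D _ _ i.2 j.2]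
    exact ent_nw_eq hk hM hN h _ _ (by omega)

def ec {k : ℕ} (v : Cfg k) (a b : ℕ) : ℕ :=
  if h : a < k ∧ b < k then v (Sum.inl ⟨b, h.2⟩) ⟨a, h.1⟩ else 0
def ed {k : ℕ} (v : Cfg k) (a b : ℕ) : ℕ :=
  if h : a < k ∧ b < k then v (Sum.inr (Sum.inl ⟨b, h.2⟩)) ⟨a, h.1⟩ else 0
def ee {k : ℕ} (v : Cfg k) (a : ℕ) : ℕ :=
  if h : a < k then v (Sum.inr (Sum.inr ())) ⟨a, h⟩ else 0

def nw {k : ℕ} (v : Cfg k) (m a b : ℕ) : ℕ :=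
  if b < k then ec v a b else if m ≤ b + k then ed v a (m-1-b) else ee v a

def gg {k : ℕ} (v : Cfg k) (m a b : ℕ) : ℕ :=
  if a + b + 1 < m then nw v m a b else if a + b + 1 = m then 0 else nw v m (m-1-b) (m-1-a)

/-- the matrix of a configuration -/
def phi {k : ℕ} (v : Cfg k) (m : ℕ) : Mat m := fun i j => gg v m i j

lemma ent_phi {k : ℕ} (v : Cfg k) {m a b : ℕ} (ha : a < m) (hb : b < m) :
    ent (phi v m) a b = gg v m a b := by
  rw [ent_of_lt _ ha hb]; rfl

lemma nw_ut {n k m : ℕ} (hk : k = m / 2) {v : Cfg k} (hv : v ∈ SX n k) (a b : ℕ) (h : b < a)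
    (h' : a + b + 1 < m) : nw v m a b = 0 := by
  rw [nw, if_pos (by omega), ec]
  split_ifs with h1
  · exact (mem_SX.1 hv).2.2.1 _ _ h
  · rfl

lemma phi_spec {n k m : ℕ} (hk : k = m / 2) {v : Cfg k} (hv : v ∈ SX n k)
    (hm : m % 2 = 1 ↔ ∃ i, v (Sum.inr (Sum.inr ())) i ≠ 0) :
    IsFishburn (phi v m) ∧ SelfDual (phi v m) ∧ diagSum (phi v m) = 0 ∧ psi k (phi v m) = v := by
  obtain ⟨h1, h2, h3, h4, h5⟩ := mem_SX.1 hv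
  have hU : UT (phi v m) := by
    intro i j h
    change gg v m i j = 0
    rw [gg]
    split_ifs with g1 g2
    · exact nw_ut hk hv _ _ h g1
    · rfl
    · exact nw_ut hk hv _ _ (by omega) (by omega)
  have hD : SelfDual (phi v m) := by
    ext i j
    change gg v m i j = gg v m j.rev i.rev
    rw [Fin.val_rev, Fin.val_rev, gg, gg]
    have hi := i.2
    have hj := j.2
    rcases lt_trichotomy ((i : ℕ) + j + 1) m with g | g | g
    · rw [if_pos g, if_neg (by omega), if_neg (by omega)]
      congr 1 <;> omega
    · rw [if_neg (by omega), if_pos g, if_neg (by omega), if_pos (by omega)]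
    · rw [if_neg (by omega), if_neg (by omega), if_pos (by omega)]
      congr 1 <;> omega
  have hR : ∀ a, a < m → ∃ b, b < m ∧ gg v m a b ≠ 0 := by
    intro a ha
    by_cases hak : a < k
    · by_contra hc
      push Not at hc
      refine h5 ⟨a, hak⟩ ⟨?_, ?_⟩
      · funext i
        by_contra hne
        have hia : (i : ℕ) < a := by
          by_contra hcc
          exact hne (h4 i ⟨a, hak⟩ (by simpa [Fin.le_def] using hcc))
        have := hc (m-1-i) (by omega)
        rw [gg, if_neg (by omega), if_neg (by omega), nw, if_neg (by omega), if_pos (by omega), ed,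
          dif_pos ⟨by omega, by omega⟩] at this
        simp only [show m - 1 - (m - 1 - (i:ℕ)) = i by omega,
          show m - 1 - (m - 1 - a) = a by omega] at this
        exact hne this
      · rintro (j | j | u)
        · by_contra hne
          have := hc j (by omega)
          rw [gg, if_pos (by omega), nw, if_pos (by omega), ec, dif_pos ⟨by omega, by omega⟩] at this
          exact hne this
        · by_contra hne
          have haj : a < (j : ℕ) := by
            by_contra hcc
            exact hne (h4 ⟨a, hak⟩ j (by simpa [Fin.le_def] using hcc))
          have := hc (m-1-j) (by omega)
          rw [gg, if_pos (by omega), nw, if_neg (by omega), if_pos (by omega), ed,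
            dif_pos ⟨by omega, by omega⟩] at this
          simp only [show m - 1 - (m - 1 - (j:ℕ)) = j by omega] at this
          exact hne this
        · by_contra hne
          have hodd := hm.2 ⟨_, hne⟩
          have := hc k (by omega)
          rw [gg, if_pos (by omega), nw, if_neg (by omega), if_neg (by omega), ee,
            dif_pos hak] at this
          exact hne this
    · by_cases hac : m ≤ a + k
      · have hj : m - 1 - a < k := by omega
        obtain ⟨i, hi⟩ := Function.ne_iff.1 (h2 ⟨m-1-a, hj⟩)
        have hij : (i : ℕ) ≤ m-1-a := by
          by_contra hcc
          exact hi (h3 i ⟨m-1-a, hj⟩ (by simpa [Fin.lt_def] using hcc))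
        refine ⟨m-1-i, by omega, ?_⟩
        rw [gg, if_neg (by omega), if_neg (by omega), nw, if_pos hj, ec,
            dif_pos ⟨by omega, by omega⟩]
        simp only [show m - 1 - (m - 1 - (i:ℕ)) = i by omega]
        exact hi
      · have hodd : m % 2 = 1 := by omega
        obtain ⟨i, hi⟩ := hm.1 hodd
        refine ⟨m-1-i, by omega, ?_⟩
        rw [gg, if_neg (by omega), if_neg (by omega), nw, if_neg (by omega), if_neg (by omega), ee,
            dif_pos (by omega)]
        simp only [show m - 1 - (m - 1 - (i:ℕ)) = i by omega]
        exact hi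
  have hR' : ∀ i, rowNonzero (phi v m) i := by
    intro i
    obtain ⟨b, hb, h⟩ := hR i i.2
    exact ⟨⟨b, hb⟩, h⟩
  refine ⟨⟨hU, hR', fun j => ?_⟩, hD, ?_, ?_⟩
  · obtain ⟨b, hb⟩ := hR' j.rev
    refine ⟨b.rev, ?_⟩
    have e := congrFun (congrFun hD b.rev) j
    rw [dual, Fin.rev_rev] at e
    rw [e]; exact hb
  · refine sum_eq_zero fun i _ => sum_eq_zero fun j _ => ?_
    split_ifs with h
    · change gg v m i j = 0
      rw [gg, if_neg (by omega), if_pos h]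
    · rfl
  · funext J i
    have hi := i.2
    rcases J with j | j | u
    · have hj := j.2
      rw [psi, ent_phi v (by omega) (by omega), gg, if_pos (by omega), nw, if_pos hj, ec,
        dif_pos ⟨hi, hj⟩]
    · have hj := j.2
      rw [psi]
      split_ifs with h
      · rw [ent_phi v (by omega) (by omega), gg, if_pos (by omega), nw, if_neg (by omega),
          if_pos (by omega), ed, dif_pos ⟨hi, by omega⟩]
        simp only [show m - 1 - (m - 1 - (j:ℕ)) = j by omega]
      · exact (h4 i j (Fin.le_def.2 (not_lt.1 h))).symm
    · rw [psi]
      split_ifs with h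
      · rw [ent_phi v (by omega) (by omega), gg, if_pos (by omega), nw, if_neg (by omega),
          if_neg (by omega), ee, dif_pos hi]
      · by_contra hc
        exact h (hm.2 ⟨i, fun h' => hc h'.symm⟩)

def Psi (A : SMat) : Σ k : ℕ, Cfg k := ⟨A.1 / 2, psi (A.1 / 2) A.2⟩

lemma Psi_eq {k m : ℕ} (hk : k = m / 2) (M : Mat m) : Psi ⟨m, M⟩ = ⟨k, psi k M⟩ := by
  subst hk; rfl

lemma M_count (n r : ℕ) : (Mset₃ n r 0).ncard
    = ∑ k ∈ range (n+1), ((SX n k).filter (fun v => csum v = n ∧ crow v = r)).card := by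
  rw [← card_sigma, ← Set.ncard_coe_finset]
  refine Set.ncard_congr (fun A _ => Psi A) ?_ ?_ ?_
  · rintro ⟨m, M⟩ ⟨⟨⟨hF, hD, hs⟩, hr⟩, hz⟩
    dsimp only at hF hD hs hr hz
    have hN := nice_of hF.1 hD hz
    obtain ⟨h1, h2⟩ := psi_mem rfl hN hF hs
    rw [mem_coe, Psi, mem_sigma, mem_filter]
    refine ⟨?_, h1, ?_, ?_⟩
    · simp only [mem_range]; omega
    · rw [csum_psi rfl hN, hs]
    · rw [crow_psi rfl hN, hr]
  · rintro ⟨m, M⟩ ⟨m', M'⟩ ⟨⟨⟨hF, hD, hs⟩, hr⟩, hz⟩ ⟨⟨⟨hF', hD', hs'⟩, hr'⟩, hz'⟩ h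
    dsimp only at hF hD hs hr hz hF' hD' hs' hr' hz' h
    have hN := nice_of hF.1 hD hz
    have hN' := nice_of hF'.1 hD' hz'
    have hk : m / 2 = m' / 2 := congrArg Sigma.fst h
    rw [Psi_eq rfl, Psi_eq hk] at h
    have h := eq_of_heq (Sigma.mk.inj h).2
    have ho := odd_iff rfl hN hF
    rw [h, ← odd_iff hk hN' hF'] at ho
    have hmm : m = m' := by omega
    subst hmm
    rw [psi_inj rfl hN hN' h]
  · rintro ⟨k, v⟩ h
    rw [mem_coe, mem_sigma, mem_filter] at h
    obtain ⟨-, h1, h2, h3⟩ := h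
    dsimp only at h1 h2 h3
    obtain ⟨m, hk, hm⟩ : ∃ m, k = m / 2 ∧
        (m % 2 = 1 ↔ ∃ i, v (Sum.inr (Sum.inr ())) i ≠ 0) := by
      by_cases hc : ∃ i, v (Sum.inr (Sum.inr ())) i ≠ 0
      · exact ⟨2*k+1, by omega, by simp only [hc, iff_true]; omega⟩
      · exact ⟨2*k, by omega, by simp only [hc, iff_false]; omega⟩
    obtain ⟨hF, hD, hz, hp⟩ := phi_spec hk h1 hm
    have hN := nice_of hF.1 hD hz
    refine ⟨⟨m, phi v m⟩, ⟨⟨⟨hF, hD, ?_⟩, ?_⟩, hz⟩, ?_⟩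
    · rw [← csum_psi hk hN, hp, h2]
    · change firstRowSum (phi v m) = r
      rw [← crow_psi hk hN, hp, h3]
    · rw [Psi_eq hk, hp]

end Bij

/-- `|M(n,k,0)| = |RM(n,k)|` for all `n ≥ 1`, `k ≥ 0`. -/
theorem stmt6 (n k : ℕ) (hn : 1 ≤ n) :
    (Mset₃ n k 0).ncard = (RMset₂ n k).ncard := by
  rw [M_count, RM_count, count_eq]
end

section
/- For all n ≥ 1, k ≥ 0 and p ≥ 1, the number of self-dual Fishburn matrices of reduced size n whose first row has sum k and whose diagonal cells have sum p equals the number of row-Fishburn matrices of size n whose last column has sum k and whose first row has sum p; that is, |M(n,k,p)| = |RM(n,k,p)|. -/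
open Finset

section SD

theorem sd_IE {ι J R : Type*} [Fintype ι] [Fintype J] [DecidableEq ι] [DecidableEq J] [CommRing R]
    (N : ℕ) (w : ι → ℕ → R) (hw : ∀ i, w i 0 = 1) (C : J → ι → Prop) [∀ l i, Decidable (C l i)] :
    (∑ g : ι → Fin (N+1), if ∀ l, ∃ i, C l i ∧ (g i : ℕ) ≠ 0 then ∏ i, w i (g i) else 0) =
    ∑ ε : J → Bool, (∏ l, if ε l = true then (1:R) else -1) *
      ∏ i, (if ∀ l, C l i → ε l = true then ∑ v : Fin (N+1), w i v else 1) := by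
  have h1 : ∀ ε : J → Bool, ∏ i, (if ∀ l, C l i → ε l = true then ∑ v : Fin (N+1), w i v else 1)
      = ∑ g : ι → Fin (N+1), ∏ i, (if ∀ l, C l i → ε l = true then w i (g i)
          else if (g i) = 0 then 1 else 0) := by
    intro ε
    rw [← Fintype.piFinset_univ, ← Finset.prod_univ_sum (fun _ => Finset.univ)
      (fun i (v : Fin (N+1)) => if ∀ l, C l i → ε l = true then w i v
          else if v = 0 then 1 else 0)]
    refine Finset.prod_congr rfl fun i _ => ?_
    split_ifs with h
    · rfl
    · simp
  simp_rw [h1, Finset.mul_sum]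
  rw [Finset.sum_comm]
  refine Finset.sum_congr rfl fun g _ => ?_
  have h2 : ∀ ε : J → Bool, ∏ i, (if ∀ l, C l i → ε l = true then w i (g i)
          else if (g i) = 0 then 1 else 0) = (∏ i, w i (g i)) *
          ∏ l, (if ε l = true then (1:R) else if ∃ i, C l i ∧ (g i : ℕ) ≠ 0 then 0 else 1) := by
    intro ε
    by_cases hb : ∃ l i, ε l = false ∧ C l i ∧ (g i : ℕ) ≠ 0
    · obtain ⟨l, i, h1, h2, h3⟩ := hb
      rw [Finset.prod_eq_zero (Finset.mem_univ i), Finset.prod_eq_zero (Finset.mem_univ l) (f := fun l => (if ε l = true then (1:R) else if ∃ i, C l i ∧ (g i : ℕ) ≠ 0 then 0 else 1)), mul_zero]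
      · rw [if_neg (by simp [h1]), if_pos ⟨i, h2, h3⟩]
      · rw [if_neg, if_neg]
        · intro h; apply h3; simp [h]
        · intro h; have := h l h2; simp [h1] at this
    · push Not at hb
      rw [Finset.prod_eq_one (s := (Finset.univ : Finset J)), mul_one]
      · refine Finset.prod_congr rfl fun i _ => ?_
        split_ifs with h h'
        · rfl
        · rw [h']; simp [hw]
        · exfalso
          push Not at h
          obtain ⟨l, hl, hl'⟩ := h
          have := hb l i (by simpa using hl') hl
          exact h' (Fin.ext (by simpa using this))
      · intro l _
        split_ifs with h h'
        · rfl
        · obtain ⟨i, hi, hi'⟩ := h'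
          exact absurd (hb l i (by simpa using h) hi) hi'
        · rfl
  simp_rw [h2]
  have h3 : ∀ ε : J → Bool, (∏ l, if ε l = true then (1:R) else -1) * ((∏ i, w i (g i)) *
          ∏ l, (if ε l = true then (1:R) else if ∃ i, C l i ∧ (g i : ℕ) ≠ 0 then 0 else 1))
      = (∏ i, w i (g i)) * ∏ l, (if ε l = true then (1:R) else if ∃ i, C l i ∧ (g i : ℕ) ≠ 0 then 0 else -1) := by
    intro ε
    rw [mul_left_comm, ← Finset.prod_mul_distrib]
    congr 1
    refine Finset.prod_congr rfl fun l _ => ?_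
    split_ifs <;> simp
  simp_rw [h3]
  rw [← Finset.mul_sum, ← Fintype.piFinset_univ, ← Finset.prod_univ_sum (fun _ => Finset.univ)
      (fun l (v : Bool) => if v = true then (1:R) else if ∃ i, C l i ∧ (g i : ℕ) ≠ 0 then 0 else -1)]
  simp only [Fintype.sum_bool, if_true, Bool.false_eq_true, if_false]
  split_ifs with h
  · rw [Finset.prod_eq_one (s := (Finset.univ : Finset J)), mul_one]
    intro l _
    rw [if_pos (h l)]; simp
  · push Not at h
    obtain ⟨l, hl⟩ := h
    rw [Finset.prod_eq_zero (Finset.mem_univ l), mul_zero]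
    rw [if_neg (by push Not; exact hl)]; simp

/-- signed sum -/
noncomputable def sdF {R : Type*} [CommRing R] (m : ℕ) (e : Fin m → R) (A : Fin m → Fin m → R) : R :=
  ∑ ε : Fin m → Bool, (∏ l, if ε l = true then (1:R) else -1) *
    ((∏ j, if ε j = true then e j else 1) *
      ∏ h, ∏ j, (if ε h = true ∧ ε j = true then A h j else 1))

theorem sd_sum_split {R : Type*} [CommRing R] (m : ℕ) (f : (Fin (m+2) → Bool) → R) :
    ∑ ε, f ε = ∑ δ : Fin m → Bool, ∑ s : Bool, ∑ t : Bool, 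
      f (Fin.cons s (Fin.snoc δ t : Fin (m+1) → Bool) : Fin (m+2) → Bool) := by
  rw [← (Fin.consEquiv (fun _ : Fin (m+2) => Bool)).sum_comp]
  rw [Fintype.sum_prod_type]
  have : ∀ s : Bool, ∑ y : Fin (m+1) → Bool, f ((Fin.consEquiv (fun _ : Fin (m+2) => Bool)) (s, y)) =
     ∑ δ : Fin m → Bool, ∑ t : Bool, f (Fin.cons s (Fin.snoc δ t : Fin (m+1) → Bool) : Fin (m+2) → Bool) := by
    intro s
    rw [← (Fin.snocEquiv (fun _ : Fin (m+1) => Bool)).sum_comp, Fintype.sum_prod_type, Finset.sum_comm]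
    rfl
  simp_rw [this]
  rw [Finset.sum_comm]

theorem sdF_peel {R : Type*} [CommRing R] (m : ℕ) (e : Fin (m+2) → R) (A : Fin (m+2) → Fin (m+2) → R)
    (h0 : ∀ j, A 0 j = 1) (h1 : ∀ h, h ≠ Fin.last _ → A h 0 = 1)
    (h2 : ∀ h, h ≠ Fin.last _ → A h (Fin.last _) = 1) :
    sdF (m+2) e A = (e 0 * A (Fin.last _) 0 - 1) * e (Fin.last _) * A (Fin.last _) (Fin.last _) *
      sdF m (fun j => e j.castSucc.succ * A (Fin.last _) j.castSucc.succ) (fun h j => A h.castSucc.succ j.castSucc.succ)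
      - (e 0 - 1) * sdF m (fun j => e j.castSucc.succ) (fun h j => A h.castSucc.succ j.castSucc.succ) := by
  have hne : ∀ h : Fin m, h.castSucc.succ ≠ Fin.last (m+1) := by
    intro h; rw [← Fin.succ_last]; simp [Fin.ext_iff]; omega
  unfold sdF
  rw [sd_sum_split, Finset.mul_sum, Finset.mul_sum, ← Finset.sum_sub_distrib]
  refine Finset.sum_congr rfl fun δ _ => ?_
  have key : ∏ j : Fin m, (if δ j = true then e j.castSucc.succ * A (Fin.last _) j.castSucc.succ else 1)
     = (∏ j : Fin m, (if δ j = true then e j.castSucc.succ else 1)) * 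
     ∏ j : Fin m, (if δ j = true then A (Fin.last _) j.castSucc.succ else 1) := by
    rw [← Finset.prod_mul_distrib]
    refine Finset.prod_congr rfl fun l _ => ?_
    split_ifs <;> simp
  rw [key]
  simp only [Fintype.sum_bool, Fin.prod_univ_succ (n := m+1), Fin.prod_univ_castSucc (n := m), Fin.cons_zero, Fin.cons_succ,
    Fin.snoc_castSucc, Fin.snoc_last, h0, h1 _ (hne _), Fin.succ_last, h2 _ (hne _)]
  simp
  ring

noncomputable def sdW {R : Type*} [CommRing R] (a c : R) : ℕ → R → R
  | 0, _ => 1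
  | 1, e => c * e - 1
  | (m+2), e => (a * e - 1) * c * e * sdW a c m (a * e) - (e - 1) * sdW a c m e

theorem sdF_eq_W {R : Type*} [CommRing R] (a c : R) : ∀ (m : ℕ) (e : R),
    sdF m (fun _ => e) (fun h j : Fin m => if (j:ℕ) ≤ h ∧ m ≤ (j:ℕ) + h + 1 then (if (j:ℕ) = h then c else a) else 1)
      = sdW a c m e
  | 0, e => by simp [sdF, sdW]
  | 1, e => by
    unfold sdF sdW
    rw [← (Equiv.funUnique (Fin 1) Bool).symm.sum_comp]
    simp
    ring
  | (m+2), e => by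
    rw [sdF_peel]
    · have ih := sdF_eq_W a c m
      simp only [sdW, ← ih]
      have hA : (fun h j : Fin m => if ((j.castSucc.succ : Fin (m+2)):ℕ) ≤ (h.castSucc.succ : Fin (m+2)) ∧ m + 2 ≤ ((j.castSucc.succ : Fin (m+2)):ℕ) + (h.castSucc.succ : Fin (m+2)) + 1 then (if ((j.castSucc.succ : Fin (m+2)):ℕ) = (h.castSucc.succ : Fin (m+2)) then c else a) else 1)
         = (fun h j : Fin m => if (j:ℕ) ≤ h ∧ m ≤ (j:ℕ) + h + 1 then (if (j:ℕ) = h then c else a) else 1) := by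
        funext h j
        simp only [Fin.val_succ, Fin.val_castSucc]
        congr 1
        · apply propext; constructor <;> rintro ⟨_, _⟩ <;> constructor <;> omega
        · congr 1; apply propext; omega
      rw [hA]
      have hB : (fun j : Fin m => e * (if ((j.castSucc.succ : Fin (m+2)):ℕ) ≤ (Fin.last (m+1) : Fin (m+2)) ∧ m + 2 ≤ ((j.castSucc.succ : Fin (m+2)):ℕ) + (Fin.last (m+1) : Fin (m+2)) + 1 then (if ((j.castSucc.succ : Fin (m+2)):ℕ) = (Fin.last (m+1) : Fin (m+2)) then c else a) else 1)) = fun _ => a * e := by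
        funext j
        simp only [Fin.val_succ, Fin.val_castSucc, Fin.val_last]
        rw [if_pos (by omega), if_neg (by omega), mul_comm]
      rw [hB]
      simp
      ring
    · intro j
      rw [if_neg]
      have := j.2
      simp only [Fin.val_zero]
      omega
    · intro h hh
      have : (h:ℕ) ≠ m+1 := fun h' => hh (Fin.ext h')
      have := h.2
      rw [if_neg]; simp; omega
    · intro h hh
      have : (h:ℕ) ≠ m+1 := fun h' => hh (Fin.ext h')
      have := h.2
      rw [if_neg]; simp; omega

noncomputable def sdGM {R : Type*} [CommRing R] (a b c d : R) : ℕ → R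
  | 0 => 1
  | 1 => d - 1
  | (m+2) => d * (b - 1) * sdW a c m b

theorem sdF_eq_GM {R : Type*} [CommRing R] (a b c d : R) : ∀ (m : ℕ),
    sdF m (fun _ => 1) (fun h j : Fin m => if (j:ℕ) ≤ h ∧ m ≤ (j:ℕ) + h + 1 then
      (if (h:ℕ) + 1 = m then (if (j:ℕ) = h then d else b) else (if (j:ℕ) = h then c else a)) else 1)
      = sdGM a b c d m
  | 0 => by simp [sdF, sdGM]
  | 1 => by
    unfold sdF sdGM
    rw [← (Equiv.funUnique (Fin 1) Bool).symm.sum_comp]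
    simp
    ring
  | (m+2) => by
    rw [sdF_peel]
    · have ih := sdF_eq_W a c m
      simp only [sdGM, ← ih]
      have hA : (fun h j : Fin m => if ((j.castSucc.succ : Fin (m+2)):ℕ) ≤ (h.castSucc.succ : Fin (m+2)) ∧ m + 2 ≤ ((j.castSucc.succ : Fin (m+2)):ℕ) + (h.castSucc.succ : Fin (m+2)) + 1 then (if ((h.castSucc.succ : Fin (m+2)):ℕ) + 1 = m + 2 then (if ((j.castSucc.succ : Fin (m+2)):ℕ) = (h.castSucc.succ : Fin (m+2)) then d else b) else (if ((j.castSucc.succ : Fin (m+2)):ℕ) = (h.castSucc.succ : Fin (m+2)) then c else a)) else 1)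
         = (fun h j : Fin m => if (j:ℕ) ≤ h ∧ m ≤ (j:ℕ) + h + 1 then (if (j:ℕ) = h then c else a) else 1) := by
        funext h j
        simp only [Fin.val_succ, Fin.val_castSucc]
        rw [if_neg (show ¬ ((h:ℕ) + 1 + 1 = m + 2) by omega)]
        congr 1
        · apply propext; constructor <;> rintro ⟨_, _⟩ <;> constructor <;> omega
        · congr 1; apply propext; omega
      rw [hA]
      have hB : (fun j : Fin m => 1 * (if ((j.castSucc.succ : Fin (m+2)):ℕ) ≤ (Fin.last (m+1) : Fin (m+2)) ∧ m + 2 ≤ ((j.castSucc.succ : Fin (m+2)):ℕ) + (Fin.last (m+1) : Fin (m+2)) + 1 then (if ((Fin.last (m+1) : Fin (m+2)):ℕ) + 1 = m + 2 then (if ((j.castSucc.succ : Fin (m+2)):ℕ) = (Fin.last (m+1) : Fin (m+2)) then d else b) else (if ((j.castSucc.succ : Fin (m+2)):ℕ) = (Fin.last (m+1) : Fin (m+2)) then c else a)) else 1)) = fun _ => b := by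
        funext j
        simp only [Fin.val_succ, Fin.val_castSucc, Fin.val_last]
        rw [if_pos (by omega), if_pos trivial, if_neg (by omega), one_mul]
      rw [hB]
      simp
      ring
    · intro j
      rw [if_neg]
      have := j.2
      simp only [Fin.val_zero]
      omega
    · intro h hh
      have : (h:ℕ) ≠ m+1 := fun h' => hh (Fin.ext h')
      have := h.2
      rw [if_neg]; simp; omega
    · intro h hh
      have : (h:ℕ) ≠ m+1 := fun h' => hh (Fin.ext h')
      have := h.2
      rw [if_neg]; simp; omega

theorem sdW_dvd {R : Type*} [CommRing R] (x a c : R) (ha : x ∣ a - 1) : ∀ (m : ℕ) (e : R), x ∣ e - 1 →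
    x ^ (m / 2) ∣ sdW a c m e
  | 0, e, _ => by simp
  | 1, e, _ => by simp
  | (m+2), e, he => by
    have hae : x ∣ a * e - 1 := by
      have : a * e - 1 = (a - 1) * e + (e - 1) := by ring
      rw [this]; exact dvd_add (ha.mul_right _) he
    have h1 := sdW_dvd x a c ha m e he
    have h2 := sdW_dvd x a c ha m (a * e) hae
    rw [show (m+2)/2 = m/2 + 1 by omega, pow_succ']
    unfold sdW
    refine dvd_sub ?_ (mul_dvd_mul he h1)
    rw [mul_assoc (a * e - 1), mul_assoc (a * e - 1)]
    exact mul_dvd_mul hae (h2.mul_left _)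

theorem sd_beta_dvd {R : Type*} [CommRing R] (x a b : R) (ha : x ∣ a - 1) (hb : x ∣ b - 1) (s : ℕ) :
    x ∣ a ^ s * b - 1 := by
  have : a ^ s * b - 1 = (a ^ s - 1) * b + (b - 1) := by ring
  rw [this]
  exact dvd_add ((ha.trans (sub_one_dvd_pow_sub_one a s)).mul_right _) hb

noncomputable def sdGR {R : Type*} [CommRing R] (a b c d : R) : ℕ → R
  | 0 => 1
  | (m+1) => (c ^ m * d - 1) * ∏ i ∈ range m, (a ^ i * b - 1)

theorem sdGR_dvd {R : Type*} [CommRing R] (x a b c d : R) (ha : x ∣ a - 1) (hb : x ∣ b - 1) (m : ℕ) :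
    x ^ m ∣ sdGR a b c d (m+1) := by
  refine Dvd.dvd.mul_left ?_ _
  have := Finset.prod_dvd_prod_of_dvd (s := range m) (fun _ => x) (fun i => a ^ i * b - 1)
    (fun i _ => sd_beta_dvd x a b ha hb i)
  simpa using this

theorem sdGM_dvd {R : Type*} [CommRing R] (x a b c d : R) (ha : x ∣ a - 1) (hb : x ∣ b - 1) (m : ℕ) :
    x ^ (m / 2) ∣ sdGM a b c d (m+2) :=
  Dvd.dvd.mul_left (sdW_dvd x a c ha m b hb) _

theorem sd_V_step {R : Type*} [CommRing R] (x a c : R) (n : ℕ) (e : R) (ha : x ∣ a - 1) (he : x ∣ e - 1) :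
    x ^ (n+1) ∣ (∑ m ∈ range (2*n+2), sdW a c m e) -
      c * (1 + (a * e - 1) * ∑ m ∈ range (2*n+2), sdW a c m (a * e)) := by
  have hco : IsCoprime (x ^ (n+1)) e := by
    apply IsCoprime.pow_left
    obtain ⟨q, hq⟩ := he
    exact ⟨-q, 1, by linear_combination hq⟩
  apply hco.dvd_of_dvd_mul_left
  have h1 : ∑ m ∈ range (2*n+2+2), sdW a c m e = c * e + (a * e - 1) * c * e * (∑ m ∈ range (2*n+2), sdW a c m (a * e))
     - (e - 1) * ∑ m ∈ range (2*n+2), sdW a c m e := by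
    rw [Finset.sum_range_succ' _ (2*n+2+1), Finset.sum_range_succ' _ (2*n+2), Finset.mul_sum, Finset.mul_sum]
    simp only [sdW, Finset.sum_sub_distrib]
    ring
  have h2 : ∑ m ∈ range (2*n+2+2), sdW a c m e = ∑ m ∈ range (2*n+2), sdW a c m e + sdW a c (2*n+2) e + sdW a c (2*n+2+1) e := by
    rw [Finset.sum_range_succ, Finset.sum_range_succ]
  have h3 := sdW_dvd x a c ha (2*n+2) e he
  have h4 := sdW_dvd x a c ha (2*n+2+1) e he
  rw [show (2*n+2)/2 = n+1 by omega] at h3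
  rw [show (2*n+2+1)/2 = n+1 by omega] at h4
  have h5 := (dvd_add h3 h4).neg_right
  convert h5 using 1
  rw [h2] at h1
  linear_combination h1

theorem sd_V_iter {R : Type*} [CommRing R] (x a b c : R) (n : ℕ) (ha : x ∣ a - 1) (hb : x ∣ b - 1) (J : ℕ) :
    x ^ (n+1) ∣ 1 + (b - 1) * (∑ m ∈ range (2*n+2), sdW a c m b) -
      (∑ j ∈ range (J+1), c ^ j * ∏ i ∈ range j, (a ^ i * b - 1)) -
      c ^ J * (∏ i ∈ range (J+1), (a ^ i * b - 1)) * ∑ m ∈ range (2*n+2), sdW a c m (a ^ J * b) := by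
  induction J with
  | zero => simp
  | succ J ih =>
    have h := sd_V_step x a c n (a ^ J * b) ha (sd_beta_dvd x a b ha hb J)
    have h2 := dvd_add ih (h.mul_left (c ^ J * (∏ i ∈ range (J+1), (a ^ i * b - 1))))
    convert h2 using 1
    rw [Finset.sum_range_succ _ (J+1), Finset.prod_range_succ _ (J+1), show a * (a ^ J * b) = a ^ (J+1) * b by ring]
    ring

theorem sd_algebra {R : Type*} [CommRing R] (x a b c d : R) (n : ℕ) (ha : x ∣ a - 1) (hb : x ∣ b - 1) :
    x ^ (n+1) ∣ (∑ m ∈ range (2*n+4), sdGM a b c d m) - (∑ m ∈ range (2*n+4), sdGR a b c d m) -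
      ((∑ j ∈ range (2*n+3), ∏ i ∈ range j, (a ^ i * b - 1)) - 1) := by
  have h := sd_V_iter x a b c n ha hb (2*n+2)
  have hz : x ^ (n+1) ∣ c ^ (2*n+2) * (∏ i ∈ range (2*n+2+1), (a ^ i * b - 1)) * ∑ m ∈ range (2*n+2), sdW a c m (a ^ (2*n+2) * b) := by
    refine Dvd.dvd.mul_right (Dvd.dvd.mul_left ?_ _) _
    have := Finset.prod_dvd_prod_of_dvd (s := range (2*n+2+1)) (fun _ => x) (fun i => a ^ i * b - 1)
      (fun i _ => sd_beta_dvd x a b ha hb i)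
    refine (pow_dvd_pow x (show n+1 ≤ 2*n+2+1 by omega)).trans ?_
    simpa using this
  have h2 := (dvd_add h hz).mul_left d
  convert h2 using 1
  rw [Finset.sum_range_succ' _ (2*n+3), Finset.sum_range_succ' _ (2*n+2), Finset.sum_range_succ' (sdGR a b c d) (2*n+3)]
  simp only [sdGM, sdGR, ← Finset.mul_sum, sub_mul, one_mul, Finset.sum_sub_distrib]
  have : ∀ j, c ^ j * d * ∏ i ∈ range j, (a ^ i * b - 1) = d * (c ^ j * ∏ i ∈ range j, (a ^ i * b - 1)) := by intro j; ring
  simp only [this, ← Finset.mul_sum]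
  ring

section gen
variable {R : Type*} [CommRing R] (x y z : R)

noncomputable def sdwt (F D : Prop) [Decidable F] [Decidable D] : R := x * (if F then y else 1) * (if D then z else 1)

noncomputable def sdI {ι J : Type*} [Fintype ι] [Fintype J] [DecidableEq J] (T F D : ι → Prop)
    [DecidablePred T] [DecidablePred F] [DecidablePred D] (C : J → ι → Prop) [∀ l i, Decidable (C l i)] (n : ℕ) : R :=
  ∑ ε : J → Bool, (∏ l, if ε l = true then (1:R) else -1) *
      ∏ i, (if ∀ l, C l i → ε l = true then
        (if T i then ∑ v ∈ range (n+1), (sdwt x y z (F i) (D i)) ^ v else 1) else 1)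

theorem sdI_eq {ι J : Type*} [Fintype ι] [Fintype J] [DecidableEq ι] [DecidableEq J] (T F D : ι → Prop)
    [DecidablePred T] [DecidablePred F] [DecidablePred D] (C : J → ι → Prop) [∀ l i, Decidable (C l i)] (n : ℕ) :
    sdI x y z T F D C n = ∑ g : ι → Fin (n+1),
      if (∀ i, ¬ T i → (g i : ℕ) = 0) ∧ (∀ l, ∃ i, C l i ∧ (g i : ℕ) ≠ 0) then
        x ^ (∑ i, (g i : ℕ)) * y ^ (∑ i, if F i then (g i : ℕ) else 0) * z ^ (∑ i, if D i then (g i : ℕ) else 0)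
      else 0 := by
  have hsum : ∀ i, (if T i then ∑ v ∈ range (n+1), (sdwt x y z (F i) (D i)) ^ v else 1) =
      ∑ v : Fin (n+1), (fun (i : ι) (v : ℕ) => if T i then (sdwt x y z (F i) (D i)) ^ v else if v = 0 then 1 else 0) i v := by
    intro i
    rw [Fin.sum_univ_eq_sum_range (fun v => (fun (i : ι) (v : ℕ) => if T i then (sdwt x y z (F i) (D i)) ^ v else if v = 0 then 1 else 0) i v)]
    by_cases h : T i <;> simp [h]
  have hIE := sd_IE n (fun (i : ι) (v : ℕ) => if T i then (sdwt x y z (F i) (D i)) ^ v else if v = 0 then 1 else 0) (by intro i; simp) C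
  simp only [← hsum] at hIE
  unfold sdI
  rw [← hIE]
  refine Finset.sum_congr rfl fun g _ => ?_
  by_cases hT : ∀ i, ¬ T i → (g i : ℕ) = 0
  · have hprod : (∏ i, if T i then (sdwt x y z (F i) (D i)) ^ (g i : ℕ) else if (g i : ℕ) = 0 then 1 else 0) =
        x ^ (∑ i, (g i : ℕ)) * y ^ (∑ i, if F i then (g i : ℕ) else 0) * z ^ (∑ i, if D i then (g i : ℕ) else 0) := by
      rw [← Finset.prod_pow_eq_pow_sum, ← Finset.prod_pow_eq_pow_sum, ← Finset.prod_pow_eq_pow_sum,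
        ← Finset.prod_mul_distrib, ← Finset.prod_mul_distrib]
      refine Finset.prod_congr rfl fun i _ => ?_
      by_cases h : T i
      · rw [if_pos h]
        unfold sdwt
        by_cases h1 : F i <;> by_cases h2 : D i <;> simp [h1, h2, mul_pow]
      · simp [h, hT i h]
    rw [hprod]
    by_cases hC : ∀ l, ∃ i, C l i ∧ (g i : ℕ) ≠ 0
    · rw [if_pos hC, if_pos ⟨hT, hC⟩]
    · rw [if_neg hC, if_neg (fun h => hC h.2)]
  · have hz : (∏ i, if T i then (sdwt x y z (F i) (D i)) ^ (g i : ℕ) else if (g i : ℕ) = 0 then 1 else 0) = 0 := by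
      push Not at hT
      obtain ⟨i, h1, h2⟩ := hT
      apply Finset.prod_eq_zero (Finset.mem_univ i)
      rw [if_neg h1, if_neg h2]
    rw [hz, ite_self, if_neg (fun h => hT h.1)]

noncomputable def sdv (n : ℕ) (w : R) : R := ∑ v ∈ range (n+1), w ^ v

theorem sdv_dvd (n : ℕ) (w : R) : w ∣ sdv n w - 1 := by
  unfold sdv
  rw [Finset.sum_range_succ']
  rw [pow_zero, add_sub_cancel_right]
  apply Finset.dvd_sum
  intro i _
  exact dvd_pow_self w (Nat.succ_ne_zero i)

theorem sdv_wt (n : ℕ) (F D : Prop) [Decidable F] [Decidable D] : ∑ v ∈ range (n+1), (sdwt x y z F D) ^ v =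
    if F then (if D then sdv n (x * y * z) else sdv n (x * y)) else (if D then sdv n (x * z) else sdv n x) := by
  unfold sdwt sdv
  by_cases h1 : F <;> by_cases h2 : D <;> simp [h1, h2]

theorem sdI_R (m n : ℕ) : sdI x y z (ι := Fin m × Fin m) (J := Fin m) (fun q => (q.1:ℕ) ≤ q.2) (fun q => (q.2:ℕ) + 1 = m)
    (fun q => (q.1 : ℕ) = 0) (fun l q => l = q.1) n =
    sdGR (sdv n x) (sdv n (x * y)) (sdv n (x * z)) (sdv n (x * y * z)) m := by
  unfold sdI
  have h1 : ∀ ε : Fin m → Bool, (∏ l, if ε l = true then (1:R) else -1) *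
      ∏ i : Fin m × Fin m, (if ∀ l, l = i.1 → ε l = true then
        (if (i.1:ℕ) ≤ i.2 then ∑ v ∈ range (n+1), (sdwt x y z ((i.2:ℕ) + 1 = m) ((i.1:ℕ) = 0)) ^ v else 1) else 1)
      = ∏ l, if ε l = true then ∏ j : Fin m, (if (l:ℕ) ≤ j then ∑ v ∈ range (n+1), (sdwt x y z ((j:ℕ) + 1 = m) ((l:ℕ) = 0)) ^ v else 1) else -1 := by
    intro ε
    rw [Fintype.prod_prod_type, ← Finset.prod_mul_distrib]
    refine Finset.prod_congr rfl fun l _ => ?_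
    by_cases h : ε l = true <;> simp [h]
  refine (Finset.sum_congr rfl fun ε _ => Eq.trans ?_ (h1 ε)).trans ?_
  · congr 1
    refine Finset.prod_congr rfl fun q _ => ?_
    congr
  rw [← Fintype.piFinset_univ, ← Finset.prod_univ_sum (fun _ => Finset.univ)
      (fun (l : Fin m) (v : Bool) => if v = true then ∏ j : Fin m, (if (l:ℕ) ≤ j then ∑ v ∈ range (n+1), (sdwt x y z ((j:ℕ) + 1 = m) ((l:ℕ) = 0)) ^ v else 1) else -1)]
  simp only [Fintype.sum_bool, if_true, Bool.false_eq_true, if_false, sdv_wt]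
  cases m with
  | zero => simp [sdGR]
  | succ m =>
    rw [Fin.prod_univ_succ]
    unfold sdGR
    congr 1
    · rw [Fin.prod_univ_castSucc]
      have : ∀ i : Fin m, (i:ℕ) ≠ m := fun i => by have := i.2; omega
      simp [this]
      ring
    · rw [Finset.prod_range, ← Equiv.prod_comp Fin.revPerm]
      refine Finset.prod_congr rfl fun i _ => ?_
      rw [Fin.prod_univ_castSucc]
      have : ∀ i : Fin m, (i:ℕ) ≠ m := fun i => by have := i.2; omega
      simp [this]
      have hi := i.2
      rw [if_pos (show 0 < m by omega)]
      have h2 : ∀ j : Fin m, (m - ((i:ℕ) + 1) < (j:ℕ)) ↔ i.rev < j := by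
        intro j; rw [Fin.lt_def, Fin.val_rev]
      simp only [h2]
      rw [Finset.prod_ite]
      simp
      rw [← sub_eq_add_neg]
      congr 3
      have : (Finset.univ.filter (fun j => i.rev < j)) = Finset.Ioi i.rev := by ext; simp
      rw [this, Fin.card_Ioi, Fin.val_rev]
      omega

theorem sdI_M (m n : ℕ) : sdI x y z (ι := Fin m × Fin m) (J := Fin m) (fun q => (q.1:ℕ) ≤ q.2 ∧ (q.1:ℕ) + q.2 + 1 ≤ m) (fun q => (q.1:ℕ) = 0)
    (fun q => (q.1 : ℕ) + q.2 + 1 = m) (fun l q => l = q.2 ∨ l = q.1.rev) n =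
    sdGM (sdv n x) (sdv n (x * y)) (sdv n (x * z)) (sdv n (x * y * z)) m := by
  rw [← sdF_eq_GM]
  unfold sdI
  unfold sdF
  refine Finset.sum_congr rfl fun ε _ => ?_
  congr 1
  rw [Fintype.prod_prod_type, ← Equiv.prod_comp Fin.revPerm]
  simp only [ite_self, Finset.prod_const_one, one_mul, sdv_wt]
  refine Finset.prod_congr rfl fun h _ => Finset.prod_congr rfl fun j _ => ?_
  have hh := h.2
  have hj := j.2
  have e0 : (∀ l, (l = j ∨ l = (Fin.revPerm h).rev) → ε l = true) ↔ (ε h = true ∧ ε j = true) := by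
    constructor
    · intro H; exact ⟨H h (by simp), H j (by simp)⟩
    · rintro ⟨H1, H2⟩ l (rfl | rfl)
      · exact H2
      · simpa using H1
  have e1 : (m - ((h:ℕ) + 1) ≤ j ∧ m - ((h:ℕ) + 1) + j + 1 ≤ m) ↔ ((j:ℕ) ≤ h ∧ m ≤ (j:ℕ) + h + 1) := by omega
  have e2 : (m - ((h:ℕ) + 1) = 0) ↔ (h:ℕ) + 1 = m := by omega
  have e3 : (m - ((h:ℕ) + 1) + j + 1 = m) ↔ (j:ℕ) = h := by omega
  have er : ((Fin.revPerm h : Fin m) : ℕ) = m - ((h:ℕ) + 1) := by simp [Fin.val_rev]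
  rw [← er] at e1 e2 e3
  exact if_congr e0 (if_congr e1 (if_congr e2 (if_congr e3 rfl rfl) (if_congr e3 rfl rfl)) rfl) rfl

end gen

abbrev sdP := Polynomial (Polynomial (Polynomial ℤ))
noncomputable def sdx : sdP := Polynomial.C Polynomial.X
noncomputable def sdy : sdP := Polynomial.C (Polynomial.C Polynomial.X)
noncomputable def sdz : sdP := Polynomial.X

theorem sd_mon (n k p : ℕ) : sdx ^ n * sdy ^ k * sdz ^ p =
    Polynomial.monomial p (Polynomial.monomial n (Polynomial.monomial k (1:ℤ))) := by
  unfold sdx sdy sdz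
  rw [← Polynomial.C_mul_X_pow_eq_monomial, ← Polynomial.C_mul_X_pow_eq_monomial, ← Polynomial.C_mul_X_pow_eq_monomial]
  simp
  ring

theorem sd_coeff_mon (n k p n' k' p' : ℕ) : (((sdx ^ n' * sdy ^ k' * sdz ^ p').coeff p).coeff n).coeff k =
    if n' = n ∧ k' = k ∧ p' = p then 1 else 0 := by
  rw [sd_mon, Polynomial.coeff_monomial]
  split_ifs with h1 h2 h2
  · obtain ⟨rfl, rfl, rfl⟩ := h2
    simp
  · rw [Polynomial.coeff_monomial]
    split_ifs with h3
    · rw [Polynomial.coeff_monomial, if_neg (by tauto)]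
    · simp
  · tauto
  · simp

theorem sd_coeff_dvd (F : sdP) (n k p : ℕ) (h : sdx ^ (n+1) ∣ F) : ((F.coeff p).coeff n).coeff k = 0 := by
  unfold sdx at h
  rw [← Polynomial.C_pow, Polynomial.C_dvd_iff_dvd_coeff] at h
  rw [Polynomial.X_pow_dvd_iff.1 (h p) n (by omega)]
  simp

/-- configurations on cells -/
def sdS {ι J : Type*} [Fintype ι] (T F D : ι → Prop) [DecidablePred F] [DecidablePred D] (C : J → ι → Prop) (n k p : ℕ) : Set (ι → ℕ) :=
  {g | (∀ i, ¬ T i → g i = 0) ∧ (∀ l, ∃ i, C l i ∧ g i ≠ 0) ∧ ∑ i, g i = n ∧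
    (∑ i, if F i then g i else 0) = k ∧ (∑ i, if D i then g i else 0) = p}

theorem sd_count {ι J : Type*} [Fintype ι] [Fintype J] [DecidableEq ι] [DecidableEq J] (T F D : ι → Prop) [DecidablePred T] [DecidablePred F] [DecidablePred D] (C : J → ι → Prop) [∀ l i, Decidable (C l i)] (n k p : ℕ) :
    (sdS T F D C n k p).Finite ∧
    ((sdS T F D C n k p).ncard : ℤ) = (((sdI sdx sdy sdz T F D C n).coeff p).coeff n).coeff k := by
  classical
  let Q : Finset (ι → Fin (n+1)) := Finset.univ.filter (fun g => (fun i => (g i : ℕ)) ∈ sdS T F D C n k p)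
  let φ : (ι → Fin (n+1)) → (ι → ℕ) := fun g i => (g i : ℕ)
  have hφ : Function.Injective φ := by
    intro g g' h
    funext i
    exact Fin.ext (congrFun h i)
  have hS : sdS T F D C n k p = Set.image φ (Q : Set (ι → Fin (n+1))) := by
    ext g
    constructor
    · intro hg
      have hle : ∀ i, g i < n + 1 := by
        intro i
        have h := hg.2.2.1
        have := Finset.single_le_sum (f := g) (fun _ _ => Nat.zero_le _) (Finset.mem_univ i)
        omega
      refine ⟨fun i => ⟨g i, hle i⟩, ?_, rfl⟩
      simp only [Q, Finset.coe_filter, Set.mem_ofPred_eq, Finset.mem_univ, true_and]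
      exact hg
    · rintro ⟨g', hg', rfl⟩
      simp only [Q, Finset.coe_filter, Set.mem_ofPred_eq, Finset.mem_univ, true_and] at hg'
      exact hg'
  refine ⟨by rw [hS]; exact Q.finite_toSet.image _, ?_⟩
  rw [hS, Set.ncard_image_of_injective _ hφ, Set.ncard_coe_finset]
  rw [sdI_eq]
  simp only [Polynomial.finsetSum_coeff]
  rw [Finset.natCast_card_filter]
  refine Finset.sum_congr rfl fun g _ => ?_
  by_cases hC : (∀ i, ¬ T i → (g i : ℕ) = 0) ∧ (∀ l, ∃ i, C l i ∧ (g i : ℕ) ≠ 0)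
  · rw [if_pos hC, sd_coeff_mon]
    refine if_congr ?_ rfl rfl
    unfold sdS
    simp only [Set.mem_ofPred_eq]
    tauto
  · rw [if_neg hC, if_neg]
    · simp
    · intro h; exact hC ⟨h.1, h.2.1⟩

noncomputable def sda (n : ℕ) : sdP := sdv n sdx
noncomputable def sdb (n : ℕ) : sdP := sdv n (sdx * sdy)
noncomputable def sdc (n : ℕ) : sdP := sdv n (sdx * sdz)
noncomputable def sdd (n : ℕ) : sdP := sdv n (sdx * sdy * sdz)

theorem sd_countR (m n k p : ℕ) :
    {M : Mat m | (⟨m, M⟩ : SMat) ∈ RMset₃ n k p}.Finite ∧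
    ({M : Mat m | (⟨m, M⟩ : SMat) ∈ RMset₃ n k p}.ncard : ℤ) =
      (((sdGR (sda n) (sdb n) (sdc n) (sdd n) m).coeff p).coeff n).coeff k := by
  let φ : (Fin m × Fin m → ℕ) → Mat m := fun g i j => g (i, j)
  have hφ : Function.Injective φ := by
    intro g g' h
    funext ⟨i, j⟩
    exact congrFun (congrFun h i) j
  have key := sd_count (ι := Fin m × Fin m) (J := Fin m) (fun q => (q.1:ℕ) ≤ q.2) (fun q => (q.2:ℕ) + 1 = m)
    (fun q => (q.1 : ℕ) = 0) (fun l q => l = q.1) n k p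
  have hS : {M : Mat m | (⟨m, M⟩ : SMat) ∈ RMset₃ n k p} = Set.image φ (sdS (ι := Fin m × Fin m) (J := Fin m)
     (fun q => (q.1:ℕ) ≤ q.2) (fun q => (q.2:ℕ) + 1 = m)
    (fun q => (q.1 : ℕ) = 0) (fun l q => l = q.1) n k p) := by
    have hsub : ∀ g, (⟨m, φ g⟩ : SMat) ∈ RMset₃ n k p ↔ g ∈ sdS (ι := Fin m × Fin m) (J := Fin m)
       (fun q => (q.1:ℕ) ≤ q.2) (fun q => (q.2:ℕ) + 1 = m)
       (fun q => (q.1 : ℕ) = 0) (fun l q => l = q.1) n k p := by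
      intro g
      simp only [RMset₃, RMset₂, RMset, sdS, Set.mem_ofPred_eq, UT, rowNonzero, msize, lastColSum, firstRowSum,
        Fintype.sum_prod_type, φ, Prod.forall, Prod.exists, not_le]
      constructor
      · rintro ⟨⟨⟨h1, h2, h3⟩, h4⟩, h5⟩
        refine ⟨h1, fun l => ?_, h3, h4, h5⟩
        obtain ⟨j, hj⟩ := h2 l
        exact ⟨l, j, rfl, hj⟩
      · rintro ⟨h1, h2, h3, h4, h5⟩
        refine ⟨⟨⟨h1, fun l => ?_, h3⟩, h4⟩, h5⟩
        obtain ⟨i, j, rfl, hj⟩ := h2 l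
        exact ⟨j, hj⟩
    ext M
    constructor
    · intro hM
      exact ⟨fun q => M q.1 q.2, (hsub _).1 hM, rfl⟩
    · rintro ⟨g, hg, rfl⟩
      exact (hsub g).2 hg
  rw [hS, Set.ncard_image_of_injective _ hφ]
  refine ⟨key.1.image _, ?_⟩
  rw [key.2, sdI_R]
  rfl

theorem sd_countM (m n k p : ℕ) :
    {M : Mat m | (⟨m, M⟩ : SMat) ∈ Mset₃ n k p}.Finite ∧
    ({M : Mat m | (⟨m, M⟩ : SMat) ∈ Mset₃ n k p}.ncard : ℤ) =
      (((sdGM (sda n) (sdb n) (sdc n) (sdd n) m).coeff p).coeff n).coeff k := by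
  let φ : (Fin m × Fin m → ℕ) → Mat m := fun g i j => if (i:ℕ) + j + 1 ≤ m then g (i, j) else g (j.rev, i.rev)
  let S := sdS (ι := Fin m × Fin m) (J := Fin m) (fun q => (q.1:ℕ) ≤ q.2 ∧ (q.1:ℕ) + q.2 + 1 ≤ m) (fun q => (q.1:ℕ) = 0)
    (fun q => (q.1 : ℕ) + q.2 + 1 = m) (fun l q => l = q.2 ∨ l = q.1.rev) n k p
  have key := sd_count (ι := Fin m × Fin m) (J := Fin m) (fun q => (q.1:ℕ) ≤ q.2 ∧ (q.1:ℕ) + q.2 + 1 ≤ m) (fun q => (q.1:ℕ) = 0)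
    (fun q => (q.1 : ℕ) + q.2 + 1 = m) (fun l q => l = q.2 ∨ l = q.1.rev) n k p
  have hφ : Set.InjOn φ S := by
    intro g hg g' hg' h
    funext ⟨i, j⟩
    by_cases hT : (i:ℕ) + j + 1 ≤ m
    · have := congrFun (congrFun h i) j
      simp only [φ, if_pos hT] at this
      exact this
    · rw [hg.1 _ (fun h => hT h.2), hg'.1 _ (fun h => hT h.2)]
  have hdual : ∀ g, SelfDual (φ g) := by
    intro g
    funext i j
    have hi := i.2
    have hj := j.2
    simp only [φ, dual, Fin.val_rev, Fin.rev_rev]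
    split_ifs with h1 h2 h2
    · have e1 : j.rev = i := by ext; rw [Fin.val_rev]; omega
      have e2 : i.rev = j := by ext; rw [Fin.val_rev]; omega
      rw [e1, e2]
    · rfl
    · rfl
    · omega
  have hfirst : ∀ g, firstRowSum (φ g) = ∑ q : Fin m × Fin m, if (q.1:ℕ) = 0 then g q else 0 := by
    intro g
    rw [Fintype.sum_prod_type]
    refine Finset.sum_congr rfl fun i _ => Finset.sum_congr rfl fun j _ => ?_
    by_cases h : (i:ℕ) = 0
    · have := j.2
      rw [if_pos h, if_pos h]
      exact if_pos (by omega)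
    · rw [if_neg h, if_neg h]
  have hdiag : ∀ g, diagSum (φ g) = ∑ q : Fin m × Fin m, if (q.1:ℕ) + q.2 + 1 = m then g q else 0 := by
    intro g
    rw [Fintype.sum_prod_type]
    refine Finset.sum_congr rfl fun i _ => Finset.sum_congr rfl fun j _ => ?_
    by_cases h : (i:ℕ) + j + 1 = m
    · rw [if_pos h, if_pos h]
      exact if_pos (by omega)
    · rw [if_neg h, if_neg h]
  have hred : ∀ g : Fin m × Fin m → ℕ, (∀ q : Fin m × Fin m, ¬ ((q.1:ℕ) ≤ q.2 ∧ (q.1:ℕ) + q.2 + 1 ≤ m) → g q = 0) →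
      reducedSize (φ g) = ∑ q, g q := by
    intro g hg
    rw [Fintype.sum_prod_type]
    refine Finset.sum_congr rfl fun i _ => Finset.sum_congr rfl fun j _ => ?_
    by_cases h : (i:ℕ) + j + 1 ≤ m
    · rw [if_pos h]
      exact if_pos h
    · rw [if_neg h, hg _ (fun h' => h h'.2)]
  have hsub : ∀ g, (∀ q : Fin m × Fin m, ¬ ((q.1:ℕ) + q.2 + 1 ≤ m) → g q = 0) → 
      ((⟨m, φ g⟩ : SMat) ∈ Mset₃ n k p ↔ g ∈ S) := by
    intro g hg
    have hUT : UT (φ g) ↔ (∀ q : Fin m × Fin m, ¬ ((q.1:ℕ) ≤ q.2 ∧ (q.1:ℕ) + q.2 + 1 ≤ m) → g q = 0) := by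
      constructor
      · rintro h ⟨i, j⟩ hq
        by_cases h' : (i:ℕ) + j + 1 ≤ m
        · have := h i j (by simp only [not_and] at hq; by_contra h2; exact hq (by simpa using h2) h')
          simp only [φ, if_pos h'] at this
          exact this
        · exact hg _ h'
      · intro h i j hij
        have hi := i.2
        have hj := j.2
        simp only [φ]
        split_ifs with h'
        · exact h _ (by simp only; omega)
        · exact h _ (by simp only [Fin.val_rev]; omega)
    have hcol : (∀ j, colNonzero (φ g) j) ↔ ∀ l : Fin m, ∃ q : Fin m × Fin m, (l = q.2 ∨ l = q.1.rev) ∧ g q ≠ 0 := by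
      refine forall_congr' fun l => ?_
      constructor
      · rintro ⟨i, hi⟩
        simp only [φ] at hi
        split_ifs at hi with h
        · exact ⟨(i, l), Or.inl rfl, hi⟩
        · exact ⟨(l.rev, i.rev), Or.inr (by simp), hi⟩
      · rintro ⟨⟨i, j⟩, h, h'⟩
        have hT : (i:ℕ) + j + 1 ≤ m := by
          by_contra h2; exact h' (hg _ h2)
        have hij : φ g i j ≠ 0 := by
          simp only [φ, if_pos hT]
          exact h'
        rcases h with rfl | rfl
        · exact ⟨i, hij⟩
        · refine ⟨j.rev, ?_⟩
          have := congrFun (congrFun (hdual g) i) j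
          rw [this] at hij
          exact hij
    have hrow : (∀ j, colNonzero (φ g) j) → ∀ i, rowNonzero (φ g) i := by
      intro h i
      obtain ⟨j, hj⟩ := h i.rev
      rw [congrFun (congrFun (hdual g) j) i.rev] at hj
      refine ⟨j.rev, ?_⟩
      simpa [dual] using hj
    constructor
    · rintro ⟨⟨⟨⟨h1, h2, h3⟩, h4, h5⟩, h6⟩, h7⟩
      refine ⟨hUT.1 h1, hcol.1 h3, ?_, ?_, ?_⟩
      · rw [← hred g (hUT.1 h1)]; exact h5
      · rw [← hfirst g]; exact h6
      · rw [← hdiag g]; exact h7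
    · rintro ⟨h1, h2, h3, h4, h5⟩
      refine ⟨⟨⟨⟨hUT.2 h1, hrow (hcol.2 h2), hcol.2 h2⟩, hdual g, ?_⟩, ?_⟩, ?_⟩
      · exact (hred g h1).trans h3
      · exact (hfirst g).trans h4
      · exact (hdiag g).trans h5
  have hS : {M : Mat m | (⟨m, M⟩ : SMat) ∈ Mset₃ n k p} = Set.image φ S := by
    ext M
    constructor
    · intro hM
      have hM' : SelfDual M := hM.1.1.2.1
      have e : φ (fun q => if (q.1:ℕ) + q.2 + 1 ≤ m then M q.1 q.2 else 0) = M := by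
        funext i j
        have hi := i.2
        have hj := j.2
        simp only [φ]
        split_ifs with h1 h2
        · rfl
        · rw [congrFun (congrFun hM' i) j]; rfl
        · simp only [Fin.val_rev] at h2; omega
      refine ⟨fun q => if (q.1:ℕ) + q.2 + 1 ≤ m then M q.1 q.2 else 0, (hsub _ ?_).1 ?_, e⟩
      · intro q hq
        exact if_neg hq
      · rw [e]; exact hM
    · rintro ⟨g, hg, rfl⟩
      exact (hsub g (fun q hq => hg.1 q (fun h => hq h.2))).2 hg
  rw [hS, Set.InjOn.ncard_image hφ]
  refine ⟨key.1.image _, ?_⟩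
  rw [key.2, sdI_M]
  rfl

theorem sd_fiber (S : Set SMat) (K : ℕ) (hf : ∀ m, {M : Mat m | (⟨m, M⟩ : SMat) ∈ S}.Finite)
    (hK : ∀ m, K ≤ m → {M : Mat m | (⟨m, M⟩ : SMat) ∈ S}.ncard = 0) :
    S.ncard = ∑ m ∈ range K, {M : Mat m | (⟨m, M⟩ : SMat) ∈ S}.ncard := by
  have : S = ((range K).sigma (fun m => (hf m).toFinset) : Finset SMat) := by
    ext ⟨m, M⟩
    simp only [Finset.coe_sigma, Set.mem_sigma_iff, Finset.mem_coe, Finset.mem_range, Set.Finite.mem_toFinset, Set.mem_ofPred_eq]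
    constructor
    · intro h
      refine ⟨?_, h⟩
      by_contra hm
      have := hK m (by omega)
      rw [Set.ncard_eq_zero (hf m)] at this
      exact Set.notMem_empty M (this ▸ h)
    · exact fun h => h.2
  conv_lhs => rw [this]
  rw [Set.ncard_coe_finset, Finset.card_sigma]
  refine Finset.sum_congr rfl fun m _ => ?_
  rw [Set.ncard_eq_toFinset_card _ (hf m)]

theorem sd_main (n k p : ℕ) (hp : 1 ≤ p) :
    (Mset₃ n k p).ncard = (RMset₃ n k p).ncard := by
  have ha : sdx ∣ sda n - 1 := sdv_dvd n _
  have hb : sdx ∣ sdb n - 1 := (Dvd.intro _ rfl).trans (sdv_dvd n _)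
  have hM := sd_fiber (Mset₃ n k p) (2*n+4) (fun m => (sd_countM m n k p).1) (by
    intro m hm
    have h := (sd_countM m n k p).2
    obtain ⟨m, rfl⟩ : ∃ m', m = m' + 2 := ⟨m - 2, by omega⟩
    rw [sd_coeff_dvd _ n k p ((pow_dvd_pow _ (by omega)).trans (sdGM_dvd sdx _ _ _ _ ha hb m))] at h
    exact_mod_cast h)
  have hR := sd_fiber (RMset₃ n k p) (2*n+4) (fun m => (sd_countR m n k p).1) (by
    intro m hm
    have h := (sd_countR m n k p).2
    obtain ⟨m, rfl⟩ : ∃ m', m = m' + 1 := ⟨m - 1, by omega⟩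
    rw [sd_coeff_dvd _ n k p ((pow_dvd_pow _ (by omega)).trans (sdGR_dvd sdx _ _ _ _ ha hb m))] at h
    exact_mod_cast h)
  have h := sd_coeff_dvd _ n k p (sd_algebra sdx (sda n) (sdb n) (sdc n) (sdd n) n ha hb)
  obtain ⟨E, hE⟩ : ∃ E : Polynomial (Polynomial ℤ), (∑ j ∈ range (2*n+3), ∏ i ∈ range j, (sda n ^ i * sdb n - 1)) - 1 = Polynomial.C E := by
    refine ⟨(∑ j ∈ range (2*n+3), ∏ i ∈ range j, ((∑ v ∈ range (n+1), Polynomial.X ^ v) ^ i * (∑ v ∈ range (n+1), (Polynomial.X * Polynomial.C Polynomial.X) ^ v) - 1)) - 1, ?_⟩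
    simp only [sda, sdb, sdv, sdx, sdy, map_sum, map_prod, map_sub, map_mul, map_pow, map_one]
  rw [hE] at h
  simp only [Polynomial.coeff_sub, Polynomial.finsetSum_coeff, Polynomial.coeff_C, if_neg (show p ≠ 0 by omega), sub_zero] at h
  have : ((Mset₃ n k p).ncard : ℤ) = (RMset₃ n k p).ncard := by
    rw [hM, hR]
    push_cast
    simp only [(sd_countM _ n k p).2, (sd_countR _ n k p).2]
    linarith
  exact_mod_cast this

end SD

/-- `|M(n,k,p)| = |RM(n,k,p)|` for all `n ≥ 1`, `k ≥ 0`, `p ≥ 1`. -/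
theorem stmt7 (n k p : ℕ) (hn : 1 ≤ n) (hp : 1 ≤ p) :
    (Mset₃ n k p).ncard = (RMset₃ n k p).ncard := by
  exact sd_main n k p hp
end

section
/- For every n ≥ 1, the number of self-dual Fishburn matrices of reduced size n is twice the number of row-Fishburn matrices of size n; that is, |M(n)| = 2|RM(n)|. -/
open Finset

namespace FB

/-! ### Counting sized sets -/

noncomputable def cnt {α : Type} (S : Set α) (s : α → ℕ) (n : ℕ) : ℕ∞ :=
  {a | a ∈ S ∧ s a = n}.encard

lemma cnt_bij {α β : Type} {S : Set α} {T : Set β} {s : α → ℕ} {t : β → ℕ}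
    (f : α → β) (g : β → α) (hf : ∀ a ∈ S, f a ∈ T) (hg : ∀ b ∈ T, g b ∈ S)
    (hgf : ∀ a ∈ S, g (f a) = a) (hfg : ∀ b ∈ T, f (g b) = b)
    (hs : ∀ a ∈ S, t (f a) = s a) (n : ℕ) : cnt S s n = cnt T t n := by
  unfold cnt
  have h : {b | b ∈ T ∧ t b = n} = f '' {a | a ∈ S ∧ s a = n} := by
    ext b
    constructor
    · rintro ⟨hb, h⟩
      exact ⟨g b, ⟨hg b hb, by rw [← hs _ (hg b hb), hfg b hb, h]⟩, hfg b hb⟩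
    · rintro ⟨a, ⟨ha, h⟩, rfl⟩
      exact ⟨hf a ha, by rw [hs a ha, h]⟩
  rw [h, Set.InjOn.encard_image]
  rintro a ⟨ha, _⟩ b ⟨hb, _⟩ hab
  rw [← hgf a ha, ← hgf b hb, hab]

lemma cnt_split {α : Type} (S : Set α) (s : α → ℕ) (P : α → Prop) (n : ℕ) :
    cnt S s n = cnt {a | a ∈ S ∧ P a} s n + cnt {a | a ∈ S ∧ ¬ P a} s n := by
  unfold cnt
  rw [← Set.encard_union_eq]
  · congr 1
    ext a
    simp only [Set.mem_ofPred_eq, Set.mem_union]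
    tauto
  · rw [Set.disjoint_left]
    rintro a ⟨⟨_, h⟩, _⟩ ⟨⟨_, h'⟩, _⟩
    exact h' h

lemma encard_biUnion {ι α : Type} (I : Finset ι) (f : ι → Set α)
    (h : ∀ i ∈ I, ∀ j ∈ I, i ≠ j → Disjoint (f i) (f j)) :
    (⋃ i ∈ I, f i).encard = ∑ i ∈ I, (f i).encard := by
  classical
  induction I using Finset.induction_on with
  | empty => simp
  | insert a I ha ih =>
    rw [Finset.set_biUnion_insert, Finset.sum_insert ha, Set.encard_union_eq, ih]
    · intro i hi j hj
      exact h i (Finset.mem_insert_of_mem hi) j (Finset.mem_insert_of_mem hj)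
    · rw [Set.disjoint_iUnion₂_right]
      intro i hi
      exact h a (Finset.mem_insert_self _ _) i (Finset.mem_insert_of_mem hi)
        (by rintro rfl; exact ha hi)

lemma cnt_prod {α β : Type} (S : Set α) (T : Set β) (s : α → ℕ) (t : β → ℕ) (n : ℕ) :
    cnt (S ×ˢ T) (fun p => s p.1 + t p.2) n
      = ∑ q ∈ HasAntidiagonal.antidiagonal n, cnt S s q.1 * cnt T t q.2 := by
  unfold cnt
  have h : {p : α × β | p ∈ S ×ˢ T ∧ s p.1 + t p.2 = n} =
      ⋃ q ∈ HasAntidiagonal.antidiagonal n, {a | a ∈ S ∧ s a = q.1} ×ˢ {b | b ∈ T ∧ t b = q.2} := by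
    ext ⟨a, b⟩
    simp only [Set.mem_prod, Set.mem_ofPred_eq, Set.mem_iUnion, HasAntidiagonal.mem_antidiagonal,
      exists_prop, Prod.exists]
    constructor
    · rintro ⟨⟨ha, hb⟩, h⟩
      exact ⟨s a, t b, h, ⟨ha, rfl⟩, hb, rfl⟩
    · rintro ⟨x, y, h, ⟨ha, rfl⟩, hb, rfl⟩
      exact ⟨⟨ha, hb⟩, h⟩
  rw [h, encard_biUnion]
  · simp_rw [Set.encard_prod]
  · rintro ⟨i, i'⟩ _ ⟨j, j'⟩ _ hne
    rw [Set.disjoint_left]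
    rintro ⟨a, b⟩ ⟨⟨_, h1⟩, _, h2⟩ ⟨⟨_, h3⟩, _, h4⟩
    apply hne
    simp only at h1 h2 h3 h4
    rw [← h1, ← h2, ← h3, ← h4]

/-! ### Vectors -/

def Vec (d : ℕ) : Set (ℕ → ℕ) := {v | ∀ i, d ≤ i → v i = 0}

def vs (d : ℕ) (v : ℕ → ℕ) : ℕ := ∑ i ∈ Finset.range d, v i

def VecZ (d : ℕ) : Set (ℕ → ℕ) := {v | v ∈ Vec d ∧ ∃ i, v i ≠ 0}

lemma vs_zero (d : ℕ) : vs d (fun _ => 0) = 0 := by simp [vs]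

lemma cnt_single {α : Type} (S : Set α) (s : α → ℕ) (n : ℕ) (x : α) (hS : ∀ a, a ∈ S ↔ a = x)
    (hx : s x = 0) : cnt S s n = if n = 0 then 1 else 0 := by
  unfold cnt
  split_ifs with h
  · rw [show {a | a ∈ S ∧ s a = n} = {x} by
      ext a
      simp only [Set.mem_ofPred_eq, hS, Set.mem_singleton_iff, and_iff_left_iff_imp]
      rintro rfl; rw [hx, h]]
    simp
  · rw [show {a | a ∈ S ∧ s a = n} = ∅ by
      ext a
      simp only [Set.mem_ofPred_eq, hS, Set.mem_empty_iff_false, iff_false, not_and]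
      rintro rfl; rw [hx]; exact Ne.symm h]
    simp

lemma cnt_vec (d n : ℕ) :
    cnt (Vec d) (vs d) n = cnt (VecZ d) (vs d) n + if n = 0 then 1 else 0 := by
  rw [cnt_split (Vec d) (vs d) (fun v => ∃ i, v i ≠ 0)]
  congr 1
  apply cnt_single _ _ _ (fun _ => 0) _ (vs_zero d)
  intro a
  constructor
  · rintro ⟨_, h⟩
    funext i
    by_contra h'
    exact h ⟨i, h'⟩
  · rintro rfl
    exact ⟨fun _ _ => rfl, by simp⟩

lemma cnt_vecZ_zero (d : ℕ) : cnt (VecZ d) (vs d) 0 = 0 := by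
  unfold cnt
  rw [Set.encard_eq_zero]
  ext v
  simp only [Set.mem_ofPred_eq, Set.mem_empty_iff_false, iff_false, not_and]
  rintro ⟨hv, i, hi⟩ h
  simp only [vs, Finset.sum_eq_zero_iff, Finset.mem_range] at h
  by_cases hid : i < d
  · exact hi (h i hid)
  · exact hi (hv i (by omega))

def fcons {β : Type} (v : β) (F : ℕ → β) : ℕ → β
  | 0 => v
  | j + 1 => F j

@[simp] lemma fcons_zero {β : Type} (v : β) (F : ℕ → β) : fcons v F 0 = v := rfl
@[simp] lemma fcons_succ {β : Type} (v : β) (F : ℕ → β) (j : ℕ) : fcons v F (j + 1) = F j := rfl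

lemma fcons_eta {β : Type} (F : ℕ → β) : fcons (F 0) (fun j => F (j + 1)) = F := by
  funext j
  cases j <;> rfl

/-! ### Row-Fishburn side -/

def Rset (c : ℕ) : Set (ℕ × (ℕ → ℕ → ℕ)) :=
  {t | (∀ j i, ¬ (j < t.1 ∧ i ≤ c + j) → t.2 j i = 0) ∧ ∀ j < t.1, ∃ i, t.2 j i ≠ 0}

def rsize (c : ℕ) (t : ℕ × (ℕ → ℕ → ℕ)) : ℕ := ∑ j ∈ Finset.range t.1, vs (c + j + 1) (t.2 j)

lemma cnt_R (c n : ℕ) : cnt (Rset c) (rsize c) n = (if n = 0 then 1 else 0) +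
    ∑ q ∈ HasAntidiagonal.antidiagonal n,
      cnt (VecZ (c + 1)) (vs (c + 1)) q.1 * cnt (Rset (c + 1)) (rsize (c + 1)) q.2 := by
  rw [← cnt_prod, cnt_split _ _ (fun t => t.1 = 0)]
  congr 1
  · apply cnt_single _ _ _ (0, fun _ _ => 0)
    · rintro ⟨m, F⟩
      constructor
      · rintro ⟨⟨h1, h2⟩, h⟩
        simp only at h h1
        subst h
        simp only [Prod.mk.injEq, true_and]
        funext j i
        exact h1 j i (by omega)
      · intro h
        simp only [Prod.mk.injEq] at h
        obtain ⟨rfl, rfl⟩ := h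
        exact ⟨⟨fun _ _ _ => rfl, fun j hj => absurd hj (by simp)⟩, rfl⟩
    · simp [rsize]
  · symm
    apply cnt_bij (fun p => (p.2.1 + 1, fcons p.1 p.2.2))
      (fun t => (t.2 0, (t.1 - 1, fun j => t.2 (j + 1))))
    · rintro ⟨v, m, F⟩ ⟨⟨hv, hz⟩, hF, hn⟩
      simp only at hv hz hF hn
      refine ⟨⟨?_, ?_⟩, by simp⟩
      · intro j i h
        cases j with
        | zero => exact hv i (by simp at h; omega)
        | succ j => exact hF j i (by simp at h ⊢; omega)
      · intro j hj
        cases j with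
        | zero => exact hz
        | succ j => exact hn j (by simp at hj ⊢; omega)
    · rintro ⟨m, F⟩ ⟨⟨h1, h2⟩, h⟩
      simp only at h1 h2 h
      refine ⟨⟨?_, h2 0 (by omega)⟩, ?_, ?_⟩
      · intro i hi
        exact h1 0 i (by omega)
      · intro j i hi
        exact h1 (j + 1) i (by simp at hi ⊢; omega)
      · intro j hj
        exact h2 (j + 1) (by simp at hj ⊢; omega)
    · rintro ⟨v, m, F⟩ _
      rfl
    · rintro ⟨m, F⟩ ⟨⟨h1, h2⟩, h⟩
      simp only at h
      simp only [fcons_eta, Prod.mk.injEq, and_true]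
      omega
    · rintro ⟨v, m, F⟩ _
      simp only [rsize]
      rw [Finset.sum_range_succ', add_comm]
      congr 1
      apply Finset.sum_congr rfl
      intro j _
      rw [fcons_succ]
      congr 1
      omega

/-! ### Self-dual side -/

@[ext] structure T where
  k : ℕ
  V : ℕ → ℕ → ℕ
  W : ℕ → ℕ → ℕ
  u : ℕ → ℕ

def T.row (t : T) (i : ℕ) : Prop := (∃ l, t.V l i ≠ 0) ∨ (∃ l, t.W l i ≠ 0) ∨ t.u i ≠ 0

structure Good (c : ℕ) (t : T) : Prop where
  hV : ∀ j i, ¬ (j < t.k ∧ i ≤ c + j) → t.V j i = 0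
  hW : ∀ j i, ¬ (j < t.k ∧ i ≤ c + j) → t.W j i = 0
  hu : ∀ i, c + t.k < i → t.u i = 0
  nV : ∀ j < t.k, ∃ i, t.V j i ≠ 0
  nW : ∀ j < t.k, (∃ i, t.W j i ≠ 0) ∨ t.row (c + j)

def Tset (c : ℕ) : Set T := {t | Good c t}

def tsize (c : ℕ) (t : T) : ℕ :=
  ∑ j ∈ Finset.range t.k, (vs (c + j + 1) (t.V j) + vs (c + j + 1) (t.W j)) + vs (c + t.k + 1) t.u

def tcons (v w : ℕ → ℕ) (t : T) : T := ⟨t.k + 1, fcons v t.V, fcons w t.W, t.u⟩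
def ttail (t : T) : T := ⟨t.k - 1, fun j => t.V (j + 1), fun j => t.W (j + 1), t.u⟩

def del (c : ℕ) (f : ℕ → ℕ) (i : ℕ) : ℕ := if i < c then f i else f (i + 1)
def ins (c : ℕ) (f : ℕ → ℕ) (i : ℕ) : ℕ := if i < c then f i else if i = c then 0 else f (i - 1)

lemma del_ins (c : ℕ) (f : ℕ → ℕ) : del c (ins c f) = f := by
  funext i
  unfold del ins
  split_ifs <;> first | rfl | omega

lemma ins_del (c : ℕ) (f : ℕ → ℕ) (h : f c = 0) : ins c (del c f) = f := by
  funext i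
  rcases lt_trichotomy i c with h1 | rfl | h1
  · simp [ins, del, h1]
  · simp [ins, h]
  · obtain ⟨j, rfl⟩ : ∃ j, i = j + 1 := ⟨i - 1, by omega⟩
    have h2 : ¬ j + 1 < c := by omega
    have h3 : ¬ j + 1 = c := by omega
    have h4 : ¬ j < c := by omega
    simp [ins, del, h2, h3, h4]

lemma vs_del (c d : ℕ) (hd : c ≤ d) (f : ℕ → ℕ) (h : f c = 0) : vs d (del c f) = vs (d + 1) f := by
  induction d, hd using Nat.le_induction with
  | base =>
    unfold vs
    rw [Finset.sum_range_succ, h, add_zero]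
    apply Finset.sum_congr rfl
    intro i hi
    simp [del, Finset.mem_range.1 hi]
  | succ d hd ih =>
    unfold vs at *
    rw [Finset.sum_range_succ, ih, Finset.sum_range_succ _ (d + 1)]
    congr 1
    simp [del, Nat.not_lt.2 hd]

def tdel (c : ℕ) (t : T) : T := ⟨t.k, fun j => del c (t.V j), fun j => del c (t.W j), del c t.u⟩
def tins (c : ℕ) (t : T) : T := ⟨t.k, fun j => ins c (t.V j), fun j => ins c (t.W j), ins c t.u⟩

lemma tdel_tins (c : ℕ) (t : T) : tdel c (tins c t) = t := by
  ext <;> simp [tdel, tins, del_ins]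

lemma not_row {t : T} {c : ℕ} (h : ¬ t.row c) :
    (∀ l, t.V l c = 0) ∧ (∀ l, t.W l c = 0) ∧ t.u c = 0 := by
  unfold T.row at h
  push Not at h
  exact h

lemma tins_tdel (c : ℕ) (t : T) (h : ¬ t.row c) : tins c (tdel c t) = t := by
  obtain ⟨h1, h2, h3⟩ := not_row h
  simp only [tdel, tins]
  simp [ins_del, h1, h2, h3]

lemma tsize_tdel (c : ℕ) (t : T) (h : ¬ t.row c) : tsize c (tdel c t) = tsize (c + 1) t := by
  obtain ⟨h1, h2, h3⟩ := not_row h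
  simp only [tdel, tsize]
  congr 1
  · apply Finset.sum_congr rfl
    intro j _
    rw [vs_del _ _ (by omega) _ (h1 j), vs_del _ _ (by omega) _ (h2 j)]
    congr 2 <;> omega
  · rw [vs_del _ _ (by omega) _ h3]
    congr 1; omega

lemma row_tdel (c i : ℕ) (t : T) (hi : c ≤ i) : (tdel c t).row i ↔ t.row (i + 1) := by
  simp [T.row, tdel, del, Nat.not_lt.2 hi]

lemma row_tins (c i : ℕ) (t : T) (hi : c ≤ i) : (tins c t).row (i + 1) ↔ t.row i := by
  rw [← row_tdel c i _ hi, tdel_tins]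

lemma not_row_tins (c : ℕ) (t : T) : ¬ (tins c t).row c := by
  simp [T.row, tins, ins]

lemma del_ne {c : ℕ} {f : ℕ → ℕ} (h : f c = 0) (hf : ∃ i, f i ≠ 0) : ∃ i, del c f i ≠ 0 := by
  by_contra h'
  push Not at h'
  obtain ⟨i, hi⟩ := hf
  apply hi
  rw [← ins_del c f h]
  unfold ins
  split_ifs <;> simp [h']

lemma ins_ne {c : ℕ} {f : ℕ → ℕ} (hf : ∃ i, f i ≠ 0) : ∃ i, ins c f i ≠ 0 := by
  by_contra h'
  push Not at h'
  obtain ⟨i, hi⟩ := hf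
  apply hi
  rw [← del_ins c f]
  unfold del
  split_ifs <;> simp [h']

lemma good_tdel {c : ℕ} {t : T} (ht : Good (c + 1) t) (h : ¬ t.row c) : Good c (tdel c t) := by
  obtain ⟨h1, h2, h3⟩ := not_row h
  refine ⟨?_, ?_, ?_, ?_, ?_⟩
  · intro j i hi
    simp only [tdel, del] at hi ⊢
    split_ifs <;> exact ht.hV _ _ (by omega)
  · intro j i hi
    simp only [tdel, del] at hi ⊢
    split_ifs <;> exact ht.hW _ _ (by omega)
  · intro i hi
    simp only [tdel, del] at hi ⊢
    rw [if_neg (by omega)]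
    exact ht.hu _ (by omega)
  · intro j hj
    exact del_ne (h1 j) (ht.nV j hj)
  · intro j hj
    rw [row_tdel _ _ _ (by omega)]
    rcases ht.nW j hj with h | h
    · exact Or.inl (del_ne (h2 j) h)
    · right
      convert h using 1
      omega

lemma good_tins {c : ℕ} {t : T} (ht : Good c t) : Good (c + 1) (tins c t) := by
  refine ⟨?_, ?_, ?_, ?_, ?_⟩
  · intro j i hi
    simp only [tins, ins] at hi ⊢
    split_ifs
    · exact ht.hV _ _ (by omega)
    · rfl
    · exact ht.hV _ _ (by omega)
  · intro j i hi
    simp only [tins, ins] at hi ⊢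
    split_ifs
    · exact ht.hW _ _ (by omega)
    · rfl
    · exact ht.hW _ _ (by omega)
  · intro i hi
    simp only [tins, ins] at hi ⊢
    rw [if_neg (by omega), if_neg (by omega)]
    exact ht.hu _ (by omega)
  · intro j hj
    exact ins_ne (ht.nV j hj)
  · intro j hj
    rw [show c + 1 + j = (c + j) + 1 by omega, row_tins _ _ _ (by omega)]
    rcases ht.nW j hj with h | h
    · exact Or.inl (ins_ne h)
    · exact Or.inr h

lemma tsize_tcons (c : ℕ) (v w : ℕ → ℕ) (t : T) :
    tsize c (tcons v w t) = vs (c + 1) v + (vs (c + 1) w + tsize (c + 1) t) := by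
  simp only [tsize, tcons]
  rw [Finset.sum_range_succ']
  simp only [fcons_zero, fcons_succ, add_zero]
  have : ∀ j, c + (j + 1) + 1 = c + 1 + j + 1 := by intro j; omega
  simp only [this]
  omega

lemma row_tcons (v w : ℕ → ℕ) (t : T) (i : ℕ) :
    (tcons v w t).row i ↔ v i ≠ 0 ∨ w i ≠ 0 ∨ t.row i := by
  have hf : ∀ (v : ℕ → ℕ) (F : ℕ → ℕ → ℕ), (∃ l, fcons v F l i ≠ 0) ↔ v i ≠ 0 ∨ ∃ l, F l i ≠ 0 := by
    intro v F
    constructor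
    · rintro ⟨l, hl⟩
      cases l with
      | zero => exact Or.inl hl
      | succ l => exact Or.inr ⟨l, hl⟩
    · rintro (h | ⟨l, hl⟩)
      · exact ⟨0, h⟩
      · exact ⟨l + 1, hl⟩
  simp only [T.row, tcons, hf]
  tauto

lemma tcons_ttail (t : T) (h : t.k ≠ 0) : tcons (t.V 0) (t.W 0) (ttail t) = t := by
  simp only [tcons, ttail, fcons_eta]
  ext
  · simp; omega
  all_goals rfl

lemma good_tcons {c : ℕ} {v w : ℕ → ℕ} {t : T} : Good c (tcons v w t) ↔
    v ∈ VecZ (c + 1) ∧ w ∈ Vec (c + 1) ∧ Good (c + 1) t ∧ ((∃ i, w i ≠ 0) ∨ v c ≠ 0 ∨ t.row c) := by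
  constructor
  · intro h
    refine ⟨⟨?_, h.nV 0 (by simp [tcons])⟩, ?_, ⟨?_, ?_, ?_, ?_, ?_⟩, ?_⟩
    · intro i hi
      exact h.hV 0 i (by omega)
    · intro i hi
      exact h.hW 0 i (by omega)
    · intro j i hi
      exact h.hV (j + 1) i (by simp [tcons]; omega)
    · intro j i hi
      exact h.hW (j + 1) i (by simp [tcons]; omega)
    · intro i hi
      exact h.hu i (by simp [tcons]; omega)
    · intro j hj
      exact h.nV (j + 1) (by simp [tcons]; omega)
    · intro j hj
      rcases h.nW (j + 1) (by simp [tcons]; omega) with h' | h'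
      · exact Or.inl h'
      · rw [row_tcons] at h'
        have e : c + (j + 1) = c + 1 + j := by omega
        rw [e] at h'
        rcases h' with h' | h' | h'
        · exact absurd (h.hV 0 (c + 1 + j) (by omega)) h'
        · exact absurd (h.hW 0 (c + 1 + j) (by omega)) h'
        · exact Or.inr h'
    · have := h.nW 0 (by simp [tcons])
      rw [row_tcons] at this
      rcases this with h' | h' | h' | h'
      · exact Or.inl h'
      · exact Or.inr (Or.inl h')
      · exact Or.inl ⟨_, h'⟩
      · exact Or.inr (Or.inr h')
  · rintro ⟨⟨hv, hvz⟩, hw, ht, hr⟩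
    refine ⟨?_, ?_, ?_, ?_, ?_⟩
    · intro j i hi
      simp only [tcons] at hi ⊢
      cases j with
      | zero => exact hv i (by omega)
      | succ j => exact ht.hV j i (by omega)
    · intro j i hi
      simp only [tcons] at hi ⊢
      cases j with
      | zero => exact hw i (by omega)
      | succ j => exact ht.hW j i (by omega)
    · intro i hi
      exact ht.hu i (by simp [tcons] at hi; omega)
    · intro j hj
      cases j with
      | zero => exact hvz
      | succ j => exact ht.nV j (by simp [tcons] at hj; omega)
    · intro j hj
      rw [row_tcons]
      cases j with
      | zero =>
        rcases hr with h | h | h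
        · exact Or.inl h
        · exact Or.inr (Or.inl h)
        · exact Or.inr (Or.inr (Or.inr h))
      | succ j =>
        rcases ht.nW j (by simp [tcons] at hj; omega) with h | h
        · exact Or.inl h
        · right; right; right
          convert h using 1
          omega

noncomputable def xx (c n : ℕ) : ℕ∞ :=
  cnt (Vec c ×ˢ Tset c) (fun p => vs c p.1 + tsize c p.2) n

def Yset (c : ℕ) : Set ((ℕ → ℕ) × (ℕ → ℕ) × T) := VecZ (c + 1) ×ˢ (Vec (c + 1) ×ˢ Tset (c + 1))
def ysize (c : ℕ) (p : (ℕ → ℕ) × (ℕ → ℕ) × T) : ℕ :=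
  vs (c + 1) p.1 + (vs (c + 1) p.2.1 + tsize (c + 1) p.2.2)
def ygood (c : ℕ) (p : (ℕ → ℕ) × (ℕ → ℕ) × T) : Prop :=
  (∃ i, p.2.1 i ≠ 0) ∨ p.1 c ≠ 0 ∨ p.2.2.row c

lemma cnt_ygood (c n : ℕ) : cnt {p | p ∈ Yset c ∧ ygood c p} (ysize c) n =
    cnt {t | t ∈ Tset c ∧ ¬ t.k = 0} (tsize c) n := by
  apply cnt_bij (fun p => tcons p.1 p.2.1 p.2.2) (fun t => (t.V 0, t.W 0, ttail t))
  · rintro ⟨v, w, t⟩ ⟨⟨hv, hw, ht⟩, hg⟩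
    exact ⟨good_tcons.2 ⟨hv, hw, ht, hg⟩, by simp [tcons]⟩
  · rintro t ⟨ht, hk⟩
    rw [Tset, Set.mem_ofPred_eq, ← tcons_ttail t hk, good_tcons] at ht
    obtain ⟨hv, hw, ht, hg⟩ := ht
    exact ⟨⟨hv, hw, ht⟩, hg⟩
  · rintro ⟨v, w, t⟩ _
    rfl
  · rintro t ⟨_, hk⟩
    exact tcons_ttail t hk
  · rintro ⟨v, w, t⟩ _
    exact tsize_tcons c v w t

lemma cnt_ybad (c n : ℕ) : cnt {p | p ∈ Yset c ∧ ¬ ygood c p} (ysize c) n =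
    cnt {p : (ℕ → ℕ) × T | p ∈ Vec c ×ˢ Tset c ∧ ∃ i, p.1 i ≠ 0}
      (fun p => vs c p.1 + tsize c p.2) n := by
  apply cnt_bij (fun p => (p.1, tdel c p.2.2)) (fun p => (p.1, fun _ => 0, tins c p.2))
  · rintro ⟨v, w, t⟩ ⟨⟨⟨hv, hz⟩, hw, ht⟩, hg⟩
    simp only [ygood, not_or, not_not] at hg
    refine ⟨⟨?_, good_tdel ht hg.2.2⟩, hz⟩
    intro i hi
    rcases Nat.eq_or_lt_of_le hi with rfl | h
    · exact hg.2.1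
    · exact hv i h
  · rintro ⟨v, t⟩ ⟨⟨hv, ht⟩, hz⟩
    refine ⟨⟨⟨?_, hz⟩, ?_, good_tins ht⟩, ?_⟩
    · intro i hi
      exact hv i (by omega)
    · intro i _
      rfl
    · simp only [ygood, not_or, not_not]
      exact ⟨by simp, hv c le_rfl, not_row_tins c t⟩
  · rintro ⟨v, w, t⟩ ⟨_, hg⟩
    simp only [ygood, not_or, not_not, not_exists] at hg
    simp only [Prod.mk.injEq, true_and]
    exact ⟨by funext i; rw [hg.1], tins_tdel c t hg.2.2⟩
  · rintro ⟨v, t⟩ _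
    simp only [tdel_tins]
  · rintro ⟨v, w, t⟩ ⟨_, hg⟩
    simp only [ygood, not_or, not_not, not_exists] at hg
    simp only [ysize]
    rw [tsize_tdel _ _ hg.2.2, show w = fun _ => 0 by funext i; rw [hg.1], vs_zero]
    simp [vs, Finset.sum_range_succ, hg.2.1]

lemma xx_rec (c n : ℕ) : xx c n = cnt (Vec (c + 1)) (vs (c + 1)) n +
    ∑ q ∈ HasAntidiagonal.antidiagonal n, cnt (VecZ (c + 1)) (vs (c + 1)) q.1 * xx (c + 1) q.2 := by
  have hY : cnt (Yset c) (ysize c) n =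
    ∑ q ∈ HasAntidiagonal.antidiagonal n, cnt (VecZ (c + 1)) (vs (c + 1)) q.1 * xx (c + 1) q.2 := by
    unfold xx
    rw [← cnt_prod]
    rfl
  rw [← hY, cnt_split (Yset c) _ (ygood c), cnt_ygood, cnt_ybad]
  unfold xx
  rw [cnt_split _ _ (fun p : (ℕ → ℕ) × T => ∃ i, p.1 i ≠ 0), add_comm, ← add_assoc]
  congr 1
  have h1 : cnt {p : (ℕ → ℕ) × T | p ∈ Vec c ×ˢ Tset c ∧ ¬ ∃ i, p.1 i ≠ 0}
      (fun p => vs c p.1 + tsize c p.2) n = cnt (Tset c) (tsize c) n := by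
    apply cnt_bij (fun p => p.2) (fun t => (fun _ => 0, t))
    · rintro ⟨v, t⟩ ⟨⟨_, h⟩, _⟩
      exact h
    · intro t ht
      exact ⟨⟨fun _ _ => rfl, ht⟩, by simp⟩
    · rintro ⟨v, t⟩ ⟨_, h⟩
      simp only [not_exists, not_not] at h
      simp only [Prod.mk.injEq, and_true]
      funext i; rw [h]
    · intro t _
      rfl
    · rintro ⟨v, t⟩ ⟨_, h⟩
      simp only [not_exists, not_not] at h
      simp [vs, h]
  rw [h1, cnt_split _ _ (fun t : T => t.k = 0)]
  congr 1
  apply cnt_bij (fun t => t.u) (fun u => ⟨0, fun _ _ => 0, fun _ _ => 0, u⟩)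
  · rintro t ⟨ht, hk⟩ i hi
    exact ht.hu i (by omega)
  · intro u hu
    exact ⟨⟨fun _ _ _ => rfl, fun _ _ _ => rfl, fun i hi => hu i hi,
      fun j hj => absurd hj (by simp), fun j hj => absurd hj (by simp)⟩, rfl⟩
  · rintro t ⟨ht, hk⟩
    ext
    · exact hk.symm
    · exact (ht.hV _ _ (by omega)).symm
    · exact (ht.hW _ _ (by omega)).symm
    · rfl
  · intro u _
    rfl
  · rintro t ⟨ht, hk⟩
    simp [tsize, hk]

lemma xx_eq (n : ℕ) : ∀ c, xx c n + (if n = 0 then 1 else 0) = 2 * cnt (Rset c) (rsize c) n := by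
  induction n using Nat.strong_induction_on with
  | _ n ih =>
    intro c
    have key : ∑ q ∈ HasAntidiagonal.antidiagonal n, cnt (VecZ (c + 1)) (vs (c + 1)) q.1 *
        (xx (c + 1) q.2 + if q.2 = 0 then 1 else 0) =
        ∑ q ∈ HasAntidiagonal.antidiagonal n, cnt (VecZ (c + 1)) (vs (c + 1)) q.1 *
        (2 * cnt (Rset (c + 1)) (rsize (c + 1)) q.2) := by
      apply Finset.sum_congr rfl
      rintro ⟨i, j⟩ hq
      rw [HasAntidiagonal.mem_antidiagonal] at hq
      simp only at hq ⊢
      rcases Nat.eq_zero_or_pos i with rfl | hi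
      · rw [cnt_vecZ_zero, zero_mul, zero_mul]
      · rw [ih j (by omega)]
    have k2 : ∑ q ∈ HasAntidiagonal.antidiagonal n, cnt (VecZ (c + 1)) (vs (c + 1)) q.1 *
        (if q.2 = 0 then (1 : ℕ∞) else 0) = cnt (VecZ (c + 1)) (vs (c + 1)) n := by
      rw [Finset.sum_eq_single (n, 0)]
      · simp
      · rintro ⟨i, j⟩ hq hne
        rw [HasAntidiagonal.mem_antidiagonal] at hq
        simp only at hq ⊢
        rw [if_neg, mul_zero]
        rintro rfl
        apply hne
        simp_all
      · simp
    simp_rw [mul_add] at key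
    rw [Finset.sum_add_distrib, k2] at key
    rw [xx_rec, cnt_R, cnt_vec, mul_add, Finset.mul_sum]
    simp_rw [mul_left_comm (2 : ℕ∞)]
    rw [← key]
    ring

lemma xx_zero (n : ℕ) : xx 0 n = cnt (Tset 0) (tsize 0) n := by
  apply cnt_bij (fun p => p.2) (fun t => (fun _ => 0, t))
  · rintro ⟨v, t⟩ ⟨_, h⟩
    exact h
  · intro t ht
    exact ⟨fun _ _ => rfl, ht⟩
  · rintro ⟨v, t⟩ ⟨h, _⟩
    simp only [Prod.mk.injEq, and_true]
    funext i; exact (h i (by omega)).symm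
  · intro t _
    rfl
  · rintro ⟨v, t⟩ ⟨_, h⟩
    simp [vs]

/-! ### Matrices as functions on `ℕ × ℕ` -/

def ent {m : ℕ} (M : Mat m) (i j : ℕ) : ℕ := if h : i < m ∧ j < m then M ⟨i, h.1⟩ ⟨j, h.2⟩ else 0

lemma ent_fin {m : ℕ} (M : Mat m) (i j : Fin m) : ent M i j = M i j := by
  simp [ent]

lemma ent_mk {m : ℕ} (P : ℕ → ℕ → ℕ) (i j : ℕ) (hi : i < m) (hj : j < m) :
    ent (m := m) (fun a b => P a b) i j = P i j := by
  simp [ent, hi, hj]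

lemma ent_ut {m : ℕ} {M : Mat m} (h : UT M) (i j : ℕ) (hij : j < i) : ent M i j = 0 := by
  unfold ent
  split_ifs with h'
  · exact h _ _ hij
  · rfl

lemma sum_ent {m : ℕ} (f : ℕ → ℕ → ℕ → ℕ) (M : Mat m) :
    ∑ i : Fin m, ∑ j : Fin m, f i j (M i j) =
      ∑ i ∈ Finset.range m, ∑ j ∈ Finset.range m, f i j (ent M i j) := by
  rw [← Fin.sum_univ_eq_sum_range (fun i => ∑ j ∈ Finset.range m, f i j (ent M i j)) m]
  apply Finset.sum_congr rfl
  intro i _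
  rw [← Fin.sum_univ_eq_sum_range (fun j => f i j (ent M i j)) m]
  apply Finset.sum_congr rfl
  intro j _
  rw [ent_fin]

lemma sum_range_trim (f : ℕ → ℕ) {d m : ℕ} (hd : d ≤ m) (h : ∀ i, d ≤ i → i < m → f i = 0) :
    ∑ i ∈ Finset.range m, f i = ∑ i ∈ Finset.range d, f i := by
  symm
  apply Finset.sum_subset
  · intro i hi
    rw [Finset.mem_range] at *
    omega
  · intro i hi hi'
    rw [Finset.mem_range] at *
    exact h i (by omega) hi

def RMall : Set SMat := {A | UT A.2 ∧ ∀ i, rowNonzero A.2 i}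

def rphi (A : SMat) : ℕ × (ℕ → ℕ → ℕ) :=
  (A.1, fun j i => if j < A.1 ∧ i ≤ j then ent A.2 (A.1 - 1 - j) (A.1 - 1 - i) else 0)

def rpsi (t : ℕ × (ℕ → ℕ → ℕ)) : SMat :=
  ⟨t.1, fun a b => t.2 (t.1 - 1 - a) (t.1 - 1 - b)⟩

lemma cnt_RM (n : ℕ) : cnt RMall (fun A => msize A.2) n = cnt (Rset 0) (rsize 0) n := by
  apply cnt_bij rphi rpsi
  · rintro ⟨m, M⟩ ⟨hU, hR⟩
    simp only at hU hR
    refine ⟨?_, ?_⟩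
    · intro j i h
      simp only [rphi] at h ⊢
      rw [if_neg (by omega)]
    · intro j hj
      simp only [rphi] at hj ⊢
      obtain ⟨b, hb⟩ := hR ⟨m - 1 - j, by omega⟩
      refine ⟨m - 1 - b, ?_⟩
      have hb' := b.2
      replace hb : ent M (m - 1 - j) b ≠ 0 := fun h =>
        hb ((ent_fin M ⟨m - 1 - j, by omega⟩ b).symm.trans h)
      have : ¬ (b : ℕ) < m - 1 - j := fun h => hb (ent_ut hU _ _ h)
      rw [if_pos (by omega), show m - 1 - (m - 1 - (b : ℕ)) = b by omega]
      exact hb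
  · rintro ⟨m, F⟩ ⟨h1, h2⟩
    simp only at h1 h2
    refine ⟨?_, ?_⟩
    · intro a b hab
      have ha := a.2
      simp only [rpsi] at ha ⊢
      exact h1 _ _ (by omega)
    · intro a
      have ha := a.2
      simp only [rpsi] at ha
      obtain ⟨i, hi⟩ := h2 (m - 1 - a) (by omega)
      have hi' : i ≤ m - 1 - a := by
        by_contra hc
        exact hi (h1 _ _ (by omega))
      refine ⟨⟨m - 1 - i, by simp only [rpsi]; omega⟩, ?_⟩
      simp only [rpsi]
      rw [show m - 1 - (m - 1 - i) = i by omega]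
      exact hi
  · rintro ⟨m, M⟩ ⟨hU, hR⟩
    simp only [rphi, rpsi]
    congr 1
    funext a b
    have ha := a.2
    have hb := b.2
    rw [show m - 1 - (m - 1 - (a : ℕ)) = a by omega, show m - 1 - (m - 1 - (b : ℕ)) = b by omega,
      ent_fin]
    split_ifs with h
    · rfl
    · exact (hU a b (by omega)).symm
  · rintro ⟨m, F⟩ ⟨h1, h2⟩
    simp only at h1
    simp only [rphi, rpsi, Prod.mk.injEq, true_and]
    funext j i
    by_cases h : j < m ∧ i ≤ j
    · refine (if_pos h).trans ?_
      rw [ent_mk (fun a b => F (m - 1 - a) (m - 1 - b)) _ _ (by omega) (by omega)]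
      rw [show m - 1 - (m - 1 - j) = j by omega, show m - 1 - (m - 1 - i) = i by omega]
    · refine (if_neg h).trans ?_
      exact (h1 j i (by omega)).symm
  · rintro ⟨m, M⟩ ⟨hU, hR⟩
    simp only at hU
    simp only [rsize, rphi, msize]
    rw [sum_ent (fun _ _ x => x) M,
      ← Finset.sum_range_reflect (fun i => ∑ j ∈ Finset.range m, ent M i j) m]
    apply Finset.sum_congr rfl
    intro j hj
    rw [Finset.mem_range] at hj
    rw [← Finset.sum_range_reflect (fun b => ent M (m - 1 - j) b) m,
      sum_range_trim _ (show j + 1 ≤ m by omega)]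
    · unfold vs
      rw [Nat.zero_add]
      apply Finset.sum_congr rfl
      intro i hi
      rw [Finset.mem_range] at hi
      beta_reduce
      rw [if_pos (by omega)]
    · intro i hi hi'
      exact ent_ut hU _ _ (by omega)

def Mall : Set SMat := {A | IsFishburn A.2 ∧ SelfDual A.2}

def phi (A : SMat) : T where
  k := A.1 / 2
  V j i := if j < A.1 / 2 ∧ i ≤ j then ent A.2 i j else 0
  W j i := if j < A.1 / 2 ∧ i ≤ j then ent A.2 i (A.1 - 1 - j) else 0
  u i := if A.1 % 2 = 1 ∧ i ≤ A.1 / 2 then ent A.2 i (A.1 / 2) else 0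

def EE (m : ℕ) (t : T) (i j : ℕ) : ℕ :=
  if j < i then 0 else if 2 * j + 1 < m then t.V j i else if 2 * j + 1 = m then t.u i
  else t.W (m - 1 - j) i

def PP (m : ℕ) (t : T) (i j : ℕ) : ℕ :=
  if i + j + 1 ≤ m then EE m t i j else EE m t (m - 1 - j) (m - 1 - i)

open Classical in
noncomputable def mdim (t : T) : ℕ := if ∃ i, t.u i ≠ 0 then 2 * t.k + 1 else 2 * t.k

def psiM (m : ℕ) (t : T) : Mat m := fun i j => PP m t i j

noncomputable def psi (t : T) : SMat := ⟨mdim t, psiM (mdim t) t⟩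

lemma mdim_cases (t : T) :
    (mdim t = 2 * t.k ∧ ∀ i, t.u i = 0) ∨ (mdim t = 2 * t.k + 1 ∧ ∃ i, t.u i ≠ 0) := by
  unfold mdim
  split_ifs with h
  · exact Or.inr ⟨rfl, h⟩
  · push Not at h
    exact Or.inl ⟨rfl, h⟩

lemma ent_psiM (m : ℕ) (t : T) (i j : ℕ) (hi : i < m) (hj : j < m) :
    ent (psiM m t) i j = PP m t i j := ent_mk _ _ _ hi hj

lemma EE_V {m : ℕ} {t : T} {i j : ℕ} (h : i ≤ j) (hj : 2 * j + 1 < m) : EE m t i j = t.V j i := by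
  unfold EE
  rw [if_neg (by omega), if_pos hj]

lemma EE_u {m : ℕ} {t : T} {i j : ℕ} (h : i ≤ j) (hj : 2 * j + 1 = m) : EE m t i j = t.u i := by
  unfold EE
  rw [if_neg (by omega), if_neg (by omega), if_pos hj]

lemma EE_W {m : ℕ} {t : T} {i j : ℕ} (h : i ≤ j) (hj : 2 * j + 1 < m) :
    EE m t i (m - 1 - j) = t.W j i := by
  unfold EE
  rw [if_neg (by omega), if_neg (by omega), if_neg (by omega)]
  congr 1
  omega

lemma PP_nw {m : ℕ} {t : T} {i j : ℕ} (h : i + j + 1 ≤ m) : PP m t i j = EE m t i j := if_pos h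

lemma PP_dual {m : ℕ} {t : T} {i j : ℕ} (hi : i < m) (hj : j < m) :
    PP m t i j = PP m t (m - 1 - j) (m - 1 - i) := by
  unfold PP
  have e1 : m - 1 - (m - 1 - i) = i := by omega
  have e2 : m - 1 - (m - 1 - j) = j := by omega
  rw [e1, e2]
  by_cases h : i + j + 1 = m
  · rw [show m - 1 - j = i by omega, show m - 1 - i = j by omega]
  · by_cases h' : i + j + 1 ≤ m
    · rw [if_pos h', if_neg (by omega)]
    · rw [if_neg h', if_pos (by omega)]

lemma psiM_selfDual (m : ℕ) (t : T) : SelfDual (psiM m t) := by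
  unfold SelfDual
  funext i j
  have hi := i.2
  have hj := j.2
  simp only [dual, psiM, Fin.val_rev]
  rw [PP_dual hi hj]
  congr 1 <;> omega

lemma psiM_ut (m : ℕ) (t : T) : UT (psiM m t) := by
  intro i j h
  have hi := i.2
  have hj := j.2
  simp only [psiM, PP, EE]
  rw [if_pos h]
  split_ifs <;> first | rfl | omega

lemma cols_of_rows {m : ℕ} {M : Mat m} (h : SelfDual M) (hr : ∀ i, rowNonzero M i) (j : Fin m) :
    colNonzero M j := by
  obtain ⟨b, hb⟩ := hr j.rev
  refine ⟨b.rev, ?_⟩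
  rw [h]
  simp only [dual, Fin.rev_rev]
  exact hb

lemma psi_rows (t : T) (ht : Good 0 t) (i : ℕ) (hi : i < mdim t) :
    ∃ j < mdim t, PP (mdim t) t i j ≠ 0 := by
  have hm := mdim_cases t
  -- a nonzero cell in column `m - 1 - i`, on or above the antidiagonal
  have mirror : ∀ a, a ≤ i → a + (mdim t - 1 - i) + 1 ≤ mdim t →
      EE (mdim t) t a (mdim t - 1 - i) ≠ 0 → ∃ j < mdim t, PP (mdim t) t i j ≠ 0 := by
    intro a ha h1 h2
    refine ⟨mdim t - 1 - a, by omega, ?_⟩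
    rw [PP_dual hi (by omega), show mdim t - 1 - (mdim t - 1 - a) = a by omega, PP_nw h1]
    exact h2
  by_cases hik : i < t.k
  · rcases ht.nW i hik with ⟨a, ha⟩ | hrow
    · have hai : a ≤ i := by
        by_contra hc
        exact ha (ht.hW _ _ (by omega))
      apply mirror a hai (by omega)
      rw [EE_W hai (by omega)]
      exact ha
    · rw [Nat.zero_add] at hrow
      rcases hrow with ⟨l, hl⟩ | ⟨l, hl⟩ | hu
      · have : l < t.k ∧ i ≤ l := by
          by_contra hc
          exact hl (ht.hV _ _ (by omega))
        refine ⟨l, by omega, ?_⟩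
        rw [PP_nw (by omega), EE_V this.2 (by omega)]
        exact hl
      · have : l < t.k ∧ i ≤ l := by
          by_contra hc
          exact hl (ht.hW _ _ (by omega))
        refine ⟨mdim t - 1 - l, by omega, ?_⟩
        rw [PP_nw (by omega), EE_W this.2 (by omega)]
        exact hl
      · have hm' : mdim t = 2 * t.k + 1 := by
          rcases hm with h | h
          · exact absurd (h.2 i) hu
          · exact h.1
        refine ⟨t.k, by omega, ?_⟩
        rw [PP_nw (by omega), EE_u (by omega) (by omega)]
        exact hu
  · by_cases hc : mdim t = 2 * t.k + 1 ∧ i = t.k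
    · obtain ⟨a, ha⟩ : ∃ a, t.u a ≠ 0 := by
        rcases hm with h | h
        · omega
        · exact h.2
      have hak : a ≤ t.k := by
        by_contra hc
        exact ha (ht.hu _ (by omega))
      apply mirror a (by omega) (by omega)
      rw [EE_u (by omega) (by omega)]
      exact ha
    · have hj : mdim t - 1 - i < t.k := by omega
      obtain ⟨a, ha⟩ := ht.nV _ hj
      have hai : a ≤ mdim t - 1 - i := by
        by_contra hc
        exact ha (ht.hV _ _ (by omega))
      apply mirror a (by omega) (by omega)
      rw [EE_V hai (by omega)]
      exact ha

lemma psi_mem (t : T) (ht : Good 0 t) : psi t ∈ Mall := by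
  have hr : ∀ i, rowNonzero (psiM (mdim t) t) i := by
    intro i
    obtain ⟨j, hj, h⟩ := psi_rows t ht i i.2
    exact ⟨⟨j, hj⟩, h⟩
  exact ⟨⟨psiM_ut _ _, hr, cols_of_rows (psiM_selfDual _ _) hr⟩, psiM_selfDual _ _⟩

lemma phi_psi (t : T) (ht : Good 0 t) : phi (psi t) = t := by
  have hm := mdim_cases t
  have hk : mdim t / 2 = t.k := by omega
  ext j i
  · exact hk
  · simp only [phi, psi, hk]
    split_ifs with h
    · rw [ent_psiM _ _ _ _ (by omega) (by omega), PP_nw (by omega), EE_V h.2 (by omega)]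
    · exact (ht.hV _ _ (by omega)).symm
  · simp only [phi, psi, hk]
    split_ifs with h
    · rw [ent_psiM _ _ _ _ (by omega) (by omega), PP_nw (by omega), EE_W h.2 (by omega)]
    · exact (ht.hW _ _ (by omega)).symm
  · simp only [phi, psi, hk]
    split_ifs with h
    · rw [ent_psiM _ _ _ _ (by omega) (by omega), PP_nw (by omega), EE_u h.2 (by omega)]
    · rcases hm with hm | hm
      · exact (hm.2 _).symm
      · exact (ht.hu _ (by omega)).symm

lemma ent_dual {m : ℕ} {M : Mat m} (h : SelfDual M) (i j : ℕ) (hi : i < m) (hj : j < m) :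
    ent M i j = ent M (m - 1 - j) (m - 1 - i) := by
  have h1 : ent M i j = M ⟨i, hi⟩ ⟨j, hj⟩ := by simp [ent, hi, hj]
  have h2 : ent M (m - 1 - j) (m - 1 - i) = M ⟨m - 1 - j, by omega⟩ ⟨m - 1 - i, by omega⟩ :=
    ent_fin M ⟨m - 1 - j, by omega⟩ ⟨m - 1 - i, by omega⟩
  rw [h1, h2]
  conv_lhs => rw [h]
  simp only [dual]
  congr 1 <;> (ext; simp [Fin.val_rev]; omega)

lemma ent_row {m : ℕ} {M : Mat m} (h : IsFishburn M) (i : ℕ) (hi : i < m) :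
    ∃ j, i ≤ j ∧ j < m ∧ ent M i j ≠ 0 := by
  obtain ⟨b, hb⟩ := h.2.1 ⟨i, hi⟩
  replace hb : ent M i b ≠ 0 := fun h' => hb ((ent_fin M ⟨i, hi⟩ b).symm.trans h')
  refine ⟨b, ?_, b.2, hb⟩
  by_contra hc
  exact hb (ent_ut h.1 _ _ (by simpa using hc))

lemma ent_col {m : ℕ} {M : Mat m} (h : IsFishburn M) (j : ℕ) (hj : j < m) :
    ∃ i, i ≤ j ∧ ent M i j ≠ 0 := by
  obtain ⟨a, ha⟩ := h.2.2 ⟨j, hj⟩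
  replace ha : ent M a j ≠ 0 := fun h' => ha ((ent_fin M a ⟨j, hj⟩).symm.trans h')
  refine ⟨a, ?_, ha⟩
  by_contra hc
  exact ha (ent_ut h.1 _ _ (by simpa using hc))

lemma phi_good {m : ℕ} {M : Mat m} (hF : IsFishburn M) (hS : SelfDual M) : Good 0 (phi ⟨m, M⟩) := by
  refine ⟨?_, ?_, ?_, ?_, ?_⟩
  · intro j i h
    simp only [phi] at h ⊢
    rw [if_neg (by omega)]
  · intro j i h
    simp only [phi] at h ⊢
    rw [if_neg (by omega)]
  · intro i h
    simp only [phi] at h ⊢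
    rw [if_neg (by omega)]
  · intro j hj
    simp only [phi] at hj ⊢
    obtain ⟨i, hi, h⟩ := ent_col hF j (by omega)
    exact ⟨i, by rwa [if_pos ⟨hj, hi⟩]⟩
  · intro j hj
    simp only [phi, T.row, Nat.zero_add] at hj ⊢
    obtain ⟨b, hjb, hb, h⟩ := ent_row hF j (by omega)
    by_cases h1 : b < m / 2
    · right; left
      exact ⟨b, by rwa [if_pos ⟨h1, hjb⟩]⟩
    by_cases h2 : m % 2 = 1 ∧ b = m / 2
    · right; right; right
      rw [if_pos (by omega), ← h2.2]
      exact h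
    by_cases h3 : j + b + 1 ≤ m
    · right; right; left
      refine ⟨m - 1 - b, ?_⟩
      rw [if_pos (by omega), show m - 1 - (m - 1 - b) = b by omega]
      exact h
    · left
      refine ⟨m - 1 - b, ?_⟩
      rw [if_pos (by omega), ← ent_dual hS _ _ (by omega) hb]
      exact h

lemma mdim_phi {m : ℕ} {M : Mat m} (hF : IsFishburn M) : mdim (phi ⟨m, M⟩) = m := by
  rcases Nat.mod_two_eq_zero_or_one m with h | h
  · rcases mdim_cases (phi ⟨m, M⟩) with h' | ⟨_, i, hi⟩
    · rw [h'.1]; simp only [phi]; omega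
    · simp [phi, h] at hi
  · obtain ⟨i, hi, he⟩ := ent_col hF (m / 2) (by omega)
    rcases mdim_cases (phi ⟨m, M⟩) with h' | h'
    · exfalso
      have := h'.2 i
      simp only [phi] at this
      rw [if_pos ⟨h, hi⟩] at this
      exact he this
    · rw [h'.1]; simp only [phi]; omega

lemma EE_phi {m : ℕ} {M : Mat m} (hU : UT M) (i j : ℕ) (hj : j < m) (h : i + j + 1 ≤ m) :
    EE m (phi ⟨m, M⟩) i j = ent M i j := by
  by_cases h0 : j < i
  · rw [ent_ut hU _ _ h0]
    simp [EE, h0]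
  rcases lt_trichotomy (2 * j + 1) m with h1 | h1 | h1
  · rw [EE_V (by omega) h1]
    simp only [phi]
    rw [if_pos (by omega)]
  · rw [EE_u (by omega) h1]
    simp only [phi]
    rw [if_pos (by omega), show m / 2 = j by omega]
  · have e : j = m - 1 - (m - 1 - j) := by omega
    conv_lhs => rw [e]
    rw [EE_W (by omega) (by omega)]
    simp only [phi]
    rw [if_pos (by omega), ← e]

lemma psi_phi {m : ℕ} {M : Mat m} (hF : IsFishburn M) (hS : SelfDual M) :
    psi (phi ⟨m, M⟩) = ⟨m, M⟩ := by
  unfold psi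
  rw [mdim_phi hF]
  congr 1
  funext i j
  have hi := i.2
  have hj := j.2
  simp only [psiM, PP]
  split_ifs with h
  · rw [EE_phi hF.1 _ _ hj h, ent_fin]
  · rw [EE_phi hF.1 _ _ (by omega) (by omega), ← ent_dual hS _ _ hi hj, ent_fin]

lemma sum_fold (C : ℕ → ℕ) (m : ℕ) : ∑ b ∈ Finset.range m, C b =
    ∑ b ∈ Finset.range (m / 2), (C b + C (m - 1 - b)) + if m % 2 = 1 then C (m / 2) else 0 := by
  have key : ∀ k d, ∑ b ∈ Finset.range k, C (d + b) = ∑ b ∈ Finset.range k, C (d + k - 1 - b) := by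
    intro k d
    rw [← Finset.sum_range_reflect]
    apply Finset.sum_congr rfl
    intro b hb
    rw [Finset.mem_range] at hb
    congr 1
    omega
  rw [Finset.sum_add_distrib]
  rcases Nat.mod_two_eq_zero_or_one m with h | h
  · obtain ⟨k, rfl⟩ : ∃ k, m = k + k := ⟨m / 2, by omega⟩
    rw [Finset.sum_range_add, key, show (k + k) / 2 = k by omega, if_neg (by omega), add_zero]
  · obtain ⟨k, rfl⟩ : ∃ k, m = (k + 1) + k := ⟨m / 2, by omega⟩
    rw [Finset.sum_range_add, key, show (k + 1 + k) / 2 = k by omega, if_pos h,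
      Finset.sum_range_succ]
    omega

lemma phi_size {m : ℕ} {M : Mat m} (hF : IsFishburn M) :
    tsize 0 (phi ⟨m, M⟩) = reducedSize M := by
  unfold reducedSize
  rw [sum_ent (fun i j x => if i + j + 1 ≤ m then x else 0) M, Finset.sum_comm, sum_fold]
  unfold tsize
  have hU := hF.1
  congr 1
  · apply Finset.sum_congr rfl
    intro j hj
    simp only [phi, Finset.mem_range] at hj ⊢
    congr 1
    · rw [sum_range_trim _ (show j + 1 ≤ m by omega)]
      · unfold vs
        rw [Nat.zero_add]
        apply Finset.sum_congr rfl
        intro i hi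
        rw [Finset.mem_range] at hi
        beta_reduce
        rw [if_pos (by omega), if_pos (by omega)]
      · intro i hi _
        rw [ent_ut hU _ _ (by omega), ite_self]
    · rw [sum_range_trim _ (show j + 1 ≤ m by omega)]
      · unfold vs
        rw [Nat.zero_add]
        apply Finset.sum_congr rfl
        intro i hi
        rw [Finset.mem_range] at hi
        beta_reduce
        rw [if_pos (by omega), if_pos (by omega)]
      · intro i hi _
        rw [if_neg (by omega)]
  · simp only [phi]
    split_ifs with h
    · rw [sum_range_trim _ (show m / 2 + 1 ≤ m by omega)]
      · unfold vs
        rw [Nat.zero_add]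
        apply Finset.sum_congr rfl
        intro i hi
        rw [Finset.mem_range] at hi
        beta_reduce
        rw [if_pos (by omega), if_pos (by omega)]
      · intro i hi _
        rw [if_neg (by omega)]
    · simp [vs, h]

lemma cnt_M (n : ℕ) : cnt Mall (fun A => reducedSize A.2) n = cnt (Tset 0) (tsize 0) n := by
  apply cnt_bij phi psi
  · rintro ⟨m, M⟩ ⟨hF, hS⟩
    exact phi_good hF hS
  · intro t ht
    exact psi_mem t ht
  · rintro ⟨m, M⟩ ⟨hF, hS⟩
    exact psi_phi hF hS
  · intro t ht
    exact phi_psi t ht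
  · rintro ⟨m, M⟩ ⟨hF, hS⟩
    exact phi_size hF

lemma main (n : ℕ) (hn : 1 ≤ n) : (Mset n).encard = 2 * (RMset n).encard := by
  have h1 : (Mset n).encard = cnt Mall (fun A => reducedSize A.2) n := by
    unfold cnt
    congr 1
    ext A
    simp only [Mset, Mall, Set.mem_ofPred_eq, and_assoc]
  have h2 : (RMset n).encard = cnt RMall (fun A => msize A.2) n := by
    unfold cnt
    congr 1
    ext A
    simp only [RMset, RMall, Set.mem_ofPred_eq, and_assoc]
  have h := xx_eq n 0
  rw [if_neg (by omega), add_zero, xx_zero] at h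
  rw [h1, h2, cnt_M, cnt_RM, h]

end FB

/-- `|M(n)| = 2 |RM(n)|` for all `n ≥ 1`. -/
theorem stmt8 (n : ℕ) (hn : 1 ≤ n) :
    (Mset n).ncard = 2 * (RMset n).ncard := by
  unfold Set.ncard
  rw [FB.main n hn, ENat.toNat_mul]
  rfl
end

section
/- For all n ≥ 1 and k ≥ 0, the number of self-dual Fishburn matrices of reduced size n with first-row sum k and odd dimension equals the number of row-Fishburn matrices of size n whose last column has sum k; that is, |OM(n,k)| = |RM(n,k)|. -/
open Finset

theorem ncard_of_rel {α β : Type*} (s : Set α) (t : Set β) (R : α → β → Prop)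
    (h1 : ∀ a ∈ s, ∃ b ∈ t, R a b) (h2 : ∀ b ∈ t, ∃ a ∈ s, R a b)
    (h3 : ∀ a ∈ s, ∀ b ∈ t, ∀ b' ∈ t, R a b → R a b' → b = b')
    (h4 : ∀ b ∈ t, ∀ a ∈ s, ∀ a' ∈ s, R a b → R a' b → a = a') : s.ncard = t.ncard := by
  choose F hF hR using h1
  refine Set.ncard_congr F hF ?_ ?_
  · intro a b ha hb h
    refine h4 _ (hF a ha) _ ha _ hb (hR a ha) ?_
    rw [h]; exact hR b hb
  · intro b hb
    obtain ⟨a, ha, hab⟩ := h2 b hb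
    exact ⟨a, ha, h3 a ha _ (hF a ha) _ hb (hR a ha) hab⟩

open Classical in
/-- Position function: every unit `b` takes one place, or two if `E b`. -/
noncomputable def posU (E : ℕ → Prop) : ℕ → ℕ
  | 0 => 0
  | b + 1 => posU E b + (if E b then 2 else 1)

theorem posU_succ_pos {E : ℕ → Prop} {b : ℕ} (h : E b) : posU E (b+1) = posU E b + 2 := by
  simp [posU, h]

theorem posU_succ_neg {E : ℕ → Prop} {b : ℕ} (h : ¬ E b) : posU E (b+1) = posU E b + 1 := by
  simp [posU, h]

theorem posU_strictMono (E : ℕ → Prop) : StrictMono (posU E) := by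
  refine strictMono_nat_of_lt_succ fun b => ?_
  by_cases h : E b
  · rw [posU_succ_pos h]; omega
  · rw [posU_succ_neg h]; omega

theorem posU_cover (E : ℕ → Prop) (j : ℕ) :
    (∃ b, j = posU E b) ∨ (∃ b, E b ∧ j = posU E b + 1) := by
  induction j with
  | zero => exact Or.inl ⟨0, rfl⟩
  | succ j ih =>
    rcases ih with ⟨b, rfl⟩ | ⟨b, hb, rfl⟩
    · by_cases h : E b
      · exact Or.inr ⟨b, h, rfl⟩
      · exact Or.inl ⟨b+1, (posU_succ_neg h).symm⟩
    · exact Or.inl ⟨b+1, (posU_succ_pos hb).symm⟩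

theorem posU_ne {E : ℕ → Prop} {b : ℕ} (h : E b) (c : ℕ) : posU E c ≠ posU E b + 1 := by
  intro hc
  have h1 := posU_succ_pos h
  have h2 : posU E b < posU E c := by omega
  have h3 : posU E c < posU E (b+1) := by omega
  have := (posU_strictMono E).lt_iff_lt.1 h2
  have := (posU_strictMono E).lt_iff_lt.1 h3
  omega

theorem posU_congr {E E' : ℕ → Prop} {K : ℕ} (h : ∀ b < K, (E b ↔ E' b)) :
    posU E K = posU E' K := by
  induction K with
  | zero => rfl
  | succ K ih =>
    have := ih fun b hb => h b (by omega)
    have hk := h K (by omega)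
    by_cases hE : E K
    · rw [posU_succ_pos hE, posU_succ_pos (hk.1 hE), this]
    · rw [posU_succ_neg hE, posU_succ_neg (fun x => hE (hk.2 x)), this]

open Classical in
theorem posU_sum (E : ℕ → Prop) (F : ℕ → ℕ) (B : ℕ) :
    ∑ j ∈ range (posU E B), F j =
      ∑ b ∈ range B, (F (posU E b) + if E b then F (posU E b + 1) else 0) := by
  induction B with
  | zero => simp [posU]
  | succ B ih =>
    rw [sum_range_succ, ← ih]
    by_cases h : E B
    · rw [posU_succ_pos h, sum_range_succ, sum_range_succ]; simp [h, add_assoc]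
    · rw [posU_succ_neg h, sum_range_succ]; simp [h]

theorem posU_ext {α : Type*} [Inhabited α] (E : ℕ → Prop) (F0 F1 : ℕ → α) :
    ∃ F : ℕ → α, (∀ b, F (posU E b) = F0 b) ∧ (∀ b, E b → F (posU E b + 1) = F1 b) := by
  classical
  refine ⟨fun j => if h : ∃ b, posU E b = j then F0 h.choose else
    if h : ∃ b, posU E b + 1 = j then F1 h.choose else default, ?_, ?_⟩
  · intro b
    have h : ∃ c, posU E c = posU E b := ⟨b, rfl⟩
    simp only [dif_pos h]
    rw [(posU_strictMono E).injective h.choose_spec]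
  · intro b hb
    have h0 : ¬ ∃ c, posU E c = posU E b + 1 := fun ⟨c, hc⟩ => posU_ne hb c hc
    have h : ∃ c, posU E c + 1 = posU E b + 1 := ⟨b, rfl⟩
    simp only [dif_neg h0, dif_pos h]
    rw [(posU_strictMono E).injective (Nat.succ.inj h.choose_spec)]

theorem scan_exists (Z : ℕ → Prop) (h0 : ¬ Z 0) (K : ℕ) :
    ∃ (L : ℕ) (E : ℕ → Prop), (∀ a, E a → a < L) ∧ posU E L = K ∧
      (∀ a, E a → Z (posU E a + 1)) ∧ (∀ a < L, ¬ Z (posU E a) ∨ E a) := by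
  induction K using Nat.strong_induction_on with
  | _ K ih =>
    rcases K with _ | K
    · exact ⟨0, fun _ => False, by simp, rfl, by simp, by simp⟩
    · by_cases hz : Z K
      · rcases K with _ | K
        · exact absurd hz h0
        obtain ⟨L, E, h1, h2, h3, h4⟩ := ih K (by omega)
        have hc : ∀ a ≤ L, posU (fun a => E a ∨ a = L) a = posU E a := fun a ha =>
          posU_congr fun b hb => by
            constructor
            · rintro (h | h)
              · exact h
              · omega
            · exact Or.inl
        refine ⟨L+1, fun a => E a ∨ a = L, ?_, ?_, ?_, ?_⟩
        · rintro a (h | h)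
          · have := h1 a h; omega
          · omega
        · rw [posU_succ_pos (Or.inr rfl), hc L le_rfl, h2]
        · rintro a (h | h)
          · rw [hc a (h1 a h).le]; exact h3 a h
          · rw [hc a h.le, h, h2]; exact hz
        · intro a ha
          by_cases haL : a = L
          · exact Or.inr (Or.inr haL)
          · rw [hc a (by omega)]
            rcases h4 a (by omega) with h | h
            · exact Or.inl h
            · exact Or.inr (Or.inl h)
      · obtain ⟨L, E, h1, h2, h3, h4⟩ := ih K (by omega)
        have hn : ¬ E L := fun h => lt_irrefl _ (h1 L h)
        refine ⟨L+1, E, fun a h => (h1 a h).trans (by omega), ?_, h3, ?_⟩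
        · rw [posU_succ_neg hn, h2]
        · intro a ha
          by_cases haL : a = L
          · rw [haL, h2]; exact Or.inl hz
          · exact h4 a (by omega)

theorem scan_unique (Z : ℕ → Prop) (K : ℕ) : ∀ (L L' : ℕ) (E E' : ℕ → Prop),
    posU E L = K → posU E' L' = K →
    (∀ a < L, E a → Z (posU E a + 1)) → (∀ a < L, ¬ Z (posU E a) ∨ E a) →
    (∀ a < L', E' a → Z (posU E' a + 1)) → (∀ a < L', ¬ Z (posU E' a) ∨ E' a) →
    L = L' ∧ ∀ b < L, (E b ↔ E' b) := by
  induction K using Nat.strong_induction_on with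
  | _ K ih =>
    intro L L' E E' hL hL' h1 h2 h1' h2'
    rcases L with _ | L
    · rcases L' with _ | L'
      · simp
      · have := posU_strictMono E' (Nat.succ_pos L')
        simp [posU] at *
        split_ifs at * <;> omega
    rcases L' with _ | L'
    · have := posU_strictMono E (Nat.succ_pos L)
      simp [posU] at *
      split_ifs at * <;> omega
    have key : (E L ↔ E' L') := by
      have a1 := h1 L (by omega)
      have a2 := h2 L (by omega)
      have a1' := h1' L' (by omega)
      have a2' := h2' L' (by omega)
      constructor
      · intro h
        by_contra h'
        rw [posU_succ_pos h] at hL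
        rw [posU_succ_neg h'] at hL'
        have : posU E' L' = posU E L + 1 := by omega
        rw [this] at a2'
        have := a1 h
        tauto
      · intro h'
        by_contra h
        rw [posU_succ_pos h'] at hL'
        rw [posU_succ_neg h] at hL
        have : posU E L = posU E' L' + 1 := by omega
        rw [this] at a2
        have := a1' h'
        tauto
    have heq : posU E L = posU E' L' := by
      by_cases h : E L
      · rw [posU_succ_pos h] at hL
        rw [posU_succ_pos (key.1 h)] at hL'
        omega
      · rw [posU_succ_neg h] at hL
        rw [posU_succ_neg (fun x => h (key.2 x))] at hL'
        omega
    have hlt : posU E L < K := by rw [← hL]; exact posU_strictMono E (by omega)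
    obtain ⟨e1, e2⟩ := ih _ hlt L L' E E' rfl heq.symm (fun a ha => h1 a (by omega))
      (fun a ha => h2 a (by omega)) (fun a ha => h1' a (by omega)) (fun a ha => h2' a (by omega))
    subst e1
    refine ⟨rfl, fun b hb => ?_⟩
    by_cases hb' : b = L
    · rw [hb']; exact key
    · exact e2 b (by omega)

abbrev NF := ℕ → ℕ → ℕ

structure IsS (n k K : ℕ) (f g : NF) : Prop where
  sf : ∀ a b, f a b ≠ 0 → a ≤ b ∧ b ≤ K
  sg : ∀ a b, g a b ≠ 0 → a ≤ b ∧ b < K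
  col : ∀ b ≤ K, ∃ a, f a b ≠ 0
  row : ∀ a < K, (∃ b, f a b ≠ 0) ∨ (∃ b, g a b ≠ 0) ∨ (∃ c, g c a ≠ 0)
  size : ∑ a ∈ range (K+1), ∑ b ∈ range (K+1), (f a b + g a b) = n
  first : ∑ b ∈ range (K+1), (f 0 b + g 0 b) = k

structure IsT (n k K : ℕ) (t : NF) : Prop where
  st : ∀ a b, t a b ≠ 0 → a ≤ b ∧ b ≤ K
  col : ∀ b ≤ K, ∃ a, t a b ≠ 0
  size : ∑ a ∈ range (K+1), ∑ b ∈ range (K+1), t a b = n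
  first : ∑ b ∈ range (K+1), t 0 b = k

structure Rel2 (E : ℕ → Prop) (L : ℕ) (f g : NF) (K : ℕ) (t : NF) : Prop where
  hE : ∀ b, E b ↔ ∃ a, g a b ≠ 0
  hK : K = posU E L
  hf : ∀ a b, t (posU E a) (posU E b) = f a b
  hg : ∀ a b, E b → t (posU E a) (posU E b + 1) = g a b
  hz : ∀ a j, E a → t (posU E a + 1) j = 0

theorem Rel2.rowsum {E L f g K t} (h : Rel2 E L f g K t) (hn : ¬ E L) (a : ℕ) :
    ∑ j ∈ range (K+1), t (posU E a) j = ∑ b ∈ range (L+1), (f a b + g a b) := by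
  classical
  rw [h.hK, ← posU_succ_neg hn, posU_sum]
  refine sum_congr rfl fun b _ => ?_
  rw [h.hf]
  split_ifs with hb
  · rw [h.hg a b hb]
  · have : g a b = 0 := by
      by_contra h'
      exact hb ((h.hE b).2 ⟨a, h'⟩)
    rw [this]

theorem Rel2.size {E L f g K t} (h : Rel2 E L f g K t) (hn : ¬ E L) :
    ∑ i ∈ range (K+1), ∑ j ∈ range (K+1), t i j =
      ∑ a ∈ range (L+1), ∑ b ∈ range (L+1), (f a b + g a b) := by
  classical
  have e : K + 1 = posU E (L+1) := by rw [posU_succ_neg hn, h.hK]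
  have := posU_sum E (fun i => ∑ j ∈ range (K+1), t i j) (L+1)
  rw [← e] at this
  rw [this]
  refine sum_congr rfl fun a _ => ?_
  rw [h.rowsum hn]
  split_ifs with ha
  · simp [h.hz a _ ha]
  · simp

theorem step2 (n k : ℕ) :
    ({S : ℕ × NF × NF | IsS n k S.1 S.2.1 S.2.2}).ncard =
    ({T : ℕ × NF | IsT n k T.1 T.2}).ncard := by
  refine ncard_of_rel _ _ (fun S T => ∃ E, Rel2 E S.1 S.2.1 S.2.2 T.1 T.2) ?_ ?_ ?_ ?_
  · rintro ⟨L, f, g⟩ hS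
    simp only [Set.mem_ofPred_eq] at hS
    set E : ℕ → Prop := fun b => ∃ a, g a b ≠ 0 with hE
    have hEL : ∀ b, E b → b < L := fun b ⟨a, ha⟩ => (hS.sg a b ha).2
    choose r hr0 hr1 using fun a => posU_ext E (f a) (g a)
    obtain ⟨t, ht0, ht1⟩ := posU_ext E r (fun _ _ => 0)
    have hm := posU_strictMono E
    have R : Rel2 E L f g (posU E L) t :=
      ⟨fun b => Iff.rfl, rfl, fun a b => by rw [ht0, hr0], fun a b hb => by rw [ht0, hr1 a b hb],
        fun a j ha => by rw [ht1 a ha]⟩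
    have hn : ¬ E L := fun h => lt_irrefl _ (hEL L h)
    refine ⟨(posU E L, t), (show IsT n k (posU E L) t from ⟨?_, ?_, ?_, ?_⟩), E, R⟩
    · intro i j hij
      rcases posU_cover E i with ⟨a, rfl⟩ | ⟨a, ha, rfl⟩
      · rcases posU_cover E j with ⟨b, rfl⟩ | ⟨b, hb, rfl⟩
        · rw [R.hf] at hij
          have := hS.sf a b hij
          exact ⟨hm.monotone this.1, hm.monotone this.2⟩
        · rw [R.hg a b hb] at hij
          have := hS.sg a b hij
          have h1 := hm.monotone this.1
          have h2 := hm.monotone (Nat.succ_le_of_lt this.2)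
          have h3 := posU_succ_pos hb
          simp only [Nat.succ_eq_add_one] at *
          omega
      · exact absurd (R.hz a j ha) hij
    · intro j hj
      rcases posU_cover E j with ⟨b, rfl⟩ | ⟨b, hb, rfl⟩
      · obtain ⟨a, ha⟩ := hS.col b (hm.le_iff_le.1 hj)
        exact ⟨posU E a, by rw [R.hf]; exact ha⟩
      · obtain ⟨a, ha⟩ := id hb
        exact ⟨posU E a, by rw [R.hg a b hb]; exact ha⟩
    · rw [R.size hn]; exact hS.size
    · have := R.rowsum hn 0
      exact this.trans hS.first
  · rintro ⟨K, t⟩ hT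
    simp only [Set.mem_ofPred_eq] at hT
    have hz0 : ¬ ∀ j, t 0 j = 0 := by
      intro h
      obtain ⟨a, ha⟩ := hT.col 0 (Nat.zero_le _)
      have := (hT.st a 0 ha).1
      obtain rfl : a = 0 := by omega
      exact ha (h 0)
    obtain ⟨L, E, h1, h2, h3, h4⟩ := scan_exists (fun i => ∀ j, t i j = 0) hz0 K
    have hm := posU_strictMono E
    classical
    set f : NF := fun a b => t (posU E a) (posU E b) with hf
    set g : NF := fun a b => if E b then t (posU E a) (posU E b + 1) else 0 with hg
    have hcolE : ∀ b, E b → ∃ a, g a b ≠ 0 := by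
      intro b hb
      have h5 := hm.monotone (Nat.succ_le_of_lt (h1 b hb))
      have h6 := posU_succ_pos hb
      simp only [Nat.succ_eq_add_one] at h5
      obtain ⟨i, hi⟩ := hT.col (posU E b + 1) (by omega)
      rcases posU_cover E i with ⟨a, rfl⟩ | ⟨a, ha, rfl⟩
      · exact ⟨a, by simpa [hg, hb] using hi⟩
      · exact absurd (h3 a ha _) hi
    have R : Rel2 E L f g K t := by
      refine ⟨fun b => ⟨hcolE b, ?_⟩, h2.symm, fun a b => rfl, fun a b hb => by simp [hg, hb],
        fun a j ha => h3 a ha j⟩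
      rintro ⟨a, ha⟩
      by_contra hb
      simp [hg, hb] at ha
    have hn : ¬ E L := fun h => lt_irrefl _ (h1 L h)
    refine ⟨(L, f, g), (show IsS n k L f g from ⟨?_, ?_, ?_, ?_, ?_, ?_⟩), E, R⟩
    · intro a b hab
      have := hT.st _ _ hab
      rw [← h2, hm.le_iff_le, hm.le_iff_le] at this
      exact this
    · intro a b hab
      have hb : E b := (R.hE b).2 ⟨a, hab⟩
      refine ⟨?_, h1 b hb⟩
      rw [← R.hg a b hb] at hab
      have h5 := (hT.st _ _ hab).1
      have h6 := posU_succ_pos hb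
      have : posU E a < posU E (b+1) := by omega
      have := hm.lt_iff_lt.1 this
      omega
    · intro b hb
      obtain ⟨i, hi⟩ := hT.col (posU E b) (by rw [← h2]; exact hm.monotone hb)
      rcases posU_cover E i with ⟨a, rfl⟩ | ⟨a, ha, rfl⟩
      · exact ⟨a, hi⟩
      · exact absurd (h3 a ha _) hi
    · intro a ha
      rcases h4 a ha with h | h
      · push Not at h
        obtain ⟨j, hj⟩ := h
        rcases posU_cover E j with ⟨b, rfl⟩ | ⟨b, hb, rfl⟩
        · exact Or.inl ⟨b, hj⟩
        · exact Or.inr (Or.inl ⟨b, by rw [R.hg a b hb] at hj; exact hj⟩)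
      · exact Or.inr (Or.inr (hcolE a h))
    · exact (R.size hn).symm.trans hT.size
    · exact (R.rowsum hn 0).symm.trans hT.first
  · rintro ⟨L, f, g⟩ hS ⟨K, t⟩ hT ⟨K', t'⟩ hT' ⟨E, R⟩ ⟨E', R'⟩
    dsimp only at R R'
    obtain rfl : E = E' := by
      funext b
      exact propext ((R.hE b).trans (R'.hE b).symm)
    have e1 : K = K' := R.hK.trans R'.hK.symm
    have e2 : t = t' := by
      funext i j
      rcases posU_cover E i with ⟨a, rfl⟩ | ⟨a, ha, rfl⟩
      · rcases posU_cover E j with ⟨b, rfl⟩ | ⟨b, hb, rfl⟩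
        · rw [R.hf, R'.hf]
        · rw [R.hg a b hb, R'.hg a b hb]
      · rw [R.hz a j ha, R'.hz a j ha]
    rw [e1, e2]
  · have aux : ∀ {n k L f g K t E}, IsS n k L f g → Rel2 E L f g K t →
        (∀ a < L, ¬ (∀ j, t (posU E a) j = 0) ∨ E a) := by
      intro n k L f g K t E hS R a ha
      rcases hS.row a ha with ⟨b, hb⟩ | ⟨b, hb⟩ | h
      · left; intro h; exact hb (by rw [← R.hf]; exact h _)
      · left; intro h; exact hb (by rw [← R.hg a b ((R.hE b).2 ⟨a, hb⟩)]; exact h _)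
      · right; exact (R.hE a).2 h
    rintro ⟨K, t⟩ hT ⟨L, f, g⟩ hS ⟨L', f', g'⟩ hS' ⟨E, R⟩ ⟨E', R'⟩
    simp only [Set.mem_ofPred_eq] at R R' hS hS' hT
    obtain ⟨e1, e2⟩ := scan_unique (fun i => ∀ j, t i j = 0) K L L' E E' R.hK.symm R'.hK.symm
      (fun a _ h j => R.hz a j h) (aux hS R) (fun a _ h j => R'.hz a j h) (aux hS' R')
    subst e1
    have hEL : ∀ b, E b → b < L := fun b hb => by
      obtain ⟨a, ha⟩ := (R.hE b).1 hb
      exact (hS.sg a b ha).2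
    have hEL' : ∀ b, E' b → b < L := fun b hb => by
      obtain ⟨a, ha⟩ := (R'.hE b).1 hb
      exact (hS'.sg a b ha).2
    obtain rfl : E = E' := by
      funext b
      exact propext ⟨fun h => (e2 b (hEL b h)).1 h, fun h => (e2 b (hEL' b h)).2 h⟩
    have e3 : f = f' := by funext a b; rw [← R.hf, ← R'.hf]
    have e4 : g = g' := by
      funext a b
      by_cases hb : E b
      · rw [← R.hg a b hb, ← R'.hg a b hb]
      · have z1 : g a b = 0 := by
          by_contra h; exact hb ((R.hE b).2 ⟨a, h⟩)
        have z2 : g' a b = 0 := by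
          by_contra h; exact hb ((R'.hE b).2 ⟨a, h⟩)
        rw [z1, z2]
    rw [e3, e4]

/-- The row-Fishburn candidate attached to `(K, t)`. -/
def flipM (K : ℕ) (t : NF) : Mat (K + 1) := fun i j => t (K - (j : ℕ)) (K - (i : ℕ))

def flipT (T : ℕ × NF) : SMat := ⟨T.1 + 1, flipM T.1 T.2⟩

theorem flipT_mem (n k K : ℕ) (t : NF) (hs : ∀ a b, t a b ≠ 0 → a ≤ K ∧ b ≤ K) :
    flipT (K, t) ∈ RMset₂ n k ↔ IsT n k K t := by
  have hsize : msize (flipM K t) = ∑ a ∈ range (K+1), ∑ b ∈ range (K+1), t a b := by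
    simp only [flipM, msize]
    rw [← Finset.sum_range (fun i => ∑ j : Fin (K+1), t (K - (j : ℕ)) (K - i))]
    have hr : ∀ i, ∑ j : Fin (K+1), t (K - (j : ℕ)) (K - i) =
        ∑ j ∈ range (K+1), t (K - j) (K - i) := fun i =>
      (Finset.sum_range (fun j => t (K - j) (K - i))).symm
    simp only [hr]
    rw [Finset.sum_comm]
    rw [← Finset.sum_range_reflect]
    refine sum_congr rfl fun a ha => ?_
    rw [← Finset.sum_range_reflect]
    refine sum_congr rfl fun b hb => ?_
    simp only [mem_range] at ha hb
    congr 1 <;> omega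
  have hlast : lastColSum (flipM K t) = ∑ b ∈ range (K+1), t 0 b := by
    simp only [flipM, lastColSum]
    rw [← Finset.sum_range_reflect, Finset.sum_range]
    refine sum_congr rfl fun i _ => ?_
    rw [Finset.sum_eq_single (Fin.last K)]
    · simp
    · intro j _ hj
      have : (j : ℕ) + 1 ≠ K + 1 := fun h => hj (Fin.ext (by simpa using h))
      rw [if_neg this]
    · simp
  constructor
  · rintro ⟨⟨h1, h2, h3⟩, h4⟩
    change UT (flipM K t) at h1
    change ∀ i, rowNonzero (flipM K t) i at h2
    change msize (flipM K t) = n at h3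
    change lastColSum (flipM K t) = k at h4
    refine ⟨?_, ?_, hsize ▸ h3, hlast ▸ h4⟩
    · intro a b hab
      obtain ⟨ha, hb⟩ := hs a b hab
      refine ⟨?_, hb⟩
      by_contra hlt
      have := h1 (⟨K - b, by omega⟩) (⟨K - a, by omega⟩)
        (by simp only; omega)
      simp only [flipM] at this
      rw [Nat.sub_sub_self ha, Nat.sub_sub_self hb] at this
      exact hab this
    · intro b hb
      obtain ⟨j, hj⟩ := h2 (⟨K - b, by omega⟩)
      simp only [flipM] at hj
      rw [Nat.sub_sub_self hb] at hj
      exact ⟨_, hj⟩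
  · intro h
    suffices hh : UT (flipM K t) ∧ ∀ i, rowNonzero (flipM K t) i from
      ⟨⟨hh.1, hh.2, hsize.trans h.size⟩, hlast.trans h.first⟩
    refine ⟨?_, ?_⟩
    · rintro ⟨i, hi⟩ ⟨j, hj⟩ hij
      simp only [flipM] at *
      by_contra hne
      have := (h.st _ _ hne).1
      omega
    · rintro ⟨i, hi⟩
      obtain ⟨a, ha⟩ := h.col (K - i) (by omega)
      refine ⟨⟨K - a, by omega⟩, ?_⟩
      simp only [flipM]
      rw [Nat.sub_sub_self (hs _ _ ha).1]
      exact ha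

theorem step3 (n k : ℕ) (hn : 1 ≤ n) :
    ({T : ℕ × NF | IsT n k T.1 T.2}).ncard = (RMset₂ n k).ncard := by
  refine Set.ncard_congr (fun T _ => flipT T) ?_ ?_ ?_
  · rintro ⟨K, t⟩ hT
    have hT : IsT n k K t := hT
    exact (flipT_mem n k K t fun a b h => by have := hT.st a b h; omega).2 hT
  · rintro ⟨K, t⟩ ⟨K', t'⟩ hT hT' h
    have hT : IsT n k K t := hT
    have hT' : IsT n k K' t' := hT'
    have h1 : K + 1 = K' + 1 := congrArg Sigma.fst h
    obtain rfl : K = K' := by omega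
    have h2 : flipM K t = flipM K t' := eq_of_heq (Sigma.mk.inj h).2
    have : t = t' := by
      funext a b
      by_cases hab : a ≤ K ∧ b ≤ K
      · have := congrFun (congrFun h2 ⟨K - b, by omega⟩) ⟨K - a, by omega⟩
        simp only [flipM] at this
        rwa [Nat.sub_sub_self hab.1, Nat.sub_sub_self hab.2] at this
      · have z1 : t a b = 0 := by
          by_contra h; have := hT.st a b h; omega
        have z2 : t' a b = 0 := by
          by_contra h; have := hT'.st a b h; omega
        rw [z1, z2]
    rw [this]
  · rintro ⟨m, M⟩ hM
    rcases m with _ | K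
    · have h3 : msize M = n := hM.1.2.2
      simp [msize] at h3
      omega
    set t : NF := fun a b => if h : a ≤ K ∧ b ≤ K then
      M ⟨K - b, by omega⟩ ⟨K - a, by omega⟩ else 0 with ht
    have e : flipT (K, t) = ⟨K+1, M⟩ := by
      simp only [flipT]
      congr 1
      funext i j
      obtain ⟨i, hi⟩ := i
      obtain ⟨j, hj⟩ := j
      simp only [ht, flipM]
      rw [dif_pos ⟨by omega, by omega⟩]
      congr 2 <;> omega
    refine ⟨(K, t), ?_, e⟩
    refine (flipT_mem n k K t ?_).1 (e ▸ hM)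
    intro a b hab
    by_contra hc
    exact hab (by simp only [ht]; rw [dif_neg hc])

/-- Left part `f` and right part `g` glued side by side. -/
def glueH (K : ℕ) (f g : NF) : NF := fun i j => if j ≤ K then f i j else g i (2 * K - j)

/-- The self-dual completion. -/
def glueN (K : ℕ) (f g : NF) : NF := fun i j =>
  if i + j ≤ 2 * K then glueH K f g i j else glueH K f g (2 * K - j) (2 * K - i)

def glueM (K : ℕ) (f g : NF) : Mat (2 * K + 1) := fun i j => glueN K f g i j

def glueS (S : ℕ × NF × NF) : SMat :=
  ⟨2 * S.1 + 1, glueM S.1 S.2.1 S.2.2⟩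

theorem glueH_row (K : ℕ) (f g : NF) (hg : ∀ a, g a K = 0) (i : ℕ) :
    ∑ j ∈ range (2 * K + 1), glueH K f g i j = ∑ b ∈ range (K+1), (f i b + g i b) := by
  rw [show 2 * K + 1 = (K + 1) + K by omega, Finset.sum_range_add, sum_add_distrib,
    sum_range_succ (fun b => g i b), hg, add_zero]
  congr 1
  · refine sum_congr rfl fun b hb => ?_
    simp only [mem_range] at hb
    simp [glueH, show b ≤ K by omega]
  · rw [← Finset.sum_range_reflect]
    refine sum_congr rfl fun b hb => ?_
    simp only [mem_range] at hb
    rw [glueH, if_neg (by omega)]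
    congr 1; omega

theorem glueH_supp {K : ℕ} {f g : NF} (sf : ∀ a b, f a b ≠ 0 → a ≤ b ∧ b ≤ K)
    (sg : ∀ a b, g a b ≠ 0 → a ≤ b ∧ b < K) {i j : ℕ} (hj : j ≤ 2 * K)
    (h : glueH K f g i j ≠ 0) : i ≤ j ∧ i + j ≤ 2 * K := by
  unfold glueH at h
  split_ifs at h with h1
  · have := sf _ _ h; omega
  · have := sg _ _ h; omega

theorem glueN_dual (K : ℕ) (f g : NF) (i j : ℕ) (hi : i ≤ 2 * K) (hj : j ≤ 2 * K) :
    glueN K f g i j = glueN K f g (2 * K - j) (2 * K - i) := by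
  unfold glueN
  by_cases h : i + j = 2 * K
  · have e1 : 2 * K - j = i := by omega
    have e2 : 2 * K - i = j := by omega
    simp only [e1, e2]
  · by_cases h' : i + j ≤ 2 * K
    · rw [if_pos h', if_neg (by omega), Nat.sub_sub_self hi, Nat.sub_sub_self hj]
    · rw [if_neg h', if_pos (by omega)]

theorem glueS_selfDual (K : ℕ) (f g : NF) : SelfDual (glueM K f g) := by
  unfold SelfDual
  funext ⟨i, hi⟩ ⟨j, hj⟩
  simp only [dual, glueM, Fin.rev]
  rw [glueN_dual K f g i j (by omega) (by omega)]
  congr 1 <;> omega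

theorem selfDual_row_of_col {m : ℕ} {M : Mat m} (h : SelfDual M) (hc : ∀ j, colNonzero M j) (i) :
    rowNonzero M i := by
  obtain ⟨a, ha⟩ := hc i.rev
  refine ⟨a.rev, ?_⟩
  rw [h]
  simpa [dual] using ha

theorem glueS_mem (n k K : ℕ) (f g : NF) (sf : ∀ a b, f a b ≠ 0 → a ≤ b ∧ b ≤ K)
    (sg : ∀ a b, g a b ≠ 0 → a ≤ b ∧ b < K) :
    glueS (K, f, g) ∈ OMset n k ↔ IsS n k K f g := by
  have hgK : ∀ a, g a K = 0 := fun a => by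
    by_contra h; exact lt_irrefl _ (sg a K h).2
  have hN : ∀ i j, j ≤ 2 * K → i + j ≤ 2 * K → glueN K f g i j = glueH K f g i j := by
    intro i j _ h; simp [glueN, h]
  have hsize : reducedSize (glueM K f g) =
      ∑ a ∈ range (K+1), ∑ b ∈ range (K+1), (f a b + g a b) := by
    have h1 : reducedSize (glueM K f g) =
        ∑ i ∈ range (2 * K + 1), ∑ j ∈ range (2 * K + 1), glueH K f g i j := by
      rw [Finset.sum_range]
      simp only [reducedSize, glueM]
      refine sum_congr rfl fun i _ => ?_
      rw [Finset.sum_range]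
      refine sum_congr rfl fun j _ => ?_
      by_cases h : (i : ℕ) + j + 1 ≤ 2 * K + 1
      · rw [if_pos h]
        exact hN i j (by omega) (by omega)
      · rw [if_neg h]
        by_contra hne
        have := glueH_supp (i := i) (j := j) sf sg (by omega) (Ne.symm hne)
        omega
    rw [h1]
    simp only [glueH_row K f g hgK]
    rw [show 2 * K + 1 = (K + 1) + K by omega, Finset.sum_range_add]
    simp only [Nat.add_eq_left]
    refine sum_eq_zero fun a _ => sum_eq_zero fun b hb => ?_
    simp only [mem_range] at hb
    have z1 : f (K + 1 + a) b = 0 := by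
      by_contra h; have := sf _ _ h; omega
    have z2 : g (K + 1 + a) b = 0 := by
      by_contra h; have := sg _ _ h; omega
    rw [z1, z2, add_zero]
  have hfirst : firstRowSum (glueM K f g) = ∑ b ∈ range (K+1), (f 0 b + g 0 b) := by
    rw [← glueH_row K f g hgK, Finset.sum_range]
    simp only [firstRowSum, glueM]
    rw [Finset.sum_eq_single (0 : Fin (2 * K + 1))]
    · refine sum_congr rfl fun j _ => ?_
      rw [if_pos (by simp)]
      exact hN 0 j (by omega) (by omega)
    · intro i _ hi
      have : (i : ℕ) ≠ 0 := fun h => hi (Fin.ext h)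
      simp [this]
    · simp
  have hUT : UT (glueM K f g) := by
    rintro ⟨i, hi⟩ ⟨j, hj⟩ hij
    simp only [glueM] at *
    by_contra hne
    unfold glueN at hne
    split_ifs at hne with h
    · have := glueH_supp sf sg (by omega) hne; omega
    · have := glueH_supp sf sg (by omega) hne; omega
  have hcol1 : ∀ b (hb : b ≤ K), colNonzero (glueM K f g) ⟨b, by omega⟩ ↔
      ∃ a, f a b ≠ 0 := by
    intro b hb
    constructor
    · rintro ⟨⟨i, hi⟩, h⟩
      simp only [glueM] at h
      unfold glueN at h
      split_ifs at h with hc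
      · simp only [glueH, if_pos hb] at h
        exact ⟨i, h⟩
      · have := glueH_supp sf sg (by omega) h; omega
    · rintro ⟨a, ha⟩
      have := sf a b ha
      refine ⟨⟨a, by omega⟩, ?_⟩
      simp only [glueM]
      rw [hN _ _ (by omega) (by omega)]
      simpa [glueH, hb] using ha
  have hcol2 : ∀ a (ha : a < K),
      colNonzero (glueM K f g) ⟨2 * K - a, by omega⟩ ↔
      ((∃ b, f a b ≠ 0) ∨ (∃ b, g a b ≠ 0) ∨ (∃ c, g c a ≠ 0)) := by
    intro a ha
    constructor
    · rintro ⟨⟨i, hi⟩, h⟩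
      simp only [glueM] at h
      unfold glueN at h
      split_ifs at h with hc
      · simp only [glueH] at h
        rw [if_neg (by omega), Nat.sub_sub_self (by omega)] at h
        exact Or.inr (Or.inr ⟨i, h⟩)
      · rw [Nat.sub_sub_self (by omega)] at h
        unfold glueH at h
        split_ifs at h with hc2
        · exact Or.inl ⟨_, h⟩
        · exact Or.inr (Or.inl ⟨_, h⟩)
    · have third : ∀ c, g c a ≠ 0 →
          colNonzero (glueM K f g) ⟨2 * K - a, by omega⟩ := by
        intro c hc
        have := sg c a hc
        refine ⟨⟨c, by omega⟩, ?_⟩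
        simp only [glueM]
        rw [hN _ _ (by omega) (by omega), glueH, if_neg (by omega), Nat.sub_sub_self (by omega)]
        exact hc
      rintro (⟨b, h⟩ | ⟨b, h⟩ | ⟨c, h⟩)
      · have := sf a b h
        refine ⟨⟨2 * K - b, by omega⟩, ?_⟩
        simp only [glueM, glueN]
        rw [if_neg (by omega), Nat.sub_sub_self (by omega), Nat.sub_sub_self (by omega), glueH,
          if_pos (by omega)]
        exact h
      · have hb := sg a b h
        by_cases hab : a = b
        · subst hab; exact third a h
        refine ⟨⟨b, by omega⟩, ?_⟩
        simp only [glueM, glueN]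
        rw [if_neg (by omega), Nat.sub_sub_self (by omega), glueH,
          if_neg (by omega), Nat.sub_sub_self (by omega)]
        exact h
      · exact third c h
  constructor
  · rintro ⟨⟨⟨⟨-, -, hc⟩, -, h3⟩, h4⟩, -⟩
    exact ⟨sf, sg, fun b hb => (hcol1 b hb).1 (hc _), fun a ha => (hcol2 a ha).1 (hc _),
      hsize ▸ h3, hfirst ▸ h4⟩
  · intro h
    have hc : ∀ j, colNonzero (glueM K f g) j := by
      rintro ⟨j, hj⟩
      have hj' : j < 2 * K + 1 := hj
      by_cases hjK : j ≤ K
      · exact (hcol1 j hjK).2 (h.col j hjK)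
      · have := (hcol2 (2 * K - j) (by omega)).2 (h.row _ (by omega))
        convert this using 2
        omega
    have sd := glueS_selfDual K f g
    exact ⟨⟨⟨⟨hUT, selfDual_row_of_col sd hc, hc⟩, sd, hsize.trans h.size⟩,
      hfirst.trans h.first⟩, ⟨K, rfl⟩⟩

theorem step1 (n k : ℕ) :
    ({S : ℕ × NF × NF | IsS n k S.1 S.2.1 S.2.2}).ncard = (OMset n k).ncard := by
  refine Set.ncard_congr (fun S _ => glueS S) ?_ ?_ ?_
  · rintro ⟨K, f, g⟩ hS
    have hS : IsS n k K f g := hS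
    exact (glueS_mem n k K f g hS.sf hS.sg).2 hS
  · rintro ⟨K, f, g⟩ ⟨K', f', g'⟩ hS hS' h
    have hS : IsS n k K f g := hS
    have hS' : IsS n k K' f' g' := hS'
    have h1 : 2 * K + 1 = 2 * K' + 1 := congrArg Sigma.fst h
    obtain rfl : K = K' := by omega
    have h2 : glueM K f g = glueM K f' g' := eq_of_heq (Sigma.mk.inj h).2
    have key : ∀ a b, a + b ≤ 2 * K → glueH K f g a b = glueH K f' g' a b := by
      intro a b hab
      have := congrFun (congrFun h2 ⟨a, by omega⟩) ⟨b, by omega⟩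
      simpa [glueM, glueN, hab] using this
    have e1 : f = f' := by
      funext a b
      by_cases hab : a ≤ b ∧ b ≤ K
      · have := key a b (by omega)
        simpa [glueH, hab.2] using this
      · have z1 : f a b = 0 := by
          by_contra h; exact hab (hS.sf a b h)
        have z2 : f' a b = 0 := by
          by_contra h; exact hab (hS'.sf a b h)
        rw [z1, z2]
    have e2 : g = g' := by
      funext a b
      by_cases hab : a ≤ b ∧ b < K
      · have := key a (2 * K - b) (by omega)
        unfold glueH at this
        rwa [if_neg (by omega), if_neg (by omega), Nat.sub_sub_self (by omega)] at this
      · have z1 : g a b = 0 := by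
          by_contra h; exact hab (hS.sg a b h)
        have z2 : g' a b = 0 := by
          by_contra h; exact hab (hS'.sg a b h)
        rw [z1, z2]
    rw [e1, e2]
  · rintro ⟨m, M⟩ hM
    obtain ⟨K, hK⟩ : Odd m := hM.2
    subst hK
    have hUT : UT M := hM.1.1.1.1
    have hSD : SelfDual M := hM.1.1.2.1
    set f : NF := fun a b => if h : a ≤ b ∧ b ≤ K then
      M ⟨a, by omega⟩ ⟨b, by omega⟩ else 0 with hf
    set g : NF := fun a b => if h : a ≤ b ∧ b < K then
      M ⟨a, by omega⟩ ⟨2 * K - b, by omega⟩ else 0 with hg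
    have hH : ∀ i j (hi : i < 2 * K + 1) (hj : j < 2 * K + 1), i + j ≤ 2 * K →
        glueH K f g i j = M ⟨i, hi⟩ ⟨j, hj⟩ := by
      intro i j hi hj hij
      unfold glueH
      split_ifs with h
      · by_cases h' : i ≤ j
        · simp [hf, h, h']
        · simp only [hf]
          rw [dif_neg (by omega)]
          exact (hUT ⟨i, hi⟩ ⟨j, hj⟩ (by simp only; omega)).symm
      · simp only [hg]
        rw [dif_pos (by omega)]
        congr 2; omega
    have e : glueS (K, f, g) = ⟨2 * K + 1, M⟩ := by
      simp only [glueS]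
      congr 1
      funext ⟨i, hi⟩ ⟨j, hj⟩
      simp only [glueM, glueN]
      split_ifs with h
      · exact hH i j hi hj h
      · rw [hH _ _ (by omega) (by omega) (by omega)]
        conv_rhs => rw [hSD]
        simp only [dual, Fin.rev]
        congr 2 <;> omega
    refine ⟨(K, f, g), ?_, e⟩
    refine (glueS_mem n k K f g ?_ ?_).1 (e ▸ hM)
    · intro a b hab
      by_contra hc
      exact hab (by simp only [hf]; rw [dif_neg hc])
    · intro a b hab
      by_contra hc
      exact hab (by simp only [hg]; rw [dif_neg hc])

/-- `|OM(n,k)| = |RM(n,k)|` for all `n ≥ 1`, `k ≥ 0`. -/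
theorem stmt13 (n k : ℕ) (hn : 1 ≤ n) :
    (OMset n k).ncard = (RMset₂ n k).ncard := by
  rw [← step1, step2, step3 n k hn]
end
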